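/- arXiv:2605.21999 — 2 statements merged into one kernel-verified Lean document; each statement's English description precedes it below -/
import Mathlib

section
/- On the event E, assume Condition (H) with the dataset in the sparse-unlearnable regime, and run adversarial training for T iterations. Then: (1) there exists a filter r ∈ [m] with w_{r,1}^{(T)} ≥ C_0/(α m^{1/3}); (2) there exists an unlearnable sample i ∈ S_U with max over r ∈ [m], j ≠ s(X_i) of y_i⟨w_r^{(T)}, x_{i,j}⟩ ≥ C_1/(3(mP)^{1/3}) (noise memorization); (3) the average robust training logistic loss is at most 40 m^{2/3}(log T)^{1/3}/(C_0²(1−ε/α)³ η α²(T−T_0)) + c·p_un = o(1) for an absolute constant c; and (4) the robust test error on the learnable test distribution satisfies L^rob(f_{W^{(T)}}) ≥ 1/2 − o(1). -/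
open Finset MeasureTheory ProbabilityTheory
open scoped ENNReal NNReal

noncomputable section

namespace AD

/-- Cubic ReLU activation. -/
def phi (z : ℝ) : ℝ := (max 0 z) ^ 3

/-- Negative sigmoid `ψ(z) = 1/(1+e^z)`. -/
def psi (z : ℝ) : ℝ := 1 / (1 + Real.exp z)

/-- Logistic loss `ℓ(z) = log(1+e^{-z})`. -/
def lloss (z : ℝ) : ℝ := Real.log (1 + Real.exp (-z))

/-- Logistic sigmoid `σ(z) = 1/(1+e^{-z})`. -/
def sigm (z : ℝ) : ℝ := 1 / (1 + Real.exp (-z))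

/-- Euclidean inner product on `Fin d → ℝ`. -/
def dot {d : ℕ} (a b : Fin d → ℝ) : ℝ := ∑ k, a k * b k

/-- Squared Euclidean norm. -/
def sqnorm {d : ℕ} (a : Fin d → ℝ) : ℝ := dot a a

/-- First standard basis vector `e₁` (the learnable feature `u`). -/
def e1 (d : ℕ) (hd : 0 < d) : Fin d → ℝ := fun k => if k = (⟨0, hd⟩ : Fin d) then 1 else 0

/-- Last standard basis vector `e_d` (the unlearnable feature `v`). -/
def eLast (d : ℕ) (_hd : 0 < d) : Fin d → ℝ := fun k => if (k : ℕ) = d - 1 then 1 else 0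

/-- The two-layer student network
`f_W(X) = ∑_r ∑_p [φ(⟨w_r,x_p⟩) − φ(−⟨w_r,x_p⟩)]`. -/
def netOut {m P d : ℕ} (w : Fin m → Fin d → ℝ) (X : Fin P → Fin d → ℝ) : ℝ :=
  ∑ r, ∑ p, (phi (dot (w r) (X p)) - phi (-(dot (w r) (X p))))

/-- The concentration event `E` of the paper, i.e. properties (P1)–(P8), stated for
training patches `x`, initialization `w0`, labels `y` and signal-patch indices `sig`. -/
def EventEOn (N m P d : ℕ) (hd : 0 < d) (sigman sigma0 delta : ℝ)
    (y : Fin N → ℝ) (sig : Fin N → Fin P)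
    (x : Fin N → Fin P → Fin d → ℝ) (w0 : Fin m → Fin d → ℝ) : Prop :=
  -- (P1) noise-patch norms
  (∀ i j, j ≠ sig i →
      sigman ^ 2 * d / 2 ≤ sqnorm (x i j) ∧ sqnorm (x i j) ≤ 3 * sigman ^ 2 * d / 2) ∧
  -- (P2) pairwise noise inner products
  (∀ i k j q, j ≠ sig i → q ≠ sig k → ((i, j) : Fin N × Fin P) ≠ (k, q) →
      |dot (x i j) (x k q)| ≤
        2 * sigman ^ 2 * Real.sqrt ((d : ℝ) * Real.log ((16 : ℝ) * N ^ 2 * P ^ 2 / delta))) ∧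
  -- (P3) sup-norm of noise patches
  (∀ i j, j ≠ sig i → ∀ kk : Fin d,
      |x i j kk| ≤ sigman * Real.sqrt (2 * Real.log ((16 : ℝ) * d * N * P / delta))) ∧
  -- (P4) initialization norms
  (∀ r, Real.sqrt (sqnorm (w0 r)) ≤ 2 * sigma0 * Real.sqrt d) ∧
  -- (P5) initialization signal correlation
  (∀ r, |dot (w0 r) (e1 d hd)| ≤ sigma0 * Real.sqrt (2 * Real.log ((16 : ℝ) * m / delta))) ∧
  -- (P6) initialization noise correlations
  (∀ r i j, j ≠ sig i →
      |dot (w0 r) (x i j)| ≤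
        2 * sigma0 * sigman * Real.sqrt ((d : ℝ) * Real.log ((16 : ℝ) * N * m * P / delta))) ∧
  -- (P7) maximal initial signal alignment
  (∃ r, sigma0 / 2 ≤ dot (w0 r) (e1 d hd)) ∧
  -- (P8) maximal initial noise alignment
  (∀ i j, j ≠ sig i → ∃ r, sigma0 * sigman * Real.sqrt d / 4 ≤ y i * dot (w0 r) (x i j))
structure Setting where
  N : ℕ
  m : ℕ
  P : ℕ
  d : ℕ
  T : ℕ
  hN : 0 < N
  hm : 0 < m
  hP : 0 < P
  hd : 0 < d
  alpha : ℝ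
  sigman : ℝ
  sigma0 : ℝ
  eta : ℝ
  eps : ℝ
  delta : ℝ
  halpha : 0 < alpha
  hsigman : 0 < sigman
  hsigma0 : 0 < sigma0
  heta : 0 < eta
  heps : 0 < eps
  hepsalpha : eps < alpha
  hdelta0 : 0 < delta
  hdelta1 : delta < 1
  /-- labels -/
  y : Fin N → ℝ
  hy : ∀ i, y i = 1 ∨ y i = -1
  /-- signal patch index -/
  sig : Fin N → Fin P
  /-- learnable samples -/
  SL : Finset (Fin N)
  /-- unlearnable samples -/
  SU : Finset (Fin N)
  hunion : SL ∪ SU = Finset.univ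
  hdisj : Disjoint SL SU
  /-- training patches -/
  x : Fin N → Fin P → Fin d → ℝ
  hsigL : ∀ i ∈ SL, x i (sig i) = (alpha * y i) • e1 d hd
  hsigU : ∀ i ∈ SU, x i (sig i) = (alpha * y i) • eLast d hd
  hnoiseU : ∀ i j, j ≠ sig i → dot (x i j) (e1 d hd) = 0
  hnoiseV : ∀ i j, j ≠ sig i → dot (x i j) (eLast d hd) = 0
  /-- weight trajectory -/
  w : ℕ → Fin m → Fin d → ℝ
  hwperp : ∀ t r, dot (w t r) (eLast d hd) = 0
  /-- adversarial training examples at each iteration -/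
  xadv : ℕ → Fin N → Fin P → Fin d → ℝ
  hadvnoise : ∀ t i j, j ≠ sig i → xadv t i j = x i j
  hadvspan : ∀ t i, ∃ c : ℝ, xadv t i (sig i) - x i (sig i) = c • x i (sig i)
  hadvlinf : ∀ t i p k, |xadv t i p k - x i p k| ≤ eps
  hadvlearn : ∀ t : ℕ, ∀ i ∈ SL,
    alpha - eps ≤ y i * dot (xadv t i (sig i)) (e1 d hd) ∧
      y i * dot (xadv t i (sig i)) (e1 d hd) ≤ alpha

namespace Setting

variable (S : Setting)

/-- Adversarial margin `y_i f_{W^{(t)}}(X̃_i^{(t)})`. -/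
def marg (t : ℕ) (i : Fin S.N) : ℝ := S.y i * netOut (S.w t) (S.xadv t i)

/-- Signal coordinate `w_{r,1}^{(t)}`. -/
def wsig (t : ℕ) (r : Fin S.m) : ℝ := S.w t r ⟨0, S.hd⟩

/-- Unlearnable fraction `p_un = |S_U|/N`. -/
def pun : ℝ := (S.SU.card : ℝ) / S.N

/-- The adversarial-training gradient-descent dynamics. -/
def ATDyn : Prop :=
  ∀ t r, S.w (t + 1) r = S.w t r +
    (3 * S.eta / S.N) •
      ∑ i : Fin S.N, (psi (S.marg t i) * S.y i) •
        ∑ p : Fin S.P, (dot (S.w t r) (S.xadv t i p)) ^ 2 • S.xadv t i p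

/-- The signed gradient weight of sample `i` at iteration `t` under adversarial
distillation from teacher logits `fT`. -/
def gAD (fT : Fin S.N → ℝ) (t : ℕ) (i : Fin S.N) : ℝ :=
  sigm (S.y i * fT i) * psi (S.marg t i) - sigm (-(S.y i * fT i)) * psi (-(S.marg t i))

/-- The adversarial-distillation gradient-descent dynamics. -/
def ADDyn (fT : Fin S.N → ℝ) : Prop :=
  ∀ t r, S.w (t + 1) r = S.w t r +
    (3 * S.eta / S.N) •
      ∑ i : Fin S.N, (S.gAD fT t i * S.y i) •
        ∑ p : Fin S.P, (dot (S.w t r) (S.xadv t i p)) ^ 2 • S.xadv t i p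

/-- Noise coefficients `ρ_{i,j,r}^{(t)}` (adversarial training). -/
def rho (i : Fin S.N) (j : Fin S.P) (r : Fin S.m) : ℕ → ℝ
  | 0 => 0
  | t + 1 => rho i j r t + (3 * S.eta / S.N) * psi (S.marg t i) * (dot (S.w t r) (S.x i j)) ^ 2

/-- Noise coefficients under adversarial distillation. -/
def rhoAD (fT : Fin S.N → ℝ) (i : Fin S.N) (j : Fin S.P) (r : Fin S.m) : ℕ → ℝ
  | 0 => 0
  | t + 1 => rhoAD fT i j r t + (3 * S.eta / S.N) * S.gAD fT t i * (dot (S.w t r) (S.x i j)) ^ 2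

/-- The event `E` for a setting. -/
def EventE : Prop :=
  EventEOn S.N S.m S.P S.d S.hd S.sigman S.sigma0 S.delta S.y S.sig S.x (S.w 0)

/-- Condition (H): the parameter requirements of Condition 4.1 of the paper
(without the unlearnable-fraction regime item, which is imposed separately). -/
def CondH (C : ℝ) : Prop :=
  1 ≤ C ∧
  -- training horizon
  C * S.N / (S.eta * S.sigma0 * S.sigman ^ 3 * ((S.d : ℝ) * Real.sqrt S.d)) ≤ (S.T : ℝ) ∧
  -- dimension
  C * S.m ^ 2 * S.P ^ 2 * S.N ^ 2 *
      (Real.log ((S.T : ℝ) * S.N * S.m * S.P / S.delta)) ^ 4 ≤ (S.d : ℝ) ∧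
  -- signal strength
  C * S.sigman * Real.sqrt S.d * Real.log ((S.T : ℝ) * S.N * S.m * S.P / S.delta) /
      (((S.N : ℝ) * (1 - S.pun)) ^ ((1 : ℝ) / 3)) ≤ S.alpha ∧
  -- initialization scale
  S.sigma0 ≤
    C⁻¹ *
        min (min (1 / ((S.m : ℝ) ^ ((2 : ℝ) / 3) * (S.P : ℝ) ^ ((2 : ℝ) / 3) *
            S.sigman * Real.sqrt S.d))
          (1 / (S.alpha * (S.m : ℝ) ^ ((2 : ℝ) / 3))))
          (1 / (S.sigman * S.m ^ 2 * Real.sqrt S.P * S.d)) /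
      Real.log ((S.T : ℝ) * S.d * S.N * S.m * S.P / S.delta) ∧
  -- learning rate
  S.eta ≤
    C⁻¹ * min (min (1 / (S.alpha ^ 3 * S.sigma0)) (1 / (S.sigman ^ 2 * S.d))) (1 / S.alpha ^ 2) /
      Real.log ((S.T : ℝ) * S.N * S.m * S.P / S.delta) ∧
  -- adversarial budget
  C * S.sigman * S.m * Real.sqrt S.P * Real.log ((S.T : ℝ) * S.d * S.N * S.P / S.delta) ≤ S.eps ∧
  S.eps < C⁻¹ * min S.alpha (1 / (S.m * S.sigma0 * S.d)) ∧
  -- width and number of patches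
  C * Real.log ((S.N : ℝ) * S.P / S.delta) ≤ (S.m : ℝ) ∧
  (S.m : ℝ) ≤ C * Real.log S.d ^ C ∧
  2 ≤ S.P ∧ (S.P : ℝ) ≤ C

/-- The sparse-unlearnable regime of Condition 4.1. -/
def SparseRegime (C : ℝ) : Prop :=
  C / S.N ≤ S.pun ∧ S.pun ≤ C⁻¹ * Real.log S.d / S.N ∧
  C * S.m * S.P * Real.log ((S.T : ℝ) * S.d * S.N * S.m * S.P / S.delta) ≤ (S.N : ℝ)

/-- The noise-stability bound (NS) on learnable samples at iteration `t`. -/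
def NS (t : ℕ) : Prop :=
  ∀ r : Fin S.m, ∀ i ∈ S.SL, ∀ j, j ≠ S.sig i →
    |dot (S.w t r) (S.x i j)| ≤
      3 * S.sigma0 * S.sigman *
          Real.sqrt ((S.d : ℝ) * Real.log ((16 : ℝ) * S.N * S.m * S.P / S.delta)) +
        21 * S.pun * S.N * S.P * Real.log S.T ^ ((1 : ℝ) / 3) / Real.sqrt S.d *
          Real.sqrt (Real.log ((16 : ℝ) * S.N ^ 2 * S.P ^ 2 / S.delta))

/-- The signal-learning hitting time `T₀`. -/
def T0 (C0 : ℝ) : ℕ :=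
  sInf {t : ℕ | ∃ r, C0 / (S.alpha * (S.m : ℝ) ^ ((1 : ℝ) / 3)) < S.wsig t r}

/-- Maximum of the noise coefficients over unlearnable noise patches. -/
def rhoMaxSU (t : ℕ) : ℝ :=
  sSup {z : ℝ | ∃ r : Fin S.m, ∃ k ∈ S.SU, ∃ q, q ≠ S.sig k ∧ z = S.rho k q r t}

/-- Shifted noise coefficients `ρ̂_{i,j,r}^{(t)}`. -/
def rhoHat (i : Fin S.N) (j : Fin S.P) (r : Fin S.m) (t : ℕ) : ℝ :=
  S.rho i j r t + S.y i * dot (S.w 0 r) (S.x i j) / sqnorm (S.x i j)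

/-- Maximum shifted noise coefficient over unlearnable noise patches. -/
def rhoHatMax (t : ℕ) : ℝ :=
  sSup {z : ℝ | ∃ r : Fin S.m, ∃ k ∈ S.SU, ∃ q, q ≠ S.sig k ∧ z = S.rhoHat k q r t}

/-- The noise-memorization hitting time `T₁`. -/
def T1 (C1 : ℝ) : ℕ :=
  sInf {t : ℕ | C1 / (((S.m : ℝ) * S.P) ^ ((1 : ℝ) / 3) * S.sigman ^ 2 * S.d) < S.rhoHatMax t}

/-- The Good-Teacher horizon `T_max`. -/
def Tmax : ℝ :=
  S.N / (1000 * S.eta * S.m * S.P * S.sigma0 ^ 4 * S.sigman ^ 6 * (S.d : ℝ) ^ 3 *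
    Real.log ((16 : ℝ) * S.N * S.m * S.P / S.delta) ^ 2)

end Setting
/-- Law of the label: uniform on `{+1, −1}`. -/
def labelLaw : Measure ℝ :=
  ((2 : ℝ≥0∞)⁻¹ • Measure.dirac (1 : ℝ)) + ((2 : ℝ≥0∞)⁻¹ • Measure.dirac (-1 : ℝ))

/-- Law of a single coordinate of a noise patch: `N(0, σ_n²)` off the feature
subspace coordinates, `δ₀` on coordinates `1` and `d`. -/
def noiseCoordLaw (sigman : ℝ) (d : ℕ) (k : Fin d) : Measure ℝ :=
  if (k : ℕ) = 0 ∨ (k : ℕ) = d - 1 then Measure.dirac 0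
  else gaussianReal 0 ⟨sigman ^ 2, sq_nonneg _⟩

/-- Law of a noise patch: `N(0, σ_n²(I_d − Π_F))`. -/
def noisePatchLaw (sigman : ℝ) (d : ℕ) : Measure (Fin d → ℝ) :=
  Measure.pi (noiseCoordLaw sigman d)

/-- Uniform law of the signal-patch index. -/
def uniformPatch (P : ℕ) (hP : 0 < P) : Measure (Fin P) :=
  (@PMF.uniformOfFintype (Fin P) _ ⟨⟨0, hP⟩⟩).toMeasure

/-- The learnable test distribution `D_L`: uniform label, uniform signal-patch index,
signal patch `α y u`, independent Gaussian noise patches. -/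
def testLaw (alpha sigman : ℝ) (P d : ℕ) (hP : 0 < P) (hd : 0 < d) :
    Measure ((Fin P → Fin d → ℝ) × ℝ) :=
  Measure.map
    (fun z : ℝ × Fin P × (Fin P → Fin d → ℝ) =>
      (Function.update z.2.2 z.2.1 ((alpha * z.1) • e1 d hd), z.1))
    ((labelLaw).prod ((uniformPatch P hP).prod (Measure.pi fun _ : Fin P => noisePatchLaw sigman d)))

/-- Robust test error of the student at iteration `t` on the learnable test
distribution `D_L`. -/
def Setting.robErr (S : Setting) (t : ℕ) : ℝ≥0∞ :=
  testLaw S.alpha S.sigman S.P S.d S.hP S.hd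
    {Xy : (Fin S.P → Fin S.d → ℝ) × ℝ |
      ∃ Δ : Fin S.P → Fin S.d → ℝ, (∀ p k, |Δ p k| ≤ S.eps) ∧
        Xy.2 * netOut (S.w t) (fun p => Xy.1 p + Δ p) < 0}

theorem psi_pos (z : ℝ) : 0 < psi z := by unfold psi; positivity

theorem psi_le_one (z : ℝ) : psi z ≤ 1 := by
  unfold psi
  rw [div_le_one (by positivity)]
  linarith [Real.exp_pos z]

theorem psi_le_exp_neg (z : ℝ) : psi z ≤ Real.exp (-z) := by
  unfold psi
  rw [Real.exp_neg, one_div]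
  exact inv_anti₀ (Real.exp_pos z) (by linarith [Real.exp_pos z])

theorem half_exp_neg_le_psi {z a : ℝ} (ha : 0 ≤ a) (hz : z ≤ a) :
    Real.exp (-a) / 2 ≤ psi z := by
  unfold psi
  rw [Real.exp_neg, div_le_div_iff₀ (by norm_num) (by positivity)]
  have h1 : Real.exp z ≤ Real.exp a := Real.exp_le_exp.2 hz
  have h2 : 1 ≤ Real.exp a := Real.one_le_exp ha
  rw [inv_mul_le_iff₀ (Real.exp_pos a)]
  linarith

theorem quarter_le_psi {z : ℝ} (hz : z ≤ 1) : 1 / 4 ≤ psi z := by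
  unfold psi
  rw [div_le_div_iff₀ (by norm_num) (by positivity)]
  have h1 : Real.exp z ≤ Real.exp 1 := Real.exp_le_exp.2 hz
  linarith [Real.exp_one_lt_d9]

theorem lloss_le_exp_neg (z : ℝ) : lloss z ≤ Real.exp (-z) := by
  unfold lloss
  have := Real.log_le_sub_one_of_pos (x := 1 + Real.exp (-z)) (by positivity)
  linarith

theorem lloss_le_one {z : ℝ} (hz : -(1 / 2) ≤ z) : lloss z ≤ 1 := by
  unfold lloss
  rw [Real.log_le_iff_le_exp (by positivity)]
  have h1 : Real.exp (-z) ≤ Real.exp (1 / 2) := Real.exp_le_exp.2 (by linarith)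
  have h2 : Real.exp (1 / 2) * Real.exp (1 / 2) = Real.exp 1 := by
    rw [← Real.exp_add]; norm_num
  have h3 := Real.exp_one_gt_d9
  have h4 : (1.64 : ℝ) ≤ Real.exp (1 / 2) := by
    by_contra hcon
    push Not at hcon
    nlinarith [Real.exp_pos (1 / 2 : ℝ)]
  nlinarith

theorem cube_mono {a b : ℝ} (h : a ≤ b) : a ^ 3 ≤ b ^ 3 :=
  (Odd.strictMono_pow (by decide : Odd 3)).monotone h

/-- A sequence with quadratic growth `b (t+1) = b t + g t * b t ^ 2` and small steps has total
rate at most `2 / b t₀`. -/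
theorem sum_rate_le {b g : ℕ → ℝ} {t0 t1 : ℕ} (h01 : t0 ≤ t1) (hpos : 0 < b t0)
    (hg : ∀ t, 0 ≤ g t) (hstep : ∀ t, b (t + 1) = b t + g t * b t ^ 2)
    (hsmall : ∀ t, t < t1 → g t * b t ≤ 1) :
    ∑ t ∈ Finset.Ico t0 t1, g t ≤ 2 / b t0 := by
  have key : ∀ n, t0 ≤ n → n ≤ t1 →
      0 < b n ∧ ∑ t ∈ Finset.Ico t0 n, g t ≤ 2 / b t0 - 2 / b n := by
    intro n hn
    induction n, hn using Nat.le_induction with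
    | base => intro _; exact ⟨hpos, by simp⟩
    | succ n hn ih =>
      intro hn1
      obtain ⟨hb, hs⟩ := ih (by omega)
      have hgn := hg n
      have hsm := hsmall n (by omega)
      have hb' : b (n + 1) = b n * (1 + g n * b n) := by rw [hstep]; ring
      have hgb : 0 ≤ g n * b n := mul_nonneg hgn hb.le
      have hb1 : 0 < b (n + 1) := by rw [hb']; positivity
      refine ⟨hb1, ?_⟩
      rw [Finset.sum_Ico_succ_top hn]
      have : g n ≤ 2 / b n - 2 / b (n + 1) := by
        rw [hb', div_sub_div _ _ hb.ne' (by positivity), le_div_iff₀ (by positivity)]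
        have : 2 * (b n * (1 + g n * b n)) - b n * 2 = 2 * g n * b n ^ 2 := by ring
        rw [this]
        have h2 : g n * (b n * (b n * (1 + g n * b n))) =
          (g n * b n ^ 2) * (1 + g n * b n) := by ring
        rw [h2]
        nlinarith [mul_nonneg hgn (sq_nonneg (b n))]
      linarith
  obtain ⟨hb, hs⟩ := key t1 h01 le_rfl
  have : 0 ≤ 2 / b t1 := by positivity
  linarith

/-- The training dynamics in normalized coordinates: `b` are the signal coefficients, `q` the noise
coefficients, `z` the signed noise correlations and `G` the normalized signed Gram matrix of the
noise patches, together with the smallness relations between the parameters. -/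
structure NormDyn (R ι K : Type) [Fintype R] [Fintype ι] [Fintype K] [DecidableEq K] where
  SL : Finset K
  SU : Finset K
  own : ι → K
  N : ℝ
  m : ℝ
  P : ℝ
  l : ℝ
  e : ℝ
  s0 : ℝ
  mu : ℝ
  ka : ℝ
  ks : ℝ
  x : ℝ
  n : ℝ
  m3 : ℝ
  B0 : ℝ
  T : ℕ
  b : ℕ → R → ℝ
  q : ℕ → R → ι → ℝ
  z : ℕ → R → ι → ℝ
  mg : ℕ → K → ℝ
  ga : ℕ → K → ℝ
  G : ι → ι → ℝ
  hcover : ∀ k, k ∈ SL ∨ k ∈ SU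
  hmgL : ∀ t, ∀ k ∈ SL, mg t k = ga t k ^ 3 * ∑ r, b t r ^ 3 +
    ∑ r, ∑ i with own i = k, z t r i ^ 3
  hmgU : ∀ t, ∀ k ∈ SU, mg t k = ∑ r, ∑ i with own i = k, z t r i ^ 3
  hz : ∀ t r i, z t r i = z 0 r i + ∑ j, q t r j * G i j
  hq0 : ∀ r i, q 0 r i = 0
  hq : ∀ t r i, q (t + 1) r i = q t r i + ka * psi (mg t (own i)) * z t r i ^ 2
  hb : ∀ t r, b (t + 1) r = b t r + ks * (∑ k ∈ SL, psi (mg t k) * ga t k ^ 3) * b t r ^ 2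
  hGd : ∀ i, 1 / 2 ≤ G i i ∧ G i i ≤ 3 / 2
  hGo : ∀ i j, i ≠ j → |G i j| ≤ mu
  hga : ∀ t, ∀ k ∈ SL, 1 - e ≤ ga t k ∧ ga t k ≤ 1
  hR : (Fintype.card R : ℝ) = m
  hfib : ∀ k, ((univ.filter fun i => own i = k).card : ℝ) ≤ P
  hK : (SL.card : ℝ) + SU.card = N
  hSL : N / 2 ≤ SL.card
  hm : 1 ≤ m
  hP : 1 ≤ P
  hl : 100 ≤ l
  he : 0 < e
  he' : e ≤ 1 / 1000
  hs0 : 0 < s0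
  hmu : 0 ≤ mu
  hka : 0 < ka
  hks : 0 < ks
  hx : 0 < x
  hn : n ^ 3 = N
  hm3 : m3 ^ 3 = m
  hm31 : 1 ≤ m3
  hT : 1 ≤ T
  hlogT : Real.log T ≤ l ^ 2
  hkx : ka = ks * x ^ 2
  hmuS : mu * N * m * P * l ^ 3 ≤ e
  hs0S : s0 * N * m ^ 3 * l ^ 6 ≤ e
  hSU : (SU.card : ℝ) ≤ e * l ^ 2
  hmP : m * P * l ^ 2 ≤ e * N
  hkaS : ka * N * l ^ 2 ≤ e
  hksS : ks * N * l ^ 2 ≤ e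
  hTka : 1 ≤ e * (ka * T * s0)
  hx3 : x ^ 3 * l ^ 6 ≤ e ^ 3 * SL.card
  hxn : x * l ^ 2 ≤ e * n
  hB0 : ∀ r, |b 0 r| ≤ B0
  hB0S : B0 * m3 ^ 2 ≤ e
  hb0 : ∃ r, s0 / (2 * x) ≤ b 0 r
  hz0 : ∀ r i, |z 0 r i| ≤ 2 * l * s0

namespace NormDyn

variable {R ι K : Type} [Fintype R] [Fintype ι] [Fintype K] [DecidableEq K]
  (D : NormDyn R ι K)

/-- Upper bound on the initial noise correlations. -/
def A0 : ℝ := 2 * D.l * D.s0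

/-- Rate of the signal dynamics. -/
def g (t : ℕ) : ℝ := D.ks * ∑ k ∈ D.SL, psi (D.mg t k) * D.ga t k ^ 3

/-- Interference bound per unit of unlearnable noise coefficient. -/
def zeta : ℝ := D.SU.card * D.P * D.mu

/-- Bound for noise correlations when unlearnable noise coefficients are at most `Q`. -/
def Yb (Q : ℝ) : ℝ := 4 * (D.A0 + D.zeta * Q)

/-- Signal coefficients are still below the learning threshold. -/
def Early (t : ℕ) : Prop := ∀ r, D.b t r ≤ 1 / (2 * D.m3)

theorem N_pos : 0 < D.N := by
  have h1 : 0 < D.m * D.P * D.l ^ 2 := by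
    have := D.hm; have := D.hP; have := D.hl; positivity
  have := D.hmP
  have h2 := D.he
  by_contra hcon
  push Not at hcon
  nlinarith

theorem one_le_N : 1 ≤ D.N := by
  have h1 : 1 ≤ D.m * D.P * D.l ^ 2 := by
    have := D.hm; have := D.hP; have := D.hl
    calc (1 : ℝ) = 1 * 1 * 1 ^ 2 := by norm_num
      _ ≤ _ := by gcongr; linarith
  have := D.hmP
  have h2 := D.he'
  have := D.N_pos
  nlinarith

theorem A0_pos : 0 < D.A0 := by
  unfold A0; have := D.hl; have := D.hs0; positivity

theorem zeta_nonneg : 0 ≤ D.zeta := by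
  unfold zeta
  have := D.hP; have := D.hmu
  positivity

theorem A0_le_Yb {Q : ℝ} (hQ : 0 ≤ Q) : 4 * D.A0 ≤ D.Yb Q := by
  unfold Yb; nlinarith [mul_nonneg D.zeta_nonneg hQ]

theorem g_nonneg (t : ℕ) : 0 ≤ D.g t := by
  unfold g
  refine mul_nonneg D.hks.le (sum_nonneg fun k hk => ?_)
  have h := (D.hga t k hk).1
  have := D.he'
  have : 0 ≤ D.ga t k := by linarith
  have := psi_pos (D.mg t k)
  positivity

theorem card_SL_le : (D.SL.card : ℝ) ≤ D.N := by
  have := D.hK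
  have : (0 : ℝ) ≤ D.SU.card := by positivity
  linarith

theorem g_le_of_psi_le {t : ℕ} {c : ℝ} (hc : 0 ≤ c) (h : ∀ k ∈ D.SL, psi (D.mg t k) ≤ c) :
    D.g t * D.l ^ 2 ≤ D.e * c := by
  have h1 : ∑ k ∈ D.SL, psi (D.mg t k) * D.ga t k ^ 3 ≤ ∑ k ∈ D.SL, c := by
    refine sum_le_sum fun k hk => ?_
    have h2 := D.hga t k hk
    have := D.he'
    have h3 : D.ga t k ^ 3 ≤ 1 := pow_le_one₀ (by linarith) h2.2
    have h4 : 0 ≤ D.ga t k ^ 3 := pow_nonneg (by linarith) 3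
    calc _ ≤ c * 1 := by
          apply mul_le_mul (h k hk) h3 h4 hc
      _ = c := mul_one c
  rw [sum_const, nsmul_eq_mul] at h1
  have h5 : ∑ k ∈ D.SL, psi (D.mg t k) * D.ga t k ^ 3 ≤ D.N * c :=
    h1.trans (mul_le_mul_of_nonneg_right D.card_SL_le hc)
  unfold g
  have hks := D.hks
  have hl : 0 ≤ D.l ^ 2 := sq_nonneg _
  calc D.ks * (∑ k ∈ D.SL, psi (D.mg t k) * D.ga t k ^ 3) * D.l ^ 2
      ≤ D.ks * (D.N * c) * D.l ^ 2 := by gcongr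
    _ = (D.ks * D.N * D.l ^ 2) * c := by ring
    _ ≤ _ := mul_le_mul_of_nonneg_right D.hksS hc

theorem g_le (t : ℕ) : D.g t * D.l ^ 2 ≤ D.e := by
  have := D.g_le_of_psi_le (t := t) zero_le_one (fun k _ => psi_le_one _)
  linarith

theorem b_step (t : ℕ) (r : R) : D.b (t + 1) r = D.b t r + D.g t * D.b t r ^ 2 := D.hb t r

theorem b_mono (r : R) : Monotone fun t => D.b t r := by
  refine monotone_nat_of_le_succ fun t => ?_
  rw [D.b_step]
  nlinarith [mul_nonneg (D.g_nonneg t) (sq_nonneg (D.b t r))]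

theorem q_mono (r : R) (i : ι) : Monotone fun t => D.q t r i := by
  refine monotone_nat_of_le_succ fun t => ?_
  rw [D.hq]
  have := psi_pos (D.mg t (D.own i))
  have := D.hka
  have : 0 ≤ D.ka * psi (D.mg t (D.own i)) * D.z t r i ^ 2 := by positivity
  linarith

theorem q_nonneg (t : ℕ) (r : R) (i : ι) : 0 ≤ D.q t r i := by
  rw [← D.hq0 r i]; exact D.q_mono r i (Nat.zero_le t)

theorem q_eq_add_sum (r : R) (i : ι) {t0 t1 : ℕ} (h : t0 ≤ t1) :
    D.q t1 r i = D.q t0 r i +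
      ∑ t ∈ Ico t0 t1, D.ka * psi (D.mg t (D.own i)) * D.z t r i ^ 2 := by
  induction t1, h using Nat.le_induction with
  | base => simp
  | succ n hn ih => rw [sum_Ico_succ_top hn, D.hq, ih]; ring

theorem abs_z_sub_le (t : ℕ) (r : R) (i : ι) :
    |D.z t r i - D.z 0 r i - D.q t r i * D.G i i| ≤ D.mu * ∑ j, D.q t r j := by
  classical
  have h1 : D.z t r i - D.z 0 r i - D.q t r i * D.G i i
      = ∑ j ∈ univ.erase i, D.q t r j * D.G i j := by
    rw [D.hz t r i, ← add_sum_erase univ (fun j => D.q t r j * D.G i j) (mem_univ i)]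
    ring
  rw [h1]
  calc _ ≤ ∑ j ∈ univ.erase i, |D.q t r j * D.G i j| := abs_sum_le_sum_abs _ _
    _ ≤ ∑ j ∈ univ.erase i, D.mu * D.q t r j := by
        refine sum_le_sum fun j hj => ?_
        rw [abs_mul, abs_of_nonneg (D.q_nonneg t r j), mul_comm]
        exact mul_le_mul_of_nonneg_right (D.hGo i j (ne_of_mem_erase hj).symm)
          (D.q_nonneg t r j)
    _ ≤ ∑ j, D.mu * D.q t r j :=
        sum_le_sum_of_subset_of_nonneg (erase_subset _ _)
          fun j _ _ => mul_nonneg D.hmu (D.q_nonneg t r j)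
    _ = _ := by rw [mul_sum]

/-- Sums over the noise patches owned by a set of samples. -/
theorem sum_own_le (s : Finset K) (f : K → ℝ) (hf : ∀ k ∈ s, 0 ≤ f k) :
    ∑ i with D.own i ∈ s, f (D.own i) ≤ D.P * ∑ k ∈ s, f k := by
  rw [← sum_fiberwise_of_maps_to (s := univ.filter fun i => D.own i ∈ s) (t := s) (g := D.own)
    (fun i hi => (mem_filter.1 hi).2), mul_sum]
  refine sum_le_sum fun k hk => ?_
  rw [sum_congr rfl (g := fun _ => f k) (fun i hi => by rw [(mem_filter.1 hi).2]),
    sum_const, nsmul_eq_mul]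
  refine mul_le_mul_of_nonneg_right (le_trans ?_ (D.hfib k)) (hf k hk)
  exact_mod_cast card_le_card (filter_subset_filter _ (filter_subset _ _))

theorem card_own_le (s : Finset K) :
    ((univ.filter fun i => D.own i ∈ s).card : ℝ) ≤ D.P * s.card := by
  have := D.sum_own_le s (fun _ => 1) (fun _ _ => zero_le_one)
  simpa using this

theorem sum_q_le {t : ℕ} {r : R} {Q c : ℝ}
    (hU : ∀ i, D.own i ∈ D.SU → D.q t r i ≤ Q)
    (hQ : 0 ≤ Q) (hL : ∑ i with D.own i ∈ D.SL, D.q t r i ≤ c) :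
    ∑ i, D.q t r i ≤ D.SU.card * D.P * Q + c := by
  classical
  have h1 : ∑ i with D.own i ∈ D.SU, D.q t r i ≤ D.SU.card * D.P * Q := by
    calc _ ≤ ∑ i with D.own i ∈ D.SU, Q := sum_le_sum fun i hi => hU i (mem_filter.1 hi).2
      _ = ((univ.filter fun i => D.own i ∈ D.SU).card : ℝ) * Q := by
          rw [sum_const, nsmul_eq_mul]
      _ ≤ (D.P * D.SU.card) * Q := mul_le_mul_of_nonneg_right (D.card_own_le _) hQ
      _ = _ := by ring
  have h2 : ∑ i, D.q t r i ≤ ∑ i with D.own i ∈ D.SU, D.q t r i +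
      ∑ i with D.own i ∈ D.SL, D.q t r i := by
    rw [← sum_union_inter]
    have h3 : (univ.filter fun i => D.own i ∈ D.SU) ∪ (univ.filter fun i => D.own i ∈ D.SL)
        = univ := by
      ext i
      simp only [mem_union, mem_filter, mem_univ, true_and, iff_true]
      exact (D.hcover _).symm
    rw [h3]
    have := sum_nonneg (s := (univ.filter fun i => D.own i ∈ D.SU) ∩
      (univ.filter fun i => D.own i ∈ D.SL)) (fun i _ => D.q_nonneg t r i)
    linarith
  linarith

/-- Noise contribution to a margin, bounded above. -/
theorem noise_le {t : ℕ} {k : K} {v : ℝ} (hv : 0 ≤ v)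
    (h : ∀ r i, D.own i = k → D.z t r i ≤ v) :
    ∑ r, ∑ i with D.own i = k, D.z t r i ^ 3 ≤ D.m * D.P * v ^ 3 := by
  have h1 : ∀ r : R, ∑ i with D.own i = k, D.z t r i ^ 3 ≤ D.P * v ^ 3 := by
    intro r
    calc _ ≤ ∑ i with D.own i = k, v ^ 3 :=
          sum_le_sum fun i hi => cube_mono (h r i (mem_filter.1 hi).2)
      _ = ((univ.filter fun i => D.own i = k).card : ℝ) * v ^ 3 := by
          rw [sum_const, nsmul_eq_mul]
      _ ≤ _ := mul_le_mul_of_nonneg_right (D.hfib k) (by positivity)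
  calc _ ≤ ∑ _r : R, D.P * v ^ 3 := sum_le_sum fun r _ => h1 r
    _ = _ := by rw [sum_const, nsmul_eq_mul, card_univ, D.hR]; ring

/-- Noise contribution to a margin, bounded below. -/
theorem le_noise {t : ℕ} {k : K} {v : ℝ} (hv : 0 ≤ v)
    (h : ∀ r i, D.own i = k → -v ≤ D.z t r i) :
    -(D.m * D.P * v ^ 3) ≤ ∑ r, ∑ i with D.own i = k, D.z t r i ^ 3 := by
  have h1 : ∀ r : R, -(D.P * v ^ 3) ≤ ∑ i with D.own i = k, D.z t r i ^ 3 := by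
    intro r
    calc -(D.P * v ^ 3) ≤ -(((univ.filter fun i => D.own i = k).card : ℝ) * v ^ 3) :=
          neg_le_neg (mul_le_mul_of_nonneg_right (D.hfib k) (by positivity))
      _ = ∑ i with D.own i = k, (-v) ^ 3 := by
          rw [sum_const, nsmul_eq_mul]; ring
      _ ≤ _ := sum_le_sum fun i hi => cube_mono (h r i (mem_filter.1 hi).2)
  calc _ = ∑ _r : R, -(D.P * v ^ 3) := by
        rw [sum_const, nsmul_eq_mul, card_univ, D.hR]; ring
    _ ≤ _ := sum_le_sum fun r _ => h1 r

end NormDyn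

namespace NormDyn

variable {R ι K : Type} [Fintype R] [Fintype ι] [Fintype K] [DecidableEq K]
  (D : NormDyn R ι K)

theorem cube_le_noise_add {t : ℕ} {k : K} {v : ℝ} (hv : 0 ≤ v)
    (h : ∀ r i, D.own i = k → -v ≤ D.z t r i) (r : R) (i : ι) (hi : D.own i = k) :
    D.z t r i ^ 3 ≤ ∑ r, ∑ i with D.own i = k, D.z t r i ^ 3 + D.m * D.P * v ^ 3 := by
  have h0 : ∀ r i, D.own i = k → 0 ≤ D.z t r i ^ 3 + v ^ 3 := by
    intro r i hi
    have := cube_mono (h r i hi)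
    have h2 : (-v) ^ 3 = -v ^ 3 := by ring
    linarith
  have h1 : D.z t r i ^ 3 + v ^ 3 ≤ ∑ r, ∑ i with D.own i = k, (D.z t r i ^ 3 + v ^ 3) := by
    calc _ ≤ ∑ i with D.own i = k, (D.z t r i ^ 3 + v ^ 3) :=
          single_le_sum (f := fun i => D.z t r i ^ 3 + v ^ 3)
            (fun i hi => h0 r i (mem_filter.1 hi).2) (by simp [hi])
      _ ≤ _ := single_le_sum (f := fun r => ∑ i with D.own i = k, (D.z t r i ^ 3 + v ^ 3))
            (fun r _ => sum_nonneg fun i hi => h0 r i (mem_filter.1 hi).2) (mem_univ r)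
  have h2 : ∑ r : R, ∑ i with D.own i = k, (D.z t r i ^ 3 + v ^ 3)
      = ∑ r, ∑ i with D.own i = k, D.z t r i ^ 3 +
        D.m * ((univ.filter fun i => D.own i = k).card * v ^ 3) := by
    simp only [sum_add_distrib, sum_const, nsmul_eq_mul, card_univ, D.hR]
  have h3 : D.m * ((univ.filter fun i => D.own i = k).card * v ^ 3) ≤ D.m * (D.P * v ^ 3) := by
    have := D.hm
    have := D.hfib k
    gcongr
  have h4 : 0 ≤ v ^ 3 := by positivity
  rw [h2] at h1
  linarith

theorem one_le_l : 1 ≤ D.l := by linarith [D.hl]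

theorem mu_NP_le : D.mu * (D.N * D.P) ≤ D.e := by
  have h1 := D.hmuS
  have h2 := D.hm
  have h3 : 1 ≤ D.l ^ 3 := one_le_pow₀ D.one_le_l
  have h0 : 0 ≤ D.mu * (D.N * D.P) := by
    have := D.hmu; have := D.N_pos; have := D.hP; positivity
  have h4 : 1 ≤ D.m * D.l ^ 3 := by nlinarith
  have h5 : D.mu * D.N * D.m * D.P * D.l ^ 3 = (D.mu * (D.N * D.P)) * (D.m * D.l ^ 3) := by ring
  nlinarith

theorem NmA0_le : D.N * D.m * D.A0 ≤ D.e := by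
  have h1 := D.hs0S
  have h2 := D.hm
  have hl := D.hl
  have h3 : 2 * D.l ≤ D.l ^ 6 := by
    have : 2 ≤ D.l ^ 5 := by
      calc (2 : ℝ) ≤ 100 ^ 5 := by norm_num
        _ ≤ _ := by gcongr
    calc 2 * D.l ≤ D.l ^ 5 * D.l := by gcongr
      _ = _ := by ring
  have hm : D.m ≤ D.m ^ 3 := le_self_pow₀ h2 (by norm_num)
  have := D.hs0
  have := D.N_pos
  unfold A0
  calc D.N * D.m * (2 * D.l * D.s0) = D.s0 * D.N * D.m * (2 * D.l) := by ring
    _ ≤ D.s0 * D.N * D.m ^ 3 * D.l ^ 6 := by gcongr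
    _ ≤ _ := h1

theorem Nm_zeta_l_le : D.N * D.m * D.zeta * D.l ≤ D.e ^ 2 := by
  have h1 := D.hmuS
  have h2 := D.hSU
  have hl := D.hl
  have := D.hmu
  have := D.N_pos
  have := D.hm
  have := D.hP
  have := D.he
  unfold zeta
  calc D.N * D.m * (D.SU.card * D.P * D.mu) * D.l
      = D.SU.card * (D.mu * D.N * D.m * D.P * D.l) := by ring
    _ ≤ (D.e * D.l ^ 2) * (D.mu * D.N * D.m * D.P * D.l) := by gcongr
    _ = D.e * (D.mu * D.N * D.m * D.P * D.l ^ 3) := by ring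
    _ ≤ D.e * D.e := by gcongr
    _ = _ := by ring

theorem NmYb_le {Q : ℝ} (hQ : Q ≤ 3 * D.l) : D.N * D.m * D.Yb Q ≤ 5 * D.e := by
  have h1 := D.NmA0_le
  have h2 := D.Nm_zeta_l_le
  have hz := D.zeta_nonneg
  have hN := D.N_pos
  have hm := D.hm
  have he := D.he
  have he' := D.he'
  have h3 : D.N * D.m * D.zeta * Q ≤ D.N * D.m * D.zeta * (3 * D.l) := by gcongr
  unfold Yb
  nlinarith

theorem noise_small {v : ℝ} (hv : 0 ≤ v) (h : D.N * D.m * v ≤ 5 * D.e) :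
    v ≤ 1 / 200 ∧ D.m * D.P * v ^ 3 ≤ 1 / 100 := by
  have hN := D.one_le_N
  have hm := D.hm
  have he := D.he
  have he' := D.he'
  have h1 : v ≤ 5 * D.e := by
    have : 1 * 1 * v ≤ D.N * D.m * v := by gcongr
    linarith
  have h2 : v ≤ 1 / 200 := by linarith
  refine ⟨h2, ?_⟩
  have h3 : D.m * D.P ≤ D.N := by
    have h4 := D.hmP
    have h5 : 1 ≤ D.l ^ 2 := one_le_pow₀ D.one_le_l
    have h6 : 0 ≤ D.m * D.P := by have := D.hP; positivity
    nlinarith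
  have h4 : D.N * v ≤ 5 * D.e := by
    have : D.N * 1 * v ≤ D.N * D.m * v := by gcongr
    linarith
  calc D.m * D.P * v ^ 3 ≤ D.N * v ^ 3 := by gcongr
    _ = (D.N * v) * v ^ 2 := by ring
    _ ≤ (5 * D.e) * 1 := by
        gcongr
        nlinarith
    _ ≤ _ := by linarith

theorem card_SL_pos : (0 : ℝ) < D.SL.card := by
  have := D.hSL; have := D.N_pos; linarith

theorem half_le_ga_cube {t : ℕ} {k : K} (hk : k ∈ D.SL) : 99 / 100 ≤ D.ga t k ^ 3 := by
  have h := (D.hga t k hk).1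
  have he' := D.he'
  have h1 : (999 / 1000 : ℝ) ≤ D.ga t k := by linarith
  calc (99 / 100 : ℝ) ≤ (999 / 1000) ^ 3 := by norm_num
    _ ≤ _ := by gcongr

theorem ga_cube_le {t : ℕ} {k : K} (hk : k ∈ D.SL) : D.ga t k ^ 3 ≤ 1 := by
  have h := (D.hga t k hk)
  have he' := D.he'
  exact pow_le_one₀ (by linarith) h.2

/-- Lower bound on the signal rate from a lower bound on the loss weights. -/
theorem le_g {t : ℕ} {c : ℝ} (h : ∀ k ∈ D.SL, c ≤ psi (D.mg t k)) :
    D.ks * (D.SL.card * (c * (4 / 5))) ≤ D.g t := by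
  unfold g
  refine mul_le_mul_of_nonneg_left ?_ D.hks.le
  rw [← nsmul_eq_mul, ← sum_const]
  refine sum_le_sum fun k hk => mul_le_mul (h k hk) ?_ (by norm_num) (psi_pos _).le
  linarith [D.half_le_ga_cube (t := t) hk]

theorem ka_sum_psi_le (t : ℕ) :
    D.ka * ∑ k ∈ D.SL, psi (D.mg t k) ≤ 5 / 4 * D.x ^ 2 * D.g t := by
  have h1 : ∑ k ∈ D.SL, psi (D.mg t k) ≤ 5 / 4 * ∑ k ∈ D.SL, psi (D.mg t k) * D.ga t k ^ 3 := by
    rw [mul_sum]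
    refine sum_le_sum fun k hk => ?_
    nlinarith [D.half_le_ga_cube (t := t) hk, psi_pos (D.mg t k)]
  have hks := D.hks
  rw [D.hkx]
  unfold g
  calc _ ≤ D.ks * D.x ^ 2 * (5 / 4 * ∑ k ∈ D.SL, psi (D.mg t k) * D.ga t k ^ 3) := by gcongr
    _ = _ := by ring

theorem early_b_cubes {t : ℕ} (h : D.Early t) : ∑ r, D.b t r ^ 3 ≤ 1 / 8 := by
  have hm3 := D.hm31
  calc _ ≤ ∑ _r : R, (1 / (2 * D.m3)) ^ 3 := sum_le_sum fun r _ => cube_mono (h r)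
    _ = 1 / 8 := by
      rw [sum_const, nsmul_eq_mul, card_univ, D.hR, ← D.hm3]
      field_simp
      norm_num

theorem signal_le {t : ℕ} {k : K} (hk : k ∈ D.SL) {c : ℝ} (hc : 0 ≤ c)
    (h : ∑ r, D.b t r ^ 3 ≤ c) : D.ga t k ^ 3 * ∑ r, D.b t r ^ 3 ≤ c := by
  have h1 := D.ga_cube_le (t := t) hk
  have h2 := D.half_le_ga_cube (t := t) hk
  rcases le_total 0 (∑ r, D.b t r ^ 3) with h3 | h3 <;> nlinarith

theorem gb_le_one {t : ℕ} {r : R} (h : D.b t r ≤ 2 * D.l) : D.g t * D.b t r ≤ 1 := by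
  have h1 := D.g_le t
  have h2 := D.g_nonneg t
  have hl := D.hl
  have he' := D.he'
  have h3 : D.g t * D.b t r ≤ D.g t * (2 * D.l) := by gcongr
  have h4 : D.g t * (2 * D.l) ≤ D.g t * D.l ^ 2 := by gcongr; nlinarith
  linarith

theorem sum_g_le {t0 t1 : ℕ} (h01 : t0 ≤ t1) {r : R} {c : ℝ} (hc : 0 < c) (hr : c ≤ D.b t0 r)
    (hcap : ∀ t < t1, D.b t r ≤ 2 * D.l) : ∑ t ∈ Ico t0 t1, D.g t ≤ 2 / c := by
  have := sum_rate_le (b := fun t => D.b t r) (g := D.g) h01 (by linarith) D.g_nonneg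
    (fun t => D.b_step t r) (fun t ht => D.gb_le_one (hcap t ht))
  refine this.trans ?_
  gcongr

theorem early_cap {t : ℕ} (h : D.Early t) (r : R) : D.b t r ≤ 2 * D.l := by
  have h1 : 1 / (2 * D.m3) ≤ 1 := by
    have := D.hm31
    rw [div_le_one (by linarith)]; linarith
  linarith [h r, D.hl]

theorem z_le_of_sum {t : ℕ} {r : R} {i : ι} :
    |D.z t r i| ≤ D.A0 + 3 / 2 * D.q t r i + D.mu * ∑ j, D.q t r j := by
  have h1 := D.abs_z_sub_le t r i
  have h2 := D.hz0 r i
  have h3 := (D.hGd i)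
  have h4 := D.q_nonneg t r i
  have h5 : D.q t r i * D.G i i ≤ D.q t r i * (3 / 2) := by gcongr; exact h3.2
  have h6 : 0 ≤ D.q t r i * D.G i i := mul_nonneg h4 (by linarith)
  unfold A0
  rw [abs_le] at *
  constructor <;> linarith

theorem early_phase (s : ℕ) : (∀ t < s, D.Early t) →
    (∀ r i, D.q s r i ≤ D.e * D.A0) ∧ (∀ r i, |D.z s r i| ≤ 2 * D.A0) ∧
      s * (D.ks * D.SL.card) ≤ 20 * D.x / D.s0 := by
  induction s using Nat.strong_induction_on with
  | _ s ih =>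
  intro hE
  have hA := D.A0_pos
  have hx := D.hx
  have hs0 := D.hs0
  have hl := D.hl
  have he := D.he
  have he' := D.he'
  have hcL := D.card_SL_pos
  have hz : ∀ t < s, ∀ r i, |D.z t r i| ≤ 2 * D.A0 := fun t ht =>
    (ih t ht fun u hu => hE u (hu.trans ht)).2.1
  have hpsi : ∀ t < s, ∀ k ∈ D.SL, 1 / 4 ≤ psi (D.mg t k) := by
    intro t ht k hk
    apply quarter_le_psi
    rw [D.hmgL t k hk]
    have h1 := D.signal_le hk (by norm_num) (D.early_b_cubes (hE t ht))
    have h2 := D.noise_le (t := t) (k := k) (v := 2 * D.A0) (by positivity)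
      (fun r i _ => (abs_le.1 (hz t ht r i)).2)
    have h3 := (D.noise_small (v := 2 * D.A0) (by positivity)
      (by nlinarith [D.NmA0_le])).2
    linarith
  have htime : s * (D.ks * D.SL.card) ≤ 20 * D.x / D.s0 := by
    obtain ⟨r, hr⟩ := D.hb0
    have h1 := D.sum_g_le (Nat.zero_le s) (by positivity) hr
      (fun t ht => D.early_cap (hE t ht) r)
    have h2 : ∑ t ∈ Ico 0 s, D.ks * (D.SL.card * (1 / 4 * (4 / 5))) ≤ ∑ t ∈ Ico 0 s, D.g t :=
      sum_le_sum fun t ht => D.le_g (hpsi t (mem_Ico.1 ht).2)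
    rw [sum_const, nsmul_eq_mul, Nat.card_Ico, Nat.sub_zero] at h2
    have h3 : 2 / (D.s0 / (2 * D.x)) = 4 * D.x / D.s0 := by field_simp; norm_num
    rw [h3] at h1
    have h4 : 20 * D.x / D.s0 = 5 * (4 * D.x / D.s0) := by ring
    rw [h4]
    linarith
  have hq : ∀ r i, D.q s r i ≤ D.e * D.A0 := by
    intro r i
    rw [D.q_eq_add_sum r i (Nat.zero_le s), D.hq0, zero_add]
    have h1 : ∑ t ∈ Ico 0 s, D.ka * psi (D.mg t (D.own i)) * D.z t r i ^ 2
        ≤ ∑ t ∈ Ico 0 s, D.ka * (4 * D.A0 ^ 2) := by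
      refine sum_le_sum fun t ht => ?_
      have h2 := hz t (mem_Ico.1 ht).2 r i
      have h3 : D.z t r i ^ 2 ≤ 4 * D.A0 ^ 2 := by
        rw [← sq_abs]
        nlinarith [abs_nonneg (D.z t r i)]
      have h4 := psi_le_one (D.mg t (D.own i))
      have h5 := psi_pos (D.mg t (D.own i))
      have h6 := D.hka
      calc _ ≤ D.ka * 1 * (4 * D.A0 ^ 2) := by gcongr
        _ = _ := by ring
    rw [sum_const, nsmul_eq_mul, Nat.card_Ico, Nat.sub_zero] at h1
    refine h1.trans ?_
    have h7 : (s : ℝ) * D.ks ≤ 20 * D.x / D.s0 / D.SL.card := by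
      rw [le_div_iff₀ hcL]; linarith
    have h8 : D.x ^ 3 / D.SL.card ≤ D.e ^ 3 / D.l ^ 6 := by
      rw [div_le_div_iff₀ hcL (by positivity)]; exact D.hx3
    calc (s : ℝ) * (D.ka * (4 * D.A0 ^ 2)) = (s * D.ks) * (D.x ^ 2 * (4 * D.A0 ^ 2)) := by
          rw [D.hkx]; ring
      _ ≤ (20 * D.x / D.s0 / D.SL.card) * (D.x ^ 2 * (4 * D.A0 ^ 2)) := by gcongr
      _ = (D.x ^ 3 / D.SL.card) * (160 * D.l * D.A0) := by
          unfold A0; field_simp; ring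
      _ ≤ (D.e ^ 3 / D.l ^ 6) * (160 * D.l * D.A0) := by gcongr
      _ = D.e * D.A0 * (160 * D.e ^ 2 / D.l ^ 5) := by field_simp
      _ ≤ D.e * D.A0 * 1 := by
          gcongr
          rw [div_le_one (by positivity)]
          have : 1 ≤ D.l ^ 5 := one_le_pow₀ D.one_le_l
          nlinarith
      _ = _ := mul_one _
  refine ⟨hq, fun r i => ?_, htime⟩
  have h1 := D.z_le_of_sum (t := s) (r := r) (i := i)
  have h2 := D.sum_q_le (t := s) (r := r) (Q := D.e * D.A0) (c := D.SL.card * D.P * (D.e * D.A0))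
    (fun i _ => hq r i) (by positivity) (by
      calc _ ≤ ∑ i with D.own i ∈ D.SL, D.e * D.A0 := sum_le_sum fun i _ => hq r i
        _ = ((univ.filter fun i => D.own i ∈ D.SL).card : ℝ) * (D.e * D.A0) := by
          rw [sum_const, nsmul_eq_mul]
        _ ≤ (D.P * D.SL.card) * (D.e * D.A0) :=
          mul_le_mul_of_nonneg_right (D.card_own_le _) (by positivity)
        _ = _ := by ring)
  have h3 : D.SU.card * D.P * (D.e * D.A0) + D.SL.card * D.P * (D.e * D.A0)
      = D.N * D.P * (D.e * D.A0) := by rw [← D.hK]; ring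
  rw [h3] at h2
  have h4 := mul_le_mul_of_nonneg_left h2 D.hmu
  have h5 : D.mu * (D.N * D.P * (D.e * D.A0)) ≤ D.e * (D.e * D.A0) := by
    rw [← mul_assoc]
    exact mul_le_mul_of_nonneg_right D.mu_NP_le (by positivity)
  have h6 := hq r i
  have h7 : D.e * (D.e * D.A0) ≤ D.e * D.A0 := by
    nlinarith [mul_pos he hA]
  have h8 : D.e * D.A0 ≤ 1 / 1000 * D.A0 := by gcongr
  linarith

end NormDyn

namespace NormDyn

variable {R ι K : Type} [Fintype R] [Fintype ι] [Fintype K] [DecidableEq K]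
  (D : NormDyn R ι K)

theorem one_le_n : 1 ≤ D.n := by
  have h1 := D.hn
  have h2 := D.one_le_N
  by_contra hcon
  push Not at hcon
  rcases le_total 0 D.n with h | h
  · have : D.n ^ 3 < 1 := pow_lt_one₀ h hcon (by norm_num)
    linarith
  · have : D.n ^ 3 ≤ 0 ^ 3 := cube_mono h
    norm_num at this
    linarith

theorem x_sq_le : D.x ^ 2 * D.l ^ 4 ≤ D.e ^ 2 * D.n ^ 2 := by
  have h1 := D.hxn
  have hx := D.hx
  have := pow_le_pow_left₀ (by positivity) h1 2
  calc _ = (D.x * D.l ^ 2) ^ 2 := by ring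
    _ ≤ _ := this
    _ = _ := by ring

theorem m3_x_sq_le {Y : ℝ} (hY : 0 ≤ Y) (h : D.N * D.m * Y ≤ 5 * D.e) :
    5 * D.m3 * D.x ^ 2 * Y ≤ D.e := by
  have h1 := D.x_sq_le
  have hl : 1 ≤ D.l ^ 4 := one_le_pow₀ D.one_le_l
  have hm3 := D.hm31
  have hm := D.hm
  have hn := D.one_le_n
  have hN := D.N_pos
  have he := D.he
  have he' := D.he'
  have h2 : D.x ^ 2 ≤ D.e ^ 2 * D.n ^ 2 := by
    nlinarith [sq_nonneg D.x]
  have h3 : D.n ^ 2 ≤ D.N := by rw [← D.hn]; exact pow_le_pow_right₀ hn (by norm_num)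
  have h4 : D.m3 ≤ D.m := by rw [← D.hm3]; exact le_self_pow₀ hm3 (by norm_num)
  calc 5 * D.m3 * D.x ^ 2 * Y ≤ 5 * D.m * (D.e ^ 2 * D.N) * Y := by
        gcongr
        exact h2.trans (by gcongr)
    _ = 5 * D.e ^ 2 * (D.N * D.m * Y) := by ring
    _ ≤ 5 * D.e ^ 2 * (5 * D.e) := by gcongr
    _ = D.e * (25 * D.e ^ 2) := by ring
    _ ≤ D.e * 1 := by gcongr; nlinarith
    _ = _ := mul_one _

theorem exists_early_end (s : ℕ) :
    ∃ t1 ≤ s, (∀ t < t1, D.Early t) ∧ (t1 = s ∨ ∃ r, 1 / (2 * D.m3) ≤ D.b t1 r) := by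
  classical
  have hex : ∃ t, t = s ∨ ¬ D.Early t := ⟨s, Or.inl rfl⟩
  refine ⟨Nat.find hex, Nat.find_min' hex (Or.inl rfl), fun t ht => ?_, ?_⟩
  · have := Nat.find_min hex ht
    push Not at this
    exact this.2
  · rcases Nat.find_spec hex with h | h
    · exact Or.inl h
    · refine Or.inr ?_
      have h' : ¬ ∀ r, D.b (Nat.find hex) r ≤ 1 / (2 * D.m3) := h
      obtain ⟨r, hr⟩ := not_forall.1 h'
      exact ⟨r, (not_le.1 hr).le⟩

theorem late_sum_g_le {s t1 : ℕ} (h1 : t1 ≤ s)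
    (hend : t1 = s ∨ ∃ r, 1 / (2 * D.m3) ≤ D.b t1 r)
    (hcap : ∀ t < s, ∀ r, D.b t r ≤ 2 * D.l) : ∑ t ∈ Ico t1 s, D.g t ≤ 4 * D.m3 := by
  have hm3 := D.hm31
  rcases hend with rfl | ⟨r, hr⟩
  · simp only [Ico_self, sum_empty]; positivity
  · have := D.sum_g_le h1 (by positivity) hr (fun t ht => hcap t ht r)
    refine this.trans (le_of_eq ?_)
    field_simp
    norm_num

/-- As long as the unlearnable noise coefficients are at most `Q`, the noise correlations of the
learnable samples and the interference are at most `Yb Q`. -/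
theorem learnable_noise {t : ℕ} {Q : ℝ} (hQ0 : 0 ≤ Q) (hQ : Q ≤ 3 * D.l)
    (hcap : ∀ s < t, ∀ r, D.b s r ≤ 2 * D.l)
    (hU : ∀ r i, D.own i ∈ D.SU → D.q t r i ≤ Q) (s : ℕ) : s ≤ t →
    (∀ r i, D.own i ∈ D.SL → |D.z s r i| ≤ D.Yb Q) ∧
      (∀ r, D.mu * ∑ j, D.q s r j ≤ D.Yb Q / 2) ∧
      (∀ r, D.mu * ∑ j, D.q s r j ≤ D.zeta * Q + D.mu * (D.N * D.P) * D.Yb Q) := by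
  induction s using Nat.strong_induction_on with
  | _ s ih =>
  intro hst
  obtain ⟨t1, ht1, hE, hend⟩ := D.exists_early_end s
  have hA := D.A0_pos
  have hY4 := D.A0_le_Yb hQ0
  have hNY := D.NmYb_le hQ
  have he := D.he
  have he' := D.he'
  have hP := D.hP
  have hka := D.hka
  have hm3 := D.hm31
  set Y := D.Yb Q with hY
  have hYpos : 0 < Y := by linarith
  have hg := D.late_sum_g_le ht1 hend (fun t' ht' => hcap t' (lt_of_lt_of_le ht' hst))
  have hpsisum : ∑ t' ∈ Ico t1 s, D.ka * ∑ k ∈ D.SL, psi (D.mg t' k) ≤ 5 * D.m3 * D.x ^ 2 := by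
    calc _ ≤ ∑ t' ∈ Ico t1 s, 5 / 4 * D.x ^ 2 * D.g t' :=
          sum_le_sum fun t' _ => D.ka_sum_psi_le t'
      _ = 5 / 4 * D.x ^ 2 * ∑ t' ∈ Ico t1 s, D.g t' := by rw [mul_sum]
      _ ≤ 5 / 4 * D.x ^ 2 * (4 * D.m3) := by gcongr
      _ = _ := by ring
  have hsmall : 5 * D.m3 * D.x ^ 2 * Y ^ 2 ≤ D.e * Y := by
    have := mul_le_mul_of_nonneg_right (D.m3_x_sq_le hYpos.le hNY) hYpos.le
    linarith
  have hstep : ∀ r i, D.own i ∈ D.SL →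
      D.q s r i ≤ D.e * D.A0 + Y ^ 2 * ∑ t' ∈ Ico t1 s, D.ka * psi (D.mg t' (D.own i)) := by
    intro r i hi
    rw [D.q_eq_add_sum r i ht1, mul_sum]
    refine add_le_add ((D.early_phase t1 hE).1 r i) (sum_le_sum fun t' ht' => ?_)
    have hlt := (mem_Ico.1 ht').2
    have h2 := (ih t' hlt (hlt.le.trans hst)).1 r i hi
    have h3 : D.z t' r i ^ 2 ≤ Y ^ 2 := by
      rw [← sq_abs]
      exact pow_le_pow_left₀ (abs_nonneg _) h2 2
    have := psi_pos (D.mg t' (D.own i))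
    rw [mul_comm (Y ^ 2)]
    gcongr
  have hqi : ∀ r i, D.own i ∈ D.SL → D.q s r i ≤ D.e * D.A0 + D.e * Y := by
    intro r i hi
    refine (hstep r i hi).trans ?_
    have h1 : ∑ t' ∈ Ico t1 s, D.ka * psi (D.mg t' (D.own i)) ≤ 5 * D.m3 * D.x ^ 2 := by
      refine le_trans (sum_le_sum fun t' _ => ?_) hpsisum
      refine mul_le_mul_of_nonneg_left ?_ hka.le
      exact single_le_sum (f := fun k => psi (D.mg t' k)) (fun k _ => (psi_pos _).le) hi
    have h2 := mul_le_mul_of_nonneg_left h1 (sq_nonneg Y)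
    linarith
  have hqsum : ∀ r, ∑ i with D.own i ∈ D.SL, D.q s r i ≤
      D.N * D.P * (D.e * D.A0) + D.P * (D.e * Y) := by
    intro r
    calc _ ≤ ∑ i with D.own i ∈ D.SL, (D.e * D.A0 +
          Y ^ 2 * ∑ t' ∈ Ico t1 s, D.ka * psi (D.mg t' (D.own i))) :=
          sum_le_sum fun i hi => hstep r i (mem_filter.1 hi).2
      _ = ((univ.filter fun i => D.own i ∈ D.SL).card : ℝ) * (D.e * D.A0) +
          Y ^ 2 * ∑ i with D.own i ∈ D.SL, ∑ t' ∈ Ico t1 s, D.ka * psi (D.mg t' (D.own i)) := by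
          rw [sum_add_distrib, sum_const, nsmul_eq_mul, mul_sum]
      _ ≤ (D.P * D.N) * (D.e * D.A0) + Y ^ 2 * (D.P * (5 * D.m3 * D.x ^ 2)) := by
          refine add_le_add ?_ ?_
          · refine mul_le_mul_of_nonneg_right ((D.card_own_le _).trans ?_) (by positivity)
            exact mul_le_mul_of_nonneg_left D.card_SL_le (by linarith)
          · refine mul_le_mul_of_nonneg_left ?_ (sq_nonneg _)
            have h1 := D.sum_own_le D.SL
              (fun k => ∑ t' ∈ Ico t1 s, D.ka * psi (D.mg t' k))
              (fun k _ => sum_nonneg fun t' _ => mul_nonneg hka.le (psi_pos _).le)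
            refine h1.trans (mul_le_mul_of_nonneg_left ?_ (by linarith))
            rw [sum_comm]
            simpa only [mul_sum] using hpsisum
      _ ≤ _ := by
          have := mul_le_mul_of_nonneg_left hsmall (by linarith : 0 ≤ D.P)
          nlinarith
  have hint : ∀ r, D.mu * ∑ j, D.q s r j ≤ Y / 2 ∧
      D.mu * ∑ j, D.q s r j ≤ D.zeta * Q + D.mu * (D.N * D.P) * Y := by
    intro r
    have h1 := D.sum_q_le (t := s) (r := r)
      (fun i hi => (D.q_mono r i hst).trans (hU r i hi)) hQ0 (hqsum r)
    have h2 := mul_le_mul_of_nonneg_left h1 D.hmu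
    have h3 := D.mu_NP_le
    have h4 : D.mu * D.P ≤ D.e := by
      have : D.mu * (1 * D.P) ≤ D.mu * (D.N * D.P) := by
        have := D.hmu
        gcongr
        exact D.one_le_N
      linarith
    have h5 : D.mu * (D.SU.card * D.P * Q + (D.N * D.P * (D.e * D.A0) + D.P * (D.e * Y)))
        = D.zeta * Q + (D.mu * (D.N * D.P)) * (D.e * D.A0) + (D.mu * D.P) * (D.e * Y) := by
      unfold zeta; ring
    have h6 : (D.mu * (D.N * D.P)) * (D.e * D.A0) ≤ D.e * (D.e * D.A0) := by gcongr
    have h7 : (D.mu * D.P) * (D.e * Y) ≤ D.e * (D.e * Y) := by gcongr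
    have h8 : D.e * (D.e * D.A0) ≤ 1 / 1000 * D.A0 := by
      have : D.e * D.e ≤ 1 / 1000 := by nlinarith
      nlinarith
    have h9 : D.e * (D.e * Y) ≤ 1 / 1000 * Y := by
      have : D.e * D.e ≤ 1 / 1000 := by nlinarith
      nlinarith
    have h10 : Y = 4 * (D.A0 + D.zeta * Q) := rfl
    have := mul_nonneg D.zeta_nonneg hQ0
    refine ⟨by linarith, ?_⟩
    have h11 : D.mu * D.P ≤ D.mu * (D.N * D.P) := by
      have h12 := D.one_le_N
      have h13 := D.hmu
      refine mul_le_mul_of_nonneg_left ?_ h13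
      nlinarith
    have h14 : 0 ≤ D.mu * (D.N * D.P) := by
      have h12 := D.N_pos
      have h13 := D.hmu
      positivity
    have h15 : (D.mu * D.P) * (D.e * Y) ≤ D.mu * (D.N * D.P) * (D.e * Y) := by gcongr
    have h16 : D.e * D.A0 + D.e * Y ≤ Y := by nlinarith
    have h17 := mul_le_mul_of_nonneg_left h16 h14
    linarith
  refine ⟨fun r i hi => ?_, fun r => (hint r).1, fun r => (hint r).2⟩
  have h1 := D.z_le_of_sum (t := s) (r := r) (i := i)
  have h2 := (hint r).1
  have h3 := hqi r i hi
  have h8 : D.e * D.A0 ≤ 1 / 1000 * D.A0 := by gcongr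
  have h9 : D.e * Y ≤ 1 / 1000 * Y := by gcongr
  linarith

theorem exp_neg_l_sq_le : Real.exp (-D.l ^ 2) ≤ 1 / D.T := by
  have h1 := D.hlogT
  have hT : (0 : ℝ) < D.T := by exact_mod_cast D.hT
  rw [one_div, ← Real.exp_log hT, ← Real.exp_neg]
  exact Real.exp_le_exp.2 (by linarith)

theorem B0_cube_le (t : ℕ) (r : R) : -(1 / 1000 / D.m) ≤ D.b t r ^ 3 := by
  have h1 : -D.B0 ≤ D.b t r :=
    (abs_le.1 (D.hB0 r)).1.trans (D.b_mono r (Nat.zero_le t))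
  have h2 := D.hB0S
  have h3 := D.hm31
  have he' := D.he'
  have h4 : 0 ≤ D.B0 := (abs_nonneg _).trans (D.hB0 r)
  have hm := D.hm
  have h5 : D.B0 ^ 3 ≤ 1 / 1000 / D.m := by
    rw [le_div_iff₀ (by linarith), ← D.hm3]
    have h6 : D.B0 * D.m3 ≤ D.e := by
      have : D.B0 * D.m3 ≤ D.B0 * D.m3 ^ 2 := by gcongr; nlinarith
      linarith
    have h7 := pow_le_pow_left₀ (by positivity) h6 3
    have h8 : D.e ^ 3 ≤ D.e := by
      have := D.he
      nlinarith [mul_pos this this]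
    calc D.B0 ^ 3 * D.m3 ^ 3 = (D.B0 * D.m3) ^ 3 := by ring
      _ ≤ _ := by linarith
  have h6 := cube_mono h1
  have h7 : (-D.B0) ^ 3 = -D.B0 ^ 3 := by ring
  linarith

theorem cube_le_sum (t : ℕ) (r : R) : D.b t r ^ 3 ≤ ∑ r, D.b t r ^ 3 + 1 / 1000 := by
  have hm := D.hm
  have h1 : D.b t r ^ 3 + 1 / 1000 / D.m ≤ ∑ r, (D.b t r ^ 3 + 1 / 1000 / D.m) :=
    single_le_sum (f := fun r => D.b t r ^ 3 + 1 / 1000 / D.m)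
      (fun r _ => by linarith [D.B0_cube_le t r]) (mem_univ r)
  rw [sum_add_distrib, sum_const, nsmul_eq_mul, card_univ, D.hR] at h1
  have h2 : D.m * (1 / 1000 / D.m) = 1 / 1000 := by field_simp
  have h3 : 0 ≤ 1 / 1000 / D.m := by positivity
  linarith

/-- Signal coefficients and unlearnable noise coefficients stay of order `l`. -/
theorem caps (t : ℕ) : t ≤ D.T →
    (∀ r, D.b t r ≤ D.l + 1 + t / D.T) ∧
      (∀ r i, D.own i ∈ D.SU → D.q t r i ≤ D.l + 1 + t / D.T) := by
  have hT : (0 : ℝ) < D.T := by exact_mod_cast D.hT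
  have hl := D.hl
  have he := D.he
  have he' := D.he'
  induction t using Nat.strong_induction_on with
  | _ t ih =>
  intro htT
  rcases t with _ | t
  · refine ⟨fun r => ?_, fun r i _ => ?_⟩
    · have h1 := (abs_le.1 (D.hB0 r)).2
      have h2 := D.hB0S
      have h3 := D.hm31
      have h4 : 0 ≤ D.B0 := (abs_nonneg _).trans (D.hB0 r)
      have h5 : D.B0 * 1 ≤ D.B0 * D.m3 ^ 2 := by gcongr; nlinarith
      simp only [CharP.cast_eq_zero, zero_div]
      linarith
    · rw [D.hq0]; simp only [CharP.cast_eq_zero, zero_div]; linarith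
  have hfrac : ∀ s : ℕ, s ≤ D.T → (s : ℝ) / D.T ≤ 1 := by
    intro s hs
    rw [div_le_one hT]; exact_mod_cast hs
  have hcapb : ∀ s ≤ t, ∀ r, D.b s r ≤ D.l + 2 := fun s hs r => by
    have := (ih s (by omega) (by omega)).1 r
    linarith [hfrac s (by omega)]
  have hcapq : ∀ r i, D.own i ∈ D.SU → D.q t r i ≤ D.l + 2 := fun r i hi => by
    have := (ih t (by omega) (by omega)).2 r i hi
    linarith [hfrac t (by omega)]
  obtain ⟨hzL, hint, -⟩ := D.learnable_noise (t := t) (Q := D.l + 2) (by linarith) (by linarith)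
    (fun s hs r => by linarith [hcapb s hs.le r]) hcapq t le_rfl
  have hNY := D.NmYb_le (Q := D.l + 2) (by linarith)
  have hYA := D.A0_le_Yb (Q := D.l + 2) (by linarith)
  have hA := D.A0_pos
  set Y := D.Yb (D.l + 2)
  have hYpos : 0 < Y := by linarith
  obtain ⟨hYs, hYn⟩ := D.noise_small hYpos.le hNY
  have hT1 : 0 ≤ (t : ℝ) / D.T := by positivity
  have hsucc : ((t + 1 : ℕ) : ℝ) / D.T = t / D.T + 1 / D.T := by push_cast; ring
  have hexp := D.exp_neg_l_sq_le
  have hinv : 0 < 1 / (D.T : ℝ) := by positivity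
  rw [hsucc]
  refine ⟨fun r => ?_, fun r i hi => ?_⟩
  · rw [D.b_step]
    have hg0 := D.g_nonneg t
    have hg1 := D.g_le t
    rcases le_or_gt (D.b t r) D.l with hb | hb
    · have h1 : D.b t r ^ 2 ≤ D.l ^ 2 := by
        have h2 : -D.B0 ≤ D.b t r :=
          (abs_le.1 (D.hB0 r)).1.trans (D.b_mono r (Nat.zero_le t))
        have h3 := D.hB0S
        have h4 : 0 ≤ D.B0 := (abs_nonneg _).trans (D.hB0 r)
        have h5 : D.B0 * 1 ≤ D.B0 * D.m3 ^ 2 := by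
          gcongr
          nlinarith [D.hm31]
        nlinarith
      have h2 : D.g t * D.b t r ^ 2 ≤ D.g t * D.l ^ 2 := by gcongr
      linarith
    · have hpsi : ∀ k ∈ D.SL, psi (D.mg t k) ≤ Real.exp (-D.l ^ 2) := by
        intro k hk
        refine (psi_le_exp_neg _).trans (Real.exp_le_exp.2 ?_)
        have h1 := D.le_noise (t := t) (k := k) hYpos.le
          (fun r i hik => (abs_le.1 (hzL r i (hik ▸ hk))).1)
        have h2 := D.cube_le_sum t r
        have h3 := cube_mono hb.le
        have h4 : D.l ^ 2 * 100 ≤ D.l ^ 3 := by nlinarith [sq_nonneg D.l]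
        have h5 := D.half_le_ga_cube (t := t) hk
        have h6 : 10000 ≤ D.l ^ 2 := by nlinarith
        rw [D.hmgL t k hk]
        have h7 : 0 ≤ ∑ r, D.b t r ^ 3 := by linarith
        have h8 : 1 / 2 * ∑ r, D.b t r ^ 3 ≤ D.ga t k ^ 3 * ∑ r, D.b t r ^ 3 := by
          gcongr; linarith
        linarith
      have h1 := D.g_le_of_psi_le (Real.exp_pos _).le hpsi
      have h2 : D.b t r ^ 2 ≤ 4 * D.l ^ 2 := by
        have := hcapb t le_rfl r
        nlinarith
      have h3 : D.g t * D.b t r ^ 2 ≤ D.g t * (4 * D.l ^ 2) := by gcongr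
      have h4 : 4 * (D.e * Real.exp (-D.l ^ 2)) ≤ 1 / D.T := by
        have := Real.exp_pos (-D.l ^ 2)
        nlinarith
      have h5 := (ih t (by omega) (by omega)).1 r
      linarith
  · rw [D.hq]
    have hka := D.hka
    have hkaS : D.ka * D.l ^ 2 ≤ D.e := by
      have h1 := D.hkaS
      have h2 := D.one_le_N
      have : D.ka * 1 * D.l ^ 2 ≤ D.ka * D.N * D.l ^ 2 := by gcongr
      linarith
    have hcross : ∀ r i, |D.z t r i - D.z 0 r i - D.q t r i * D.G i i| ≤ Y / 2 := fun r i =>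
      (D.abs_z_sub_le t r i).trans (hint r)
    have hlow : ∀ r i, -Y ≤ D.z t r i - D.q t r i * D.G i i ∧
        D.z t r i - D.q t r i * D.G i i ≤ Y := by
      intro r i
      have h1 := abs_le.1 (hcross r i)
      have h2 : |D.z 0 r i| ≤ D.A0 := D.hz0 r i
      have h3 := abs_le.1 h2
      constructor <;> linarith
    have hqG : ∀ r i, D.q t r i * (1 / 2) ≤ D.q t r i * D.G i i ∧
        D.q t r i * D.G i i ≤ D.q t r i * (3 / 2) := fun r i =>
      ⟨mul_le_mul_of_nonneg_left (D.hGd i).1 (D.q_nonneg t r i),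
        mul_le_mul_of_nonneg_left (D.hGd i).2 (D.q_nonneg t r i)⟩
    have hq0 := D.q_nonneg t r i
    have hpp := psi_pos (D.mg t (D.own i))
    have hzsq : D.z t r i ^ 2 ≤ 4 * D.l ^ 2 := by
      have h1 := hlow r i
      have h2 := hqG r i
      have h3 := hcapq r i hi
      nlinarith
    have hinc : D.ka * D.z t r i ^ 2 ≤ 4 * D.e := by
      have : D.ka * D.z t r i ^ 2 ≤ D.ka * (4 * D.l ^ 2) := by gcongr
      linarith
    have hinc0 : 0 ≤ D.ka * D.z t r i ^ 2 := by positivity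
    rcases le_or_gt (D.q t r i) D.l with hql | hql
    · have h1 := psi_le_one (D.mg t (D.own i))
      have h2 : D.ka * psi (D.mg t (D.own i)) * D.z t r i ^ 2 =
        psi (D.mg t (D.own i)) * (D.ka * D.z t r i ^ 2) := by ring
      rw [h2]
      nlinarith
    · have hpsi : psi (D.mg t (D.own i)) ≤ Real.exp (-D.l ^ 2) := by
        refine (psi_le_exp_neg _).trans (Real.exp_le_exp.2 ?_)
        rw [D.hmgU t _ hi]
        have h1 := D.cube_le_noise_add (t := t) (k := D.own i) hYpos.le
          (fun r i _ => by
            have h1 := (hlow r i).1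
            have h2 := (hqG r i).1
            have := D.q_nonneg t r i
            linarith) r i rfl
        have h2 : D.l / 4 ≤ D.z t r i := by
          have h1 := (hlow r i).1
          have h2 := (hqG r i).1
          linarith
        have h3 := cube_mono h2
        have h4 : D.l ^ 2 * 100 ≤ D.l ^ 3 := by nlinarith [sq_nonneg D.l]
        have h5 : (D.l / 4) ^ 3 = D.l ^ 3 / 64 := by ring
        have h6 : 10000 ≤ D.l ^ 2 := by nlinarith
        linarith
      have h2 : D.ka * psi (D.mg t (D.own i)) * D.z t r i ^ 2 =
        psi (D.mg t (D.own i)) * (D.ka * D.z t r i ^ 2) := by ring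
      have h3 := mul_le_mul hpsi hinc hinc0 (Real.exp_pos _).le
      have h4 : Real.exp (-D.l ^ 2) * (4 * D.e) ≤ 1 / D.T := by
        have := Real.exp_pos (-D.l ^ 2)
        nlinarith
      have h5 := (ih t (by omega) (by omega)).2 r i hi
      linarith

end NormDyn

/-- A sequence growing at least quadratically has bounded lifetime. -/
theorem lifetime_le {u : ℕ → ℝ} {c : ℝ} (hc : 0 ≤ c) {T : ℕ} (h0 : 0 < u 0)
    (hstep : ∀ t < T, 0 < u t → u t + c * u t ^ 2 ≤ u (t + 1))
    (hsmall : ∀ t < T, c * u t ≤ 1) : c * T * u 0 ≤ 2 := by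
  have key : ∀ t, t ≤ T → 0 < u t ∧ 1 / u t ≤ 1 / u 0 - c / 2 * t := by
    intro t
    induction t with
    | zero => intro _; exact ⟨h0, by simp⟩
    | succ t ih =>
      intro ht
      obtain ⟨h1, h2⟩ := ih (by omega)
      have h3 := hstep t (by omega) h1
      have h4 := hsmall t (by omega)
      have h5 : 0 < u t + c * u t ^ 2 := by positivity
      refine ⟨by linarith, ?_⟩
      have h6 : 1 / u (t + 1) ≤ 1 / (u t + c * u t ^ 2) := by gcongr
      have h7 : 1 / (u t + c * u t ^ 2) ≤ 1 / u t - c / 2 := by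
        rw [div_sub_div _ _ h1.ne' (by norm_num), div_le_div_iff₀ h5 (by positivity)]
        have h8 : 0 ≤ c * u t := by positivity
        nlinarith [mul_nonneg h8 (mul_nonneg h1.le (sub_nonneg.2 h4))]
      push_cast
      linarith
  obtain ⟨h1, h2⟩ := key T le_rfl
  have h3 : 0 < 1 / u T := by positivity
  have h4 : c / 2 * T ≤ 1 / u 0 := by linarith
  rw [le_div_iff₀ h0] at h4
  linarith

namespace NormDyn

variable {R ι K : Type} [Fintype R] [Fintype ι] [Fintype K] [DecidableEq K]
  (D : NormDyn R ι K)

theorem T_pos : (0 : ℝ) < D.T := by exact_mod_cast D.hT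

theorem one_le_ks_T : 1 ≤ D.e * (D.ks * D.x ^ 2 * D.T * D.s0) := by
  have := D.hTka
  rwa [D.hkx] at this

theorem early_le_half {s : ℕ} (h : ∀ t < s, D.Early t) : (s : ℝ) ≤ D.T / 2 := by
  have h1 := (D.early_phase s h).2.2
  have h2 := D.one_le_ks_T
  have h3 := D.hx3
  have hs0 := D.hs0
  have he := D.he
  have he' := D.he'
  have hx := D.hx
  have hks := D.hks
  have hT := D.T_pos
  have hSL := D.card_SL_pos
  have hl : 1 ≤ D.l ^ 6 := one_le_pow₀ D.one_le_l
  have h4 : D.x ^ 3 ≤ D.e ^ 3 * D.SL.card := by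
    have : D.x ^ 3 * 1 ≤ D.x ^ 3 * D.l ^ 6 := by gcongr
    linarith
  rw [le_div_iff₀ hs0] at h1
  have h5 : D.s0 * D.ks * D.SL.card * s ≤ D.s0 * D.ks * D.SL.card * (D.T / 2) := by
    calc D.s0 * D.ks * D.SL.card * s = s * (D.ks * D.SL.card) * D.s0 := by ring
      _ ≤ 20 * D.x * 1 := by linarith
      _ ≤ 20 * D.x * (D.e * (D.ks * D.x ^ 2 * D.T * D.s0)) := by gcongr
      _ = 20 * D.e * D.ks * D.T * D.s0 * D.x ^ 3 := by ring
      _ ≤ 20 * D.e * D.ks * D.T * D.s0 * (D.e ^ 3 * D.SL.card) := by gcongr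
      _ = (40 * D.e ^ 4) * (D.s0 * D.ks * D.SL.card * (D.T / 2)) := by ring
      _ ≤ 1 * (D.s0 * D.ks * D.SL.card * (D.T / 2)) := by
          gcongr
          calc 40 * D.e ^ 4 ≤ 40 * (1 / 1000) ^ 4 := by gcongr
            _ ≤ 1 := by norm_num
      _ = _ := one_mul _
  exact le_of_mul_le_mul_left h5 (by positivity)

/-- Some filter learns the signal. -/
theorem signal_learned : ∃ t ≤ D.T, ∃ r, 1 / (2 * D.m3) < D.b t r := by
  by_contra hcon
  push Not at hcon
  have h1 := D.early_le_half (s := D.T) (fun t ht r => hcon t ht.le r)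
  have := D.T_pos
  linarith

theorem b_cap {t : ℕ} (ht : t ≤ D.T) (r : R) : D.b t r ≤ D.l + 2 := by
  have h1 := (D.caps t ht).1 r
  have h2 : (t : ℝ) / D.T ≤ 1 := by
    rw [div_le_one D.T_pos]; exact_mod_cast ht
  linarith

theorem q_cap {t : ℕ} (ht : t ≤ D.T) (r : R) (i : ι) (hi : D.own i ∈ D.SU) :
    D.q t r i ≤ D.l + 2 := by
  have h1 := (D.caps t ht).2 r i hi
  have h2 : (t : ℝ) / D.T ≤ 1 := by
    rw [div_le_one D.T_pos]; exact_mod_cast ht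
  linarith

/-- Uniform bound on learnable noise correlations and interference during training. -/
def Yl : ℝ := D.Yb (D.l + 2)

theorem Yl_spec : 0 < D.Yl ∧ 4 * D.A0 ≤ D.Yl ∧ D.N * D.m * D.Yl ≤ 5 * D.e ∧ D.Yl ≤ 1 / 200 ∧
    D.m * D.P * D.Yl ^ 3 ≤ 1 / 100 := by
  have hl := D.hl
  have h1 := D.NmYb_le (Q := D.l + 2) (by linarith)
  have h2 := D.A0_le_Yb (Q := D.l + 2) (by linarith)
  have h3 := D.A0_pos
  have h4 : 0 < D.Yb (D.l + 2) := by linarith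
  exact ⟨h4, h2, h1, D.noise_small h4.le h1⟩

theorem noise_bounds {t : ℕ} (ht : t ≤ D.T) :
    (∀ r i, D.own i ∈ D.SL → |D.z t r i| ≤ D.Yl) ∧ (∀ r, D.mu * ∑ j, D.q t r j ≤ D.Yl / 2) := by
  have hl := D.hl
  have h := D.learnable_noise (t := t) (Q := D.l + 2) (by linarith) (by linarith)
    (fun s hs r => by linarith [D.b_cap (hs.le.trans ht) r]) (D.q_cap ht) t le_rfl
  exact ⟨h.1, h.2.1⟩

theorem neg_Yl_le {t : ℕ} (ht : t ≤ D.T) (r : R) (i : ι) : -D.Yl ≤ D.z t r i := by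
  have h1 := abs_le.1 ((D.abs_z_sub_le t r i).trans ((D.noise_bounds ht).2 r))
  have h2 : |D.z 0 r i| ≤ D.A0 := D.hz0 r i
  have h3 := abs_le.1 h2
  have h4 := D.Yl_spec
  have h5 : 0 ≤ D.q t r i * D.G i i :=
    mul_nonneg (D.q_nonneg t r i) (by linarith [(D.hGd i).1])
  linarith

theorem unlearnable_margin {t : ℕ} (ht : t ≤ D.T) {k : K} (hk : k ∈ D.SU) :
    -(1 / 2) ≤ D.mg t k := by
  have h1 := D.le_noise (t := t) (k := k) D.Yl_spec.1.le (fun r i _ => D.neg_Yl_le ht r i)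
  rw [D.hmgU t k hk]
  linarith [D.Yl_spec.2.2.2.2]

theorem two_le_n : 2 ≤ D.n := by
  have h1 := D.hmP
  have h2 : (1 : ℝ) * 1 * 100 ^ 2 ≤ D.m * D.P * D.l ^ 2 := by
    have := D.hm; have := D.hP; have := D.hl
    gcongr
  have h3 := D.he
  have h4 := D.he'
  have h5 := D.N_pos
  have h6 : 8 ≤ D.n ^ 3 := by rw [D.hn]; nlinarith
  by_contra hcon
  push Not at hcon
  have h7 : D.n ^ 3 < 2 ^ 3 := by
    have := D.one_le_n
    gcongr
  linarith

theorem four_log_n_le : 4 * Real.log D.n ≤ ∑ r, D.b D.T r ^ 3 := by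
  by_contra hcon
  push Not at hcon
  have hn := D.two_le_n
  have hlog : 0 ≤ Real.log D.n := Real.log_nonneg (by linarith)
  have hY := D.Yl_spec
  have hks := D.hks
  have hpsi : ∀ t ≤ D.T, ∀ k ∈ D.SL, 1 / (4 * D.n ^ 4) ≤ psi (D.mg t k) := by
    intro t ht k hk
    have h1 : D.mg t k ≤ 4 * Real.log D.n + 1 / 100 := by
      rw [D.hmgL t k hk]
      have h2 : ∑ r, D.b t r ^ 3 ≤ 4 * Real.log D.n :=
        (sum_le_sum fun r _ => cube_mono (D.b_mono r ht)).trans hcon.le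
      have h3 := D.signal_le (t := t) hk (by linarith) h2
      have h4 := D.noise_le (t := t) (k := k) hY.1.le
        (fun r i hik => (abs_le.1 ((D.noise_bounds ht).1 r i (hik ▸ hk))).2)
      linarith
    refine le_trans ?_ (half_exp_neg_le_psi (by linarith) h1)
    have h5 : Real.exp (-(4 * Real.log D.n + 1 / 100)) =
        1 / D.n ^ 4 * Real.exp (-(1 / 100)) := by
      rw [neg_add, Real.exp_add, Real.exp_neg]
      congr 1
      rw [← Real.log_rpow (by linarith), Real.exp_log (by positivity)]
      norm_num
    have h6 : (1 / 2 : ℝ) ≤ Real.exp (-(1 / 100)) := by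
      have := Real.add_one_le_exp (-(1 / 100 : ℝ))
      linarith
    rw [h5]
    calc 1 / (4 * D.n ^ 4) = 1 / D.n ^ 4 * (1 / 2) / 2 := by field_simp; norm_num
      _ ≤ _ := by gcongr
  obtain ⟨t1, ht1, hE, hend⟩ := D.exists_early_end D.T
  have hhalf := D.early_le_half hE
  have hsum := D.late_sum_g_le ht1 hend
    (fun t ht r => by linarith [D.b_cap ht.le r, D.hl])
  have hT := D.T_pos
  have hlow : ∀ t ∈ Ico t1 D.T, D.ks / (10 * D.n) ≤ D.g t := by
    intro t ht
    refine le_trans ?_ (D.le_g (hpsi t (mem_Ico.1 ht).2.le))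
    have h1 := D.hSL
    rw [← D.hn] at h1
    calc D.ks / (10 * D.n) = D.ks * (D.n ^ 3 / 2 * (1 / (4 * D.n ^ 4) * (4 / 5))) := by
          field_simp; norm_num
      _ ≤ _ := by gcongr
  have h1 : (D.T - t1 : ℝ) * (D.ks / (10 * D.n)) ≤ 4 * D.m3 := by
    calc _ = ∑ _t ∈ Ico t1 D.T, D.ks / (10 * D.n) := by
          rw [sum_const, Nat.card_Ico, nsmul_eq_mul, Nat.cast_sub ht1]
      _ ≤ _ := (sum_le_sum hlow).trans hsum
  have h2 : D.T * D.ks ≤ 80 * D.m3 * D.n := by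
    have h3 : (D.T / 2 : ℝ) * (D.ks / (10 * D.n)) ≤ 4 * D.m3 :=
      le_trans (by gcongr; linarith) h1
    have h4 : (D.T / 2 : ℝ) * (D.ks / (10 * D.n)) = D.T * D.ks / (20 * D.n) := by
      field_simp; norm_num
    rw [h4, div_le_iff₀ (by positivity)] at h3
    linarith
  have h3 := D.one_le_ks_T
  have hs0 := D.hs0
  have he := D.he
  have he' := D.he'
  have hm3 := D.hm31
  have hx := D.hx
  have hm := D.hm
  have hN := D.N_pos
  have h4 : D.x ^ 2 ≤ D.e ^ 2 * D.n ^ 2 := by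
    have := D.x_sq_le
    have hl : 1 ≤ D.l ^ 4 := one_le_pow₀ D.one_le_l
    nlinarith [sq_nonneg D.x]
  have h5 : D.m3 * D.s0 * D.N ≤ D.e := by
    have h6 := D.hs0S
    have hl : 1 ≤ D.l ^ 6 := one_le_pow₀ D.one_le_l
    have h7 : D.m3 ≤ D.m ^ 3 := by
      calc D.m3 ≤ D.m3 ^ 3 := le_self_pow₀ hm3 (by norm_num)
        _ = D.m := D.hm3
        _ ≤ D.m ^ 3 := le_self_pow₀ hm (by norm_num)
    calc D.m3 * D.s0 * D.N ≤ D.m ^ 3 * D.s0 * D.N * 1 := by rw [mul_one]; gcongr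
      _ ≤ D.m ^ 3 * D.s0 * D.N * D.l ^ 6 := by gcongr
      _ = D.s0 * D.N * D.m ^ 3 * D.l ^ 6 := by ring
      _ ≤ D.e := h6
  have h6 : D.e * (D.ks * D.x ^ 2 * D.T * D.s0) < 1 := by
    calc D.e * (D.ks * D.x ^ 2 * D.T * D.s0) = D.e * D.s0 * D.x ^ 2 * (D.T * D.ks) := by ring
      _ ≤ D.e * D.s0 * (D.e ^ 2 * D.n ^ 2) * (80 * D.m3 * D.n) := by gcongr
      _ = 80 * D.e ^ 3 * (D.m3 * D.s0 * D.n ^ 3) := by ring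
      _ = 80 * D.e ^ 3 * (D.m3 * D.s0 * D.N) := by rw [D.hn]
      _ ≤ 80 * D.e ^ 3 * D.e := by gcongr
      _ ≤ 80 * (1 / 1000) ^ 3 * (1 / 1000) := by gcongr
      _ < 1 := by norm_num
  linarith

theorem learnable_loss {k : K} (hk : k ∈ D.SL) : lloss (D.mg D.T k) ≤ 1 / D.N := by
  have hn := D.two_le_n
  have hlog : 1 / 2 ≤ Real.log D.n := by
    have h1 := Real.log_two_gt_d9
    have h2 := Real.log_le_log (by norm_num) hn
    linarith
  have h1 : 3 * Real.log D.n ≤ D.mg D.T k := by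
    rw [D.hmgL D.T k hk]
    have h2 := D.le_noise (t := D.T) (k := k) D.Yl_spec.1.le (fun r i _ => D.neg_Yl_le le_rfl r i)
    have h3 := D.half_le_ga_cube (t := D.T) hk
    have h4 := D.four_log_n_le
    have h5 : 99 / 100 * (4 * Real.log D.n) ≤ D.ga D.T k ^ 3 * ∑ r, D.b D.T r ^ 3 := by
      gcongr
    linarith [D.Yl_spec.2.2.2.2]
  refine (lloss_le_exp_neg _).trans ?_
  rw [Real.exp_neg, ← one_div]
  refine one_div_le_one_div_of_le D.N_pos ?_
  rw [← D.hn]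
  calc D.n ^ 3 = Real.exp (3 * Real.log D.n) := by
        rw [← Real.log_rpow (by linarith), Real.exp_log (by positivity)]
        norm_num
    _ ≤ _ := Real.exp_le_exp.2 h1

theorem sum_loss_le (hcov : D.SL ∪ D.SU = univ) :
    ∑ k, lloss (D.mg D.T k) ≤ 1 + D.SU.card := by
  have h0 : ∀ z, 0 ≤ lloss z := fun z =>
    Real.log_nonneg (by linarith [Real.exp_pos (-z)])
  have h1 : ∑ k ∈ D.SL, lloss (D.mg D.T k) ≤ 1 := by
    calc _ ≤ ∑ k ∈ D.SL, 1 / D.N := sum_le_sum fun k hk => D.learnable_loss hk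
      _ = D.SL.card / D.N := by rw [sum_const, nsmul_eq_mul]; ring
      _ ≤ 1 := (div_le_one D.N_pos).2 D.card_SL_le
  have h2 : ∑ k ∈ D.SU, lloss (D.mg D.T k) ≤ D.SU.card := by
    calc _ ≤ ∑ k ∈ D.SU, (1 : ℝ) :=
          sum_le_sum fun k hk => lloss_le_one (D.unlearnable_margin le_rfl hk)
      _ = _ := by simp
  have h3 := sum_union_inter (s₁ := D.SL) (s₂ := D.SU) (f := fun k => lloss (D.mg D.T k))
  have h4 : 0 ≤ ∑ k ∈ D.SL ∩ D.SU, lloss (D.mg D.T k) := sum_nonneg fun k _ => h0 _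
  rw [hcov] at h3
  linarith

end NormDyn

namespace NormDyn

variable {R ι K : Type} [Fintype R] [Fintype ι] [Fintype K] [DecidableEq K]
  (D : NormDyn R ι K)

/-- Noise coefficient shifted by the normalized initial correlation. -/
def uh (t : ℕ) (r : R) (i : ι) : ℝ := D.q t r i + D.z 0 r i / D.G i i

theorem abs_z_sub_uh_le (t : ℕ) (r : R) (i : ι) :
    |D.z t r i - D.uh t r i * D.G i i| ≤ D.mu * ∑ j, D.q t r j := by
  have h1 := D.abs_z_sub_le t r i
  have h2 : D.G i i ≠ 0 := by linarith [(D.hGd i).1]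
  have h3 : D.z t r i - D.uh t r i * D.G i i = D.z t r i - D.z 0 r i - D.q t r i * D.G i i := by
    unfold uh; field_simp; ring
  rwa [h3]

theorem abs_init_shift_le (r : R) (i : ι) : |D.z 0 r i / D.G i i| ≤ 2 * D.A0 := by
  have h1 := (D.hGd i).1
  have h2 : |D.z 0 r i| ≤ D.A0 := D.hz0 r i
  rw [abs_div, abs_of_pos (by linarith : 0 < D.G i i), div_le_iff₀ (by linarith)]
  nlinarith [D.A0_pos]

theorem mu_NP_l_le : D.mu * (D.N * D.P) * D.l ≤ D.e := by
  have h1 := D.hmuS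
  have h2 := D.hm
  have h3 : D.l ≤ D.l ^ 3 := le_self_pow₀ D.one_le_l (by norm_num)
  have h0 : 0 ≤ D.mu * (D.N * D.P) := by
    have := D.hmu; have := D.N_pos; have := D.hP; positivity
  have hl := D.hl
  calc D.mu * (D.N * D.P) * D.l = D.mu * (D.N * D.P) * (1 * D.l) := by ring
    _ ≤ D.mu * (D.N * D.P) * (D.m * D.l ^ 3) := by gcongr
    _ = D.mu * D.N * D.m * D.P * D.l ^ 3 := by ring
    _ ≤ D.e := h1

theorem zeta_l_le : D.zeta * D.l ≤ D.e ^ 2 := by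
  have h1 := D.Nm_zeta_l_le
  have h2 : 1 ≤ D.N * D.m := by nlinarith [D.one_le_N, D.hm]
  have h3 : 0 ≤ D.zeta * D.l := mul_nonneg D.zeta_nonneg (by linarith [D.hl])
  nlinarith

/-- As long as every shifted coefficient of unlearnable noise is at most `u`, the interference is
at most `u / 16`. -/
theorem interference_le {t : ℕ} (ht : t ≤ D.T) {u : ℝ} (hu0 : D.s0 / 6 ≤ u) (hu1 : u ≤ 1)
    (hU : ∀ r i, D.own i ∈ D.SU → D.uh t r i ≤ u) (r : R) :
    D.mu * ∑ j, D.q t r j ≤ u / 16 := by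
  have hs0 := D.hs0
  have hl := D.hl
  have he := D.he
  have he' := D.he'
  have hupos : 0 < u := by linarith
  have hA : D.A0 ≤ 12 * D.l * u := by unfold A0; nlinarith
  have hA0 := D.A0_pos
  have hAs : D.A0 ≤ 1 := by
    have h1 := D.Yl_spec
    linarith
  have hq : ∀ r i, D.own i ∈ D.SU → D.q t r i ≤ u + 2 * D.A0 := by
    intro r i hi
    have h1 := hU r i hi
    have h2 := (abs_le.1 (D.abs_init_shift_le r i)).1
    unfold uh at h1
    linarith
  have h1 := (D.learnable_noise (t := t) (Q := u + 2 * D.A0) (by linarith) (by linarith)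
    (fun s hs r => by linarith [D.b_cap (hs.le.trans ht) r]) hq t le_rfl).2.2 r
  have hz := D.zeta_nonneg
  have hzl := D.zeta_l_le
  have hmu := D.mu_NP_l_le
  have hmu0 : 0 ≤ D.mu * (D.N * D.P) := by
    have := D.hmu; have := D.N_pos; have := D.hP; positivity
  have hmue := D.mu_NP_le
  have h2 : D.zeta * (u + 2 * D.A0) ≤ u / 100 := by
    calc D.zeta * (u + 2 * D.A0) ≤ D.zeta * (25 * D.l * u) := by gcongr; nlinarith
      _ = D.zeta * D.l * (25 * u) := by ring
      _ ≤ D.e ^ 2 * (25 * u) := by gcongr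
      _ ≤ (1 / 1000) ^ 2 * (25 * u) := by gcongr
      _ ≤ u / 100 := by linarith
  have h3 : D.mu * (D.N * D.P) * D.A0 ≤ u / 80 := by
    calc D.mu * (D.N * D.P) * D.A0 ≤ D.mu * (D.N * D.P) * (12 * D.l * u) := by gcongr
      _ = D.mu * (D.N * D.P) * D.l * (12 * u) := by ring
      _ ≤ 1 / 1000 * (12 * u) := by gcongr; linarith
      _ ≤ u / 80 := by linarith
  have h4 : D.mu * (D.N * D.P) * (D.zeta * (u + 2 * D.A0)) ≤ 1 / 1000 * (u / 100) := by
    gcongr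
    linarith
  have h5 : D.mu * (D.N * D.P) * D.Yb (u + 2 * D.A0) =
      4 * (D.mu * (D.N * D.P) * D.A0 + D.mu * (D.N * D.P) * (D.zeta * (u + 2 * D.A0))) := by
    unfold Yb; ring
  linarith

/-- Noise of some unlearnable sample is memorized. -/
theorem noise_memorized {M3 : ℝ} (hM0 : 0 < M3) (hM : M3 ^ 3 = D.m * D.P)
    (hinit : ∃ r i, D.own i ∈ D.SU ∧ D.s0 / 4 ≤ D.z 0 r i) :
    ∃ r i, D.own i ∈ D.SU ∧ 1 / (6 * M3) ≤ D.z D.T r i := by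
  classical
  obtain ⟨r0, i0, hi0, hz0⟩ := hinit
  have hmax : ∀ t, ∃ a : R × ι, D.own a.2 ∈ D.SU ∧
      ∀ r i, D.own i ∈ D.SU → D.uh t r i ≤ D.uh t a.1 a.2 := by
    intro t
    obtain ⟨a, ha, hmax⟩ := exists_max_image
      (univ.filter fun a : R × ι => D.own a.2 ∈ D.SU) (fun a => D.uh t a.1 a.2)
      ⟨(r0, i0), by simpa using hi0⟩
    exact ⟨a, (mem_filter.1 ha).2, fun r i hi => hmax (r, i) (by simpa using hi)⟩
  choose a haU hamax using hmax
  set u : ℕ → ℝ := fun t => D.uh t (a t).1 (a t).2 with hu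
  have humono : Monotone u := by
    refine monotone_nat_of_le_succ fun t => ?_
    refine le_trans ?_ (hamax (t + 1) (a t).1 (a t).2 (haU t))
    have := D.q_mono (a t).1 (a t).2 (Nat.le_succ t)
    simp only [hu, uh]
    simp only at this
    linarith
  have hs0 := D.hs0
  have hu0 : D.s0 / 6 ≤ u 0 := by
    refine le_trans ?_ (hamax 0 r0 i0 hi0)
    unfold uh
    rw [D.hq0, zero_add]
    have h1 := D.hGd i0
    rw [le_div_iff₀ (by linarith)]
    nlinarith
  have hut : ∀ t, D.s0 / 6 ≤ u t := fun t => hu0.trans (humono (Nat.zero_le t))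
  have hM1 : 1 ≤ M3 := by
    by_contra hcon
    push Not at hcon
    have h1 : M3 ^ 3 < 1 := pow_lt_one₀ hM0.le hcon (by norm_num)
    nlinarith [D.hm, D.hP]
  have hka := D.hka
  have he := D.he
  have he' := D.he'
  have hlarge : 1 / (2 * M3) < u D.T := by
    by_contra hcon
    push Not at hcon
    have hτ : 1 / (2 * M3) ≤ 1 / 2 := by
      rw [div_le_div_iff₀ (by positivity) (by norm_num)]; linarith
    have hule : ∀ t ≤ D.T, u t ≤ 1 / (2 * M3) := fun t ht => (humono ht).trans hcon
    have hkae : D.ka ≤ 1 := by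
      have h1 := D.hkaS
      have h2 : 1 ≤ D.N * D.l ^ 2 := by
        have := D.one_le_N
        have : 1 ≤ D.l ^ 2 := one_le_pow₀ D.one_le_l
        nlinarith
      nlinarith
    have hlife := lifetime_le (u := u) (c := D.ka / 25) (T := D.T) (by positivity)
      (by linarith) ?_ ?_
    · have h1 := D.hTka
      have hT := D.T_pos
      have h2 : D.ka / 25 * D.T * (D.s0 / 6) ≤ D.ka / 25 * D.T * u 0 := by gcongr
      have h3 : D.e * (D.ka * D.T * D.s0) ≤ 1 / 1000 * 300 := by
        gcongr
        linarith
      linarith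
    · intro t ht hpos
      have hle := hule t ht.le
      have hint := D.interference_le ht.le (hut t) (by linarith) (hamax t)
      have hz : 7 / 16 * u t ≤ D.z t (a t).1 (a t).2 := by
        have h1 := (abs_le.1 ((D.abs_z_sub_uh_le t (a t).1 (a t).2).trans (hint _))).1
        have h2 := (D.hGd (a t).2).1
        have h3 : u t * (1 / 2) ≤ u t * D.G (a t).2 (a t).2 := by gcongr
        have h4 : D.uh t (a t).1 (a t).2 = u t := rfl
        rw [h4] at h1
        linarith
      have hzle : ∀ r i, D.own i = D.own (a t).2 → D.z t r i ≤ 2 * u t := by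
        intro r i hi
        have h1 := (abs_le.1 ((D.abs_z_sub_uh_le t r i).trans (hint _))).2
        have h2 := D.hGd i
        have h3 := hamax t r i (hi ▸ haU t)
        have h4 : D.uh t r i * D.G i i ≤ u t * (3 / 2) := by
          calc _ ≤ u t * D.G i i := by gcongr; linarith
            _ ≤ _ := by gcongr; exact h2.2
        linarith
      have hmg : D.mg t (D.own (a t).2) ≤ 1 := by
        rw [D.hmgU t _ (haU t)]
        refine (D.noise_le (by linarith) hzle).trans ?_
        have h1 : (2 * u t) ^ 3 ≤ (1 / M3) ^ 3 := by
          gcongr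
          calc 2 * u t ≤ 2 * (1 / (2 * M3)) := by gcongr
            _ = 1 / M3 := by field_simp
        calc D.m * D.P * (2 * u t) ^ 3 ≤ D.m * D.P * (1 / M3) ^ 3 := by
              have := D.hm; have := D.hP
              gcongr
          _ = 1 := by rw [← hM]; field_simp
      refine le_trans ?_ (hamax (t + 1) (a t).1 (a t).2 (haU t))
      have h1 : D.uh (t + 1) (a t).1 (a t).2 = u t + D.ka * psi (D.mg t (D.own (a t).2)) *
          D.z t (a t).1 (a t).2 ^ 2 := by
        simp only [hu, uh, D.hq]; ring
      rw [h1]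
      have h2 := quarter_le_psi hmg
      have h3 : D.ka * (1 / 4) * (7 / 16 * u t) ^ 2 ≤
          D.ka * psi (D.mg t (D.own (a t).2)) * D.z t (a t).1 (a t).2 ^ 2 := by gcongr
      have h4 : 0 ≤ D.ka * u t ^ 2 := by positivity
      nlinarith
    · intro t ht
      have h1 := hule t ht.le
      have h2 := hut t
      nlinarith
  refine ⟨(a D.T).1, (a D.T).2, haU D.T, ?_⟩
  have h1 := (abs_le.1 ((D.abs_z_sub_uh_le D.T (a D.T).1 (a D.T).2).trans
    ((D.noise_bounds le_rfl).2 _))).1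
  have h2 := (D.hGd (a D.T).2).1
  have h3 : u D.T * (1 / 2) ≤ u D.T * D.G (a D.T).2 (a D.T).2 := by
    have := hut D.T
    gcongr
    linarith
  have h4 : D.uh D.T (a D.T).1 (a D.T).2 = u D.T := rfl
  rw [h4] at h1
  obtain ⟨hY0, -, hY, -⟩ := D.Yl_spec
  have hN := D.N_pos
  have h5 : M3 ≤ D.N := by
    have h6 := D.hmP
    have h7 : M3 ≤ M3 ^ 3 := le_self_pow₀ hM1 (by norm_num)
    have h8 : 1 ≤ D.l ^ 2 := one_le_pow₀ D.one_le_l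
    have h9 : 0 ≤ D.m * D.P := by nlinarith [D.hm, D.hP]
    nlinarith
  have h6 : M3 * D.Yl ≤ 5 * D.e := by
    calc M3 * D.Yl ≤ D.N * D.m * D.Yl := by
          gcongr
          nlinarith [D.hm]
      _ ≤ _ := hY
  have h7 : D.Yl ≤ 1 / 100 / M3 := by
    rw [le_div_iff₀ hM0]; linarith
  have h8 : 1 / (6 * M3) = 1 / 6 / M3 := by field_simp
  have h9 : 1 / (2 * M3) = 1 / 2 / M3 := by field_simp
  rw [h9] at hlarge
  rw [h8]
  have h10 : 1 / 6 / M3 + 1 / 12 / M3 = 1 / 2 / M3 * (1 / 2) := by field_simp; norm_num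
  have h11 : 1 / 100 / M3 ≤ 1 / 12 / M3 := by gcongr; norm_num
  linarith

end NormDyn

section Dot

variable {d : ℕ}

theorem dot_comm (a b : Fin d → ℝ) : dot a b = dot b a := by
  unfold dot; exact sum_congr rfl fun k _ => mul_comm _ _

theorem dot_add_left (a b c : Fin d → ℝ) : dot (a + b) c = dot a c + dot b c := by
  unfold dot; rw [← sum_add_distrib]; exact sum_congr rfl fun k _ => by simp; ring

theorem dot_smul_left (s : ℝ) (a c : Fin d → ℝ) : dot (s • a) c = s * dot a c := by
  unfold dot; rw [mul_sum]; exact sum_congr rfl fun k _ => by simp; ring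

theorem dot_add_right (a b c : Fin d → ℝ) : dot a (b + c) = dot a b + dot a c := by
  rw [dot_comm, dot_add_left, dot_comm b, dot_comm c]

theorem dot_smul_right (s : ℝ) (a c : Fin d → ℝ) : dot a (s • c) = s * dot a c := by
  rw [dot_comm, dot_smul_left, dot_comm]

theorem dot_sum_left {ι : Type*} (s : Finset ι) (f : ι → Fin d → ℝ) (c : Fin d → ℝ) :
    dot (∑ i ∈ s, f i) c = ∑ i ∈ s, dot (f i) c := by
  unfold dot; rw [sum_comm]
  exact sum_congr rfl fun k _ => by rw [Finset.sum_apply, sum_mul]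

theorem dot_e1_right (hd : 0 < d) (a : Fin d → ℝ) : dot a (e1 d hd) = a ⟨0, hd⟩ := by
  unfold dot e1; simp

end Dot

theorem phi_sub_phi_neg (z : ℝ) : phi z - phi (-z) = z ^ 3 := by
  unfold phi
  rcases le_total 0 z with h | h
  · rw [max_eq_right h, max_eq_left (by linarith)]; ring
  · rw [max_eq_left h, max_eq_right (by linarith)]; ring

theorem netOut_eq {m P d : ℕ} (w : Fin m → Fin d → ℝ) (X : Fin P → Fin d → ℝ) :
    netOut w X = ∑ r, ∑ p, dot (w r) (X p) ^ 3 := by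
  unfold netOut
  simp only [phi_sub_phi_neg]

namespace Setting

variable (S : Setting)

/-- Indices of the noise patches. -/
abbrev Idx : Type := {p : Fin S.N × Fin S.P // p.2 ≠ S.sig p.1}

theorem sum_idx (f : Fin S.N × Fin S.P → ℝ) :
    ∑ p : S.Idx, f p.1 = ∑ k, ∑ j with j ≠ S.sig k, f (k, j) := by
  rw [← sum_subtype (univ.filter fun p : Fin S.N × Fin S.P => p.2 ≠ S.sig p.1)
    (fun p => by simp) f, sum_filter, ← univ_product_univ, sum_product]
  exact sum_congr rfl fun k _ => by rw [sum_filter]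

theorem sum_idx_own (f : Fin S.N × Fin S.P → ℝ) (k : Fin S.N) :
    ∑ p : S.Idx with p.1.1 = k, f p.1 = ∑ j with j ≠ S.sig k, f (k, j) := by
  rw [sum_filter, S.sum_idx (fun x => if x.1 = k then f x else 0), sum_eq_single k]
  · simp
  · intro k' _ hk
    simp [hk]
  · simp

theorem y_sq (i : Fin S.N) : S.y i ^ 2 = 1 := by
  rcases S.hy i with h | h <;> rw [h] <;> norm_num

theorem sum_patch (f : Fin S.P → ℝ) (k : Fin S.N) :
    ∑ p, f p = f (S.sig k) + ∑ j with j ≠ S.sig k, f j := by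
  rw [← add_sum_erase univ f (mem_univ (S.sig k)), filter_ne']

/-- Relative strength of the perturbed signal. -/
def ga (t : ℕ) (i : Fin S.N) : ℝ := S.y i * dot (S.xadv t i (S.sig i)) (e1 S.d S.hd) / S.alpha

theorem xadv_learnable {t : ℕ} {i : Fin S.N} (hi : i ∈ S.SL) :
    S.xadv t i (S.sig i) = (S.y i * (S.alpha * S.ga t i)) • e1 S.d S.hd := by
  obtain ⟨c, hc⟩ := S.hadvspan t i
  have h1 : S.xadv t i (S.sig i) = ((1 + c) * (S.alpha * S.y i)) • e1 S.d S.hd := by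
    rw [sub_eq_iff_eq_add] at hc
    rw [hc, S.hsigL i hi, smul_smul, ← add_smul]
    congr 1; ring
  have h2 : dot (S.xadv t i (S.sig i)) (e1 S.d S.hd) = (1 + c) * (S.alpha * S.y i) := by
    rw [h1, dot_smul_left, dot_e1_right]; simp [e1]
  have h3 : S.y i * (S.alpha * S.ga t i) = (1 + c) * (S.alpha * S.y i) := by
    have h4 : S.y i * (S.alpha * S.ga t i) =
        S.y i ^ 2 * dot (S.xadv t i (S.sig i)) (e1 S.d S.hd) := by
      unfold ga
      have := S.halpha
      field_simp
    rw [h4, S.y_sq, one_mul, h2]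
  rw [h3, h1]

theorem dot_xadv_unlearnable {t : ℕ} {i : Fin S.N} (hi : i ∈ S.SU) (r : Fin S.m) :
    dot (S.w t r) (S.xadv t i (S.sig i)) = 0 := by
  obtain ⟨c, hc⟩ := S.hadvspan t i
  rw [sub_eq_iff_eq_add] at hc
  rw [hc, S.hsigU i hi, dot_add_right, dot_smul_right, dot_smul_right, S.hwperp]
  ring

theorem dot_xadv_learnable {t : ℕ} {i : Fin S.N} (hi : i ∈ S.SL) (r : Fin S.m) :
    dot (S.w t r) (S.xadv t i (S.sig i)) = S.y i * S.ga t i * (S.alpha * S.wsig t r) := by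
  rw [S.xadv_learnable hi, dot_smul_right, dot_e1_right]
  unfold wsig; ring

theorem marg_eq (t : ℕ) (i : Fin S.N) : S.marg t i =
    ∑ r, S.y i * dot (S.w t r) (S.xadv t i (S.sig i)) ^ 3 +
      ∑ r, ∑ p : S.Idx with p.1.1 = i, (S.y p.1.1 * dot (S.w t r) (S.x p.1.1 p.1.2)) ^ 3 := by
  unfold marg
  rw [netOut_eq, mul_sum, ← sum_add_distrib]
  refine sum_congr rfl fun r _ => ?_
  rw [S.sum_idx_own (fun p => (S.y p.1 * dot (S.w t r) (S.x p.1 p.2)) ^ 3) i,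
    S.sum_patch _ i, mul_add, mul_sum]
  congr 1
  refine sum_congr rfl fun j hj => ?_
  rw [S.hadvnoise t i j (mem_filter.1 hj).2]
  linear_combination (-(S.y i * dot (S.w t r) (S.x i j) ^ 3)) * S.y_sq i

theorem marg_learnable {t : ℕ} {i : Fin S.N} (hi : i ∈ S.SL) : S.marg t i =
    S.ga t i ^ 3 * ∑ r, (S.alpha * S.wsig t r) ^ 3 +
      ∑ r, ∑ p : S.Idx with p.1.1 = i, (S.y p.1.1 * dot (S.w t r) (S.x p.1.1 p.1.2)) ^ 3 := by
  rw [S.marg_eq, mul_sum]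
  congr 1
  refine sum_congr rfl fun r _ => ?_
  rw [S.dot_xadv_learnable hi]
  linear_combination (S.ga t i * (S.alpha * S.wsig t r)) ^ 3 * (S.y i ^ 2 + 1) * S.y_sq i

theorem marg_unlearnable {t : ℕ} {i : Fin S.N} (hi : i ∈ S.SU) : S.marg t i =
    ∑ r, ∑ p : S.Idx with p.1.1 = i, (S.y p.1.1 * dot (S.w t r) (S.x p.1.1 p.1.2)) ^ 3 := by
  rw [S.marg_eq]
  simp [S.dot_xadv_unlearnable hi]

theorem dot_step (h : S.ATDyn) (t : ℕ) (r : Fin S.m) (v : Fin S.d → ℝ) :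
    dot (S.w (t + 1) r) v = dot (S.w t r) v +
      3 * S.eta / S.N * ∑ i, psi (S.marg t i) * S.y i *
        (dot (S.w t r) (S.xadv t i (S.sig i)) ^ 2 * dot (S.xadv t i (S.sig i)) v +
          ∑ j with j ≠ S.sig i, dot (S.w t r) (S.x i j) ^ 2 * dot (S.x i j) v) := by
  rw [h t r, dot_add_left, dot_smul_left, dot_sum_left]
  congr 2
  refine sum_congr rfl fun i _ => ?_
  rw [dot_smul_left, dot_sum_left, S.sum_patch _ i, dot_smul_left]
  congr 2
  refine sum_congr rfl fun j hj => ?_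
  rw [S.hadvnoise t i j (mem_filter.1 hj).2, dot_smul_left]

theorem wsig_step (h : S.ATDyn) (t : ℕ) (r : Fin S.m) :
    S.alpha * S.wsig (t + 1) r = S.alpha * S.wsig t r + 3 * S.eta * S.alpha ^ 2 / S.N *
      (∑ i ∈ S.SL, psi (S.marg t i) * S.ga t i ^ 3) * (S.alpha * S.wsig t r) ^ 2 := by
  have h1 := S.dot_step h t r (e1 S.d S.hd)
  rw [dot_e1_right, dot_e1_right] at h1
  have h2 : ∀ i, psi (S.marg t i) * S.y i *
        (dot (S.w t r) (S.xadv t i (S.sig i)) ^ 2 * dot (S.xadv t i (S.sig i)) (e1 S.d S.hd) +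
          ∑ j with j ≠ S.sig i, dot (S.w t r) (S.x i j) ^ 2 * dot (S.x i j) (e1 S.d S.hd)) =
        if i ∈ S.SL then psi (S.marg t i) * S.ga t i ^ 3 * (S.alpha * S.wsig t r) ^ 2 * S.alpha
        else 0 := by
    intro i
    have h3 : ∑ j with j ≠ S.sig i, dot (S.w t r) (S.x i j) ^ 2 * dot (S.x i j) (e1 S.d S.hd) = 0 :=
      sum_eq_zero fun j hj => by rw [S.hnoiseU i j (mem_filter.1 hj).2, mul_zero]
    rw [h3, add_zero]
    split_ifs with hi
    · have h4 : dot (S.xadv t i (S.sig i)) (e1 S.d S.hd) = S.y i * (S.alpha * S.ga t i) := by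
        conv_lhs => rw [S.xadv_learnable hi]
        rw [dot_smul_left, dot_e1_right]; simp [e1]
      rw [h4, S.dot_xadv_learnable hi]
      linear_combination psi (S.marg t i) * S.ga t i ^ 3 * (S.alpha * S.wsig t r) ^ 2 * S.alpha *
        (S.y i ^ 2 + 1) * S.y_sq i
    · have hU : i ∈ S.SU := by
        have := mem_univ i
        rw [← S.hunion] at this
        exact (mem_union.1 this).resolve_left hi
      rw [S.dot_xadv_unlearnable hU]; ring
  rw [sum_congr rfl fun i _ => h2 i, sum_ite_mem, univ_inter, ← sum_mul, ← sum_mul] at h1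
  have h5 : S.wsig (t + 1) r = S.wsig t r + 3 * S.eta / S.N *
    ((∑ i ∈ S.SL, psi (S.marg t i) * S.ga t i ^ 3) * (S.alpha * S.wsig t r) ^ 2 * S.alpha) := h1
  rw [h5]; ring

/-- Expansion of the weights in the noise directions, tested against a vector orthogonal to the
learnable feature. -/
theorem dot_expand (h : S.ATDyn) (t : ℕ) (r : Fin S.m) (v : Fin S.d → ℝ)
    (hv : dot v (e1 S.d S.hd) = 0) :
    dot (S.w t r) v = dot (S.w 0 r) v +
      ∑ p : S.Idx, S.rho p.1.1 p.1.2 r t * (S.y p.1.1 * dot (S.x p.1.1 p.1.2) v) := by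
  induction t with
  | zero => simp [rho]
  | succ t ih =>
    rw [S.dot_step h t r v, ih, add_assoc,
      S.sum_idx (fun p => S.rho p.1 p.2 r t * (S.y p.1 * dot (S.x p.1 p.2) v)),
      S.sum_idx (fun p => S.rho p.1 p.2 r (t + 1) * (S.y p.1 * dot (S.x p.1 p.2) v)),
      mul_sum, ← sum_add_distrib]
    congr 1
    refine sum_congr rfl fun i _ => ?_
    have h3 : dot (S.w t r) (S.xadv t i (S.sig i)) ^ 2 * dot (S.xadv t i (S.sig i)) v = 0 := by
      have h4 := mem_univ i
      rw [← S.hunion] at h4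
      rcases mem_union.1 h4 with hi | hi
      · rw [S.xadv_learnable hi, dot_smul_left, dot_comm _ v, hv]; ring
      · rw [S.dot_xadv_unlearnable hi]; ring
    rw [h3, zero_add, mul_sum, mul_sum, ← sum_add_distrib]
    refine sum_congr rfl fun j _ => ?_
    simp only [rho]
    ring

end Setting

theorem le_mul_of_scaled {C e a b k : ℝ} (hC : 0 < C) (hb : 0 ≤ b) (hk : k ≤ e * C)
    (h : C * a ≤ k * b) : a ≤ e * b := by
  refine le_of_mul_le_mul_left ?_ hC
  calc C * a ≤ k * b := h
    _ ≤ e * C * b := by gcongr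
    _ = C * (e * b) := by ring

namespace Setting

variable (S : Setting)

/-- Logarithmic factor. -/
def L : ℝ := Real.log ((S.T : ℝ) * S.N * S.m * S.P / S.delta)

/-- Square root of the logarithmic factor. -/
def l : ℝ := Real.sqrt S.L

/-- Scale of the initial noise correlations. -/
def s0 : ℝ := S.sigma0 * S.sigman * Real.sqrt S.d

/-- Order of the squared norm of a noise patch. -/
def D : ℝ := S.sigman ^ 2 * S.d

/-- Noise-to-signal ratio. -/
def xr : ℝ := S.sigman * Real.sqrt S.d / S.alpha

/-- Consequences of the parameter constraints, with a small parameter `e`. -/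
structure Small (e : ℝ) : Prop where
  hl : 100 ≤ S.l
  hT : 1 ≤ S.T
  hlogT : Real.log S.T ≤ S.l ^ 2
  hmuS : 3 * S.l / Real.sqrt S.d * S.N * S.m * S.P * S.l ^ 3 ≤ e
  hs0S : S.s0 * S.N * S.m ^ 3 * S.l ^ 6 ≤ e
  hSU : (S.SU.card : ℝ) ≤ e * S.l ^ 2
  hSU1 : (1 : ℝ) ≤ S.SU.card
  hSL : (S.N : ℝ) / 2 ≤ S.SL.card
  hmP : S.m * S.P * S.l ^ 2 ≤ e * S.N
  hkaS : 3 * S.eta * S.D / S.N * S.N * S.l ^ 2 ≤ e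
  hksS : 3 * S.eta * S.alpha ^ 2 / S.N * S.N * S.l ^ 2 ≤ e
  hTka : 1 ≤ e * (3 * S.eta * S.D / S.N * S.T * S.s0)
  hx3 : S.xr ^ 3 * S.l ^ 6 ≤ e ^ 3 * S.SL.card
  hxn : S.xr * S.l ^ 2 ≤ e * (S.N : ℝ) ^ ((1 : ℝ) / 3)
  hB0S : 2 * S.l * (S.alpha * S.sigma0) * ((S.m : ℝ) ^ ((1 : ℝ) / 3)) ^ 2 ≤ e
  hlam : Real.log ((16 : ℝ) * S.N ^ 2 * S.P ^ 2 / S.delta) ≤ 2 * S.l ^ 2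
  hlogz : Real.log ((16 : ℝ) * S.N * S.m * S.P / S.delta) ≤ S.l ^ 2
  hlogb : Real.log ((16 : ℝ) * S.m / S.delta) ≤ S.l ^ 2
  hepsa : S.eps ≤ e * S.alpha
  hepsH : 30 * S.m * Real.sqrt S.P * S.l *
    (S.sigman * Real.sqrt (2 * Real.log ((16 : ℝ) * S.d * S.N * S.P / S.delta))) ≤ S.eps
  hpun : S.pun ≤ e

theorem card_add : (S.SL.card : ℝ) + S.SU.card = S.N := by
  have h := card_union_of_disjoint S.hdisj
  rw [S.hunion, card_univ, Fintype.card_fin] at h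
  exact_mod_cast h.symm

set_option maxHeartbeats 1000000 in
theorem small {C e : ℝ} (he : 0 < e) (he' : e ≤ 1 / 1000) (hC : 10000 ≤ Real.log C)
    (hCe : 9 ≤ e ^ 2 * C) (hH : S.CondH C) (hS : S.SparseRegime C) : S.Small e := by
  obtain ⟨hC1, hT, hd, halpha, hsig, heta, heps1, heps2, -, -, hP2, -⟩ := hH
  obtain ⟨hp1, hp2, hN⟩ := hS
  have hN0 : (1 : ℝ) ≤ S.N := by exact_mod_cast S.hN
  have hm0 : (1 : ℝ) ≤ S.m := by exact_mod_cast S.hm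
  have hP0 : (2 : ℝ) ≤ S.P := by exact_mod_cast hP2
  have hd0 : (1 : ℝ) ≤ S.d := by exact_mod_cast S.hd
  have ha := S.halpha
  have hsn := S.hsigman
  have hs00 := S.hsigma0
  have het := S.heta
  have hd1 := S.hdelta0
  have hd2 := S.hdelta1
  have hsd : 1 ≤ Real.sqrt S.d := Real.one_le_sqrt.2 hd0
  have hsd2 : Real.sqrt S.d ^ 2 = S.d := Real.sq_sqrt (by linarith)
  have hC0 : 0 < C := by linarith
  have hCe1 : 9000 ≤ e * C := by nlinarith only [hCe, he', he, mul_pos he hC0]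
  have hCbig : 9000000 ≤ C := by nlinarith only [hCe1, he', he, hC0]
  have hden : 0 < S.eta * S.sigma0 * S.sigman ^ 3 * ((S.d : ℝ) * Real.sqrt S.d) := by positivity
  have hTpos : (0 : ℝ) < S.T := lt_of_lt_of_le (by positivity) hT
  have hTnat : 1 ≤ S.T := by exact_mod_cast hTpos
  have hT1 : (1 : ℝ) ≤ S.T := by exact_mod_cast hTnat
  -- logarithms
  have hinv : 1 ≤ 1 / S.delta := by rw [le_div_iff₀ hd1]; linarith
  have hLdef : S.L = Real.log ((S.T : ℝ) * S.N * S.m * S.P / S.delta) := rfl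
  set Ld := Real.log ((S.T : ℝ) * S.d * S.N * S.m * S.P / S.delta) with hLd
  set Le := Real.log ((S.T : ℝ) * S.d * S.N * S.P / S.delta) with hLe
  rw [← hLdef] at hd halpha heta
  have hLLd : S.L ≤ Ld := by
    rw [hLdef, hLd]
    refine Real.log_le_log (by positivity) ?_
    have h1 : (S.T : ℝ) * 1 ≤ S.T * S.d := by gcongr
    gcongr
    linarith only [h1]
  have hLd2 : 1 / 2 ≤ Ld := by
    have h1 : Real.log 2 ≤ Ld := by
      refine Real.log_le_log (by norm_num) ?_
      calc (2 : ℝ) = 1 * 1 * 1 * 1 * 2 * 1 := by norm_num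
        _ ≤ (S.T : ℝ) * S.d * S.N * S.m * S.P * (1 / S.delta) := by gcongr
        _ = _ := by ring
    linarith [Real.log_two_gt_d9]
  have hNC : C ≤ S.N := by
    refine le_trans ?_ hN
    calc C = C * 1 * 2 * (1 / 2) := by ring
      _ ≤ C * S.m * S.P * Ld := by gcongr
  have hLN : Real.log S.N ≤ S.L := by
    rw [hLdef]
    refine Real.log_le_log (by linarith) ?_
    calc (S.N : ℝ) = 1 * S.N * 1 * 1 * 1 := by ring
      _ ≤ (S.T : ℝ) * S.N * S.m * S.P * (1 / S.delta) := by gcongr; linarith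
      _ = _ := by ring
  have hL4 : 10000 ≤ S.L := by
    refine le_trans ?_ hLN
    exact hC.trans (Real.log_le_log hC0 hNC)
  have hl2 : S.l ^ 2 = S.L := Real.sq_sqrt (by linarith)
  have hl0 : 0 ≤ S.l := Real.sqrt_nonneg _
  have hl : 100 ≤ S.l := by nlinarith only [hl2, hL4, hl0]
  have hlL : S.l ≤ S.L := by nlinarith only [hl2, hl]
  -- scale of the initialization
  have hs1 : C * Ld * S.sigma0 ≤
      1 / (S.sigman * S.m ^ 2 * Real.sqrt S.P * S.d) ∧
      C * Ld * S.sigma0 ≤ 1 / (S.alpha * (S.m : ℝ) ^ ((2 : ℝ) / 3)) := by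
    rw [le_div_iff₀ (by linarith)] at hsig
    have h1 := mul_le_mul_of_nonneg_left hsig hC0.le
    rw [← mul_assoc C C⁻¹, mul_inv_cancel₀ hC0.ne', one_mul] at h1
    have h2 : C * Ld * S.sigma0 = C * (S.sigma0 * Ld) := by ring
    rw [h2]
    exact ⟨h1.trans (min_le_right _ _), h1.trans ((min_le_left _ _).trans (min_le_right _ _))⟩
  have hsP : 1 ≤ Real.sqrt S.P := Real.one_le_sqrt.2 (by linarith)
  have hs0 : 0 < S.s0 := by unfold s0; positivity
  have hs0le : C * Ld * S.s0 * (S.m ^ 2 * Real.sqrt S.d) ≤ 1 := by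
    have h1 := hs1.1
    rw [le_div_iff₀ (by positivity)] at h1
    calc C * Ld * S.s0 * (S.m ^ 2 * Real.sqrt S.d)
        = C * Ld * S.sigma0 * (S.sigman * S.m ^ 2 * 1 * Real.sqrt S.d ^ 2) := by unfold s0; ring
      _ ≤ C * Ld * S.sigma0 * (S.sigman * S.m ^ 2 * Real.sqrt S.P * Real.sqrt S.d ^ 2) := by
          gcongr
      _ ≤ 1 := by rw [hsd2]; exact h1
  -- learning rate
  have he1 : C * S.L * (S.eta * S.D) ≤ 1 ∧ C * S.L * (S.eta * S.alpha ^ 2) ≤ 1 := by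
    rw [le_div_iff₀ (by linarith)] at heta
    have h1 := mul_le_mul_of_nonneg_left heta hC0.le
    rw [← mul_assoc C C⁻¹, mul_inv_cancel₀ hC0.ne', one_mul] at h1
    have h2 := h1.trans ((min_le_left _ _).trans (min_le_right _ _))
    have h3 := h1.trans (min_le_right _ _)
    rw [le_div_iff₀ (by positivity)] at h2 h3
    unfold D
    constructor <;> linarith
  have hDpos : 0 < S.D := by unfold D; positivity
  -- horizon
  have hden2 : S.eta * S.sigma0 * S.sigman ^ 3 * ((S.d : ℝ) * Real.sqrt S.d) =
      S.eta * S.D * S.s0 := by unfold D s0; ring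
  rw [hden2] at hT
  have hdpos : 0 < S.eta * S.D * S.s0 := by positivity
  rw [div_le_iff₀ hdpos] at hT
  have hetaD : S.eta * S.D ≤ 1 := by
    have h3 : 1 ≤ C * S.L := by nlinarith only [hCbig, hL4]
    have h2 : 0 < S.eta * S.D := by positivity
    have h1 := he1.1
    nlinarith only [h1, h2, h3]
  have hs0d : S.s0 * Real.sqrt S.d ≤ 1 := by
    refine le_trans ?_ hs0le
    have h1 : 1 ≤ C * Ld := by nlinarith only [hCbig, hLd2]
    have h2 : (1 : ℝ) ≤ S.m ^ 2 := one_le_pow₀ hm0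
    calc S.s0 * Real.sqrt S.d = 1 * S.s0 * (1 * Real.sqrt S.d) := by ring
      _ ≤ _ := by gcongr
  have hTd : C * Real.sqrt S.d ≤ S.T := by
    calc C * Real.sqrt S.d ≤ C * S.N * Real.sqrt S.d := by
          have : C * 1 ≤ C * S.N := by gcongr
          gcongr; linarith
      _ ≤ S.T * (S.eta * S.D * S.s0) * Real.sqrt S.d := by gcongr
      _ = S.T * ((S.eta * S.D) * (S.s0 * Real.sqrt S.d)) := by ring
      _ ≤ S.T * (1 * 1) := by gcongr
      _ = _ := by ring
  have hCT : C * 1 ≤ C * Real.sqrt S.d := by gcongr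
  have hT16 : (16 : ℝ) ≤ S.T := by linarith only [hCT, hTd, hCbig]
  have hlogT : Real.log S.T ≤ S.L := by
    rw [hLdef]
    refine Real.log_le_log (by linarith) ?_
    calc (S.T : ℝ) = S.T * 1 * 1 * 1 * 1 := by ring
      _ ≤ (S.T : ℝ) * S.N * S.m * S.P * (1 / S.delta) := by gcongr; linarith
      _ = _ := by ring
  have hlogd : Real.log S.d ≤ 2 * S.L := by
    have h1 : Real.log (Real.sqrt S.d) ≤ Real.log S.T :=
      Real.log_le_log (by linarith) (by nlinarith only [hTd, hCbig, hsd])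
    rw [Real.log_sqrt (by linarith)] at h1
    linarith
  -- unlearnable fraction
  have hSUC : C ≤ S.SU.card := by
    unfold pun at hp1
    rwa [div_le_div_iff_of_pos_right (by linarith)] at hp1
  have hSUL : C * S.SU.card ≤ 2 * S.L := by
    unfold pun at hp2
    rw [div_le_div_iff_of_pos_right (by linarith)] at hp2
    have h1 := mul_le_mul_of_nonneg_left hp2 hC0.le
    rw [← mul_assoc C C⁻¹, mul_inv_cancel₀ hC0.ne', one_mul] at h1
    linarith
  have hNL : C * (S.m * S.P * S.L) ≤ S.N := by
    refine le_trans ?_ hN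
    have : C * S.m * S.P * S.L ≤ C * S.m * S.P * Ld := by gcongr
    linarith
  have hLN2 : C * (2 * S.L) ≤ S.N := by
    refine le_trans ?_ hNL
    have : (1 * 2 : ℝ) * S.L ≤ S.m * S.P * S.L := by gcongr
    exact mul_le_mul_of_nonneg_left (by linarith only [this]) hC0.le
  have hSUN : (S.SU.card : ℝ) ≤ e * S.N := by
    refine le_mul_of_scaled hC0 (by linarith only [hN0]) (show 1 ≤ e * C by linarith only [hCe1]) ?_
    have h1 : (1 : ℝ) * S.SU.card ≤ C * S.SU.card := by gcongr
    have h2 : C * S.SU.card ≤ C * (2 * S.L) := by gcongr; linarith only [h1, hSUL]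
    linarith only [h2, hLN2]
  have hcard := S.card_add
  have hSL : (S.N : ℝ) / 2 ≤ S.SL.card := by nlinarith only [hSUN, hcard, he', hN0]
  have hSLpos : (0 : ℝ) < S.SL.card := by linarith
  -- dimension
  have hdim : 3 * (S.m * S.P * S.N * S.L ^ 2) ≤ e * Real.sqrt S.d := by
    have h1 : (3 * (S.m * S.P * S.N * S.L ^ 2)) ^ 2 ≤ (e * Real.sqrt S.d) ^ 2 := by
      calc (3 * (S.m * S.P * S.N * S.L ^ 2)) ^ 2
          = 9 * (S.m ^ 2 * S.P ^ 2 * S.N ^ 2 * S.L ^ 4) := by ring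
        _ ≤ (e ^ 2 * C) * (S.m ^ 2 * S.P ^ 2 * S.N ^ 2 * S.L ^ 4) := by gcongr
        _ = e ^ 2 * (C * S.m ^ 2 * S.P ^ 2 * S.N ^ 2 * S.L ^ 4) := by ring
        _ ≤ e ^ 2 * S.d := by gcongr
        _ = _ := by rw [mul_pow, hsd2]
    exact le_of_sq_le_sq h1 (by positivity)
  have hl4 : S.l ^ 4 = S.L ^ 2 := by rw [← hl2]; ring
  have hl6 : S.l ^ 6 = S.L ^ 3 := by rw [← hl2]; ring
  -- signal strength
  have hrootdef : ((S.N : ℝ) * (1 - S.pun)) = S.SL.card := by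
    unfold pun; field_simp; linarith
  rw [hrootdef] at halpha
  have hroot : ((S.SL.card : ℝ) ^ ((1 : ℝ) / 3)) ^ 3 = S.SL.card := by
    rw [← Real.rpow_natCast, ← Real.rpow_mul hSLpos.le]; norm_num
  have hrootN : (S.SL.card : ℝ) ^ ((1 : ℝ) / 3) ≤ (S.N : ℝ) ^ ((1 : ℝ) / 3) := by
    refine Real.rpow_le_rpow hSLpos.le ?_ (by norm_num)
    have : (0 : ℝ) ≤ S.SU.card := by positivity
    linarith
  have hroot0 : 0 < (S.SL.card : ℝ) ^ ((1 : ℝ) / 3) := by positivity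
  set ρ := (S.SL.card : ℝ) ^ ((1 : ℝ) / 3) with hρ
  have hx0 : 0 < S.xr := by unfold xr; positivity
  have hxL : S.xr * S.L ≤ e * ρ := by
    rw [div_le_iff₀ hroot0] at halpha
    have h1 : C * (S.xr * S.L) ≤ ρ := by
      unfold xr
      rw [div_mul_eq_mul_div, ← mul_div_assoc, div_le_iff₀ ha]
      linarith
    exact le_mul_of_scaled hC0 hroot0.le (show 1 ≤ e * C by linarith only [hCe1])
      (by linarith only [h1])
  have hpunle : S.pun ≤ e := by
    unfold pun; rw [div_le_iff₀ (by linarith)]; exact hSUN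
  refine ⟨hl, hTnat, by rw [hl2]; exact hlogT, ?_, ?_, ?_, by linarith, hSL, ?_, ?_, ?_, ?_,
    ?_, ?_, ?_, ?_, ?_, ?_, ?_, ?_, hpunle⟩
  · have h1 : 3 * S.l / Real.sqrt S.d * S.N * S.m * S.P * S.l ^ 3 =
      3 * (S.m * S.P * S.N * S.l ^ 4) / Real.sqrt S.d := by ring
    rw [h1, hl4, div_le_iff₀ (by linarith)]
    exact hdim
  · rw [hl6]
    have h1 : 3 * (S.N * S.m * S.L ^ 2) ≤ e * Real.sqrt S.d := by
      refine le_trans ?_ hdim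
      have : (S.m * 1 * S.N * S.L ^ 2) ≤ S.m * S.P * S.N * S.L ^ 2 := by gcongr; linarith
      linarith
    calc S.s0 * S.N * S.m ^ 3 * S.L ^ 3
        = (S.N * S.m * S.L ^ 2) * (S.L * S.s0 * S.m ^ 2) := by ring
      _ ≤ (e * Real.sqrt S.d) * (S.L * S.s0 * S.m ^ 2) := by
          have h2 : 0 < S.N * S.m * S.L ^ 2 := by positivity
          exact mul_le_mul_of_nonneg_right (by linarith only [h1, h2]) (by positivity)
      _ = e * (1 * S.L * S.s0 * (S.m ^ 2 * Real.sqrt S.d)) := by ring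
      _ ≤ e * (C * Ld * S.s0 * (S.m ^ 2 * Real.sqrt S.d)) := by gcongr
      _ ≤ e * 1 := by gcongr
      _ = e := mul_one e
  · rw [hl2]
    exact le_mul_of_scaled hC0 (by linarith only [hL4]) (by linarith only [hCe1]) hSUL
  · rw [hl2]
    exact le_mul_of_scaled hC0 (by linarith only [hN0]) (show 1 ≤ e * C by linarith only [hCe1])
      (by linarith only [hNL])
  · have h1 : 3 * S.eta * S.D / S.N * S.N * S.l ^ 2 = 3 * (S.L * (S.eta * S.D)) := by
      rw [hl2]; field_simp
    rw [h1]
    have h2 := he1.1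
    have h3 := le_mul_of_scaled (a := 3 * (S.L * (S.eta * S.D))) hC0 zero_le_one
      (show 3 ≤ e * C by linarith only [hCe1]) (by linarith only [h2])
    linarith only [h3]
  · have h1 : 3 * S.eta * S.alpha ^ 2 / S.N * S.N * S.l ^ 2 =
        3 * (S.L * (S.eta * S.alpha ^ 2)) := by
      rw [hl2]; field_simp
    rw [h1]
    have h2 := he1.2
    have h3 := le_mul_of_scaled (a := 3 * (S.L * (S.eta * S.alpha ^ 2))) hC0 zero_le_one
      (show 3 ≤ e * C by linarith only [hCe1]) (by linarith only [h2])
    linarith only [h3]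
  · have h1 : 3 * S.eta * S.D / S.N * S.T * S.s0 = 3 * (S.T * (S.eta * S.D * S.s0)) / S.N := by ring
    rw [h1]
    have h2 : C ≤ 3 * (S.T * (S.eta * S.D * S.s0)) / S.N := by
      rw [le_div_iff₀ (by linarith)]
      linarith only [hT, hdpos, mul_pos hTpos hdpos]
    exact le_trans (by linarith only [hCe1]) (mul_le_mul_of_nonneg_left h2 he.le)
  · rw [hl6, ← mul_pow, ← hroot, ← mul_pow]
    exact pow_le_pow_left₀ (by positivity) hxL 3
  · rw [hl2]
    exact hxL.trans (by gcongr)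
  · have h1 := hs1.2
    have h2 : ((S.m : ℝ) ^ ((1 : ℝ) / 3)) ^ 2 = (S.m : ℝ) ^ ((2 : ℝ) / 3) := by
      rw [← Real.rpow_natCast, ← Real.rpow_mul (by positivity)]; norm_num
    rw [h2]
    rw [le_div_iff₀ (by positivity)] at h1
    set μ := (S.m : ℝ) ^ ((2 : ℝ) / 3)
    have h3 : 0 ≤ S.alpha * S.sigma0 * μ := by positivity
    have h4 : C * (Ld * (S.alpha * S.sigma0 * μ)) ≤ 1 := by linarith
    have h5 : 2 * S.l * (S.alpha * S.sigma0) * μ ≤ 2 * (Ld * (S.alpha * S.sigma0 * μ)) := by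
      have : S.l * (S.alpha * S.sigma0 * μ) ≤ Ld * (S.alpha * S.sigma0 * μ) := by
        gcongr; linarith
      linarith
    have h6 := le_mul_of_scaled (a := 2 * (Ld * (S.alpha * S.sigma0 * μ))) hC0 zero_le_one
      (show 2 ≤ e * C by linarith only [hCe1]) (by linarith only [h4])
    linarith only [h5, h6]
  · rw [hl2, hLdef]
    have h1 : 2 * Real.log ((S.T : ℝ) * S.N * S.m * S.P / S.delta) =
        Real.log (((S.T : ℝ) * S.N * S.m * S.P / S.delta) ^ 2) := by
      rw [Real.log_pow]; norm_num
    rw [h1]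
    refine Real.log_le_log (by positivity) ?_
    calc (16 : ℝ) * S.N ^ 2 * S.P ^ 2 / S.delta
        = 4 ^ 2 * S.N ^ 2 * 1 ^ 2 * S.P ^ 2 * (1 / S.delta * 1) := by ring
      _ ≤ (S.T : ℝ) ^ 2 * S.N ^ 2 * S.m ^ 2 * S.P ^ 2 * (1 / S.delta * (1 / S.delta)) := by
          gcongr; linarith
      _ = _ := by ring
  · rw [hl2, hLdef]
    refine Real.log_le_log (by positivity) ?_
    gcongr
  · rw [hl2, hLdef]
    refine Real.log_le_log (by positivity) ?_
    calc (16 : ℝ) * S.m / S.delta = 16 * 1 * S.m * 1 / S.delta := by ring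
      _ ≤ _ := by gcongr; linarith
  · have h1 : S.eps * C ≤ S.alpha := by
      have h2 : S.eps < C⁻¹ * S.alpha :=
        lt_of_lt_of_le heps2 (mul_le_mul_of_nonneg_left (min_le_left _ _) (by positivity))
      have := (mul_lt_mul_of_pos_right h2 hC0).le
      rwa [mul_right_comm, inv_mul_cancel₀ hC0.ne', one_mul] at this
    exact le_mul_of_scaled hC0 ha.le (show 1 ≤ e * C by linarith only [hCe1])
      (by linarith only [h1])
  · refine le_trans ?_ heps1
    have hNm : (S.m : ℝ) ≤ S.N := by
      refine le_trans ?_ hNL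
      calc (S.m : ℝ) = 1 * (S.m * 1 * 1) := by ring
        _ ≤ C * (S.m * S.P * S.L) := by gcongr <;> linarith
    have hLLe : S.L ≤ 2 * Le := by
      have h1 : 2 * Le = Real.log (((S.T : ℝ) * S.d * S.N * S.P / S.delta) ^ 2) := by
        rw [Real.log_pow]; norm_num; exact hLe
      rw [h1, hLdef]
      refine Real.log_le_log (by positivity) ?_
      calc (S.T : ℝ) * S.N * S.m * S.P / S.delta
          = (S.T * 1) * 1 ^ 2 * (S.N * S.m) * (S.P * 1) * (1 / S.delta * 1) := by ring
        _ ≤ (S.T * S.T) * S.d ^ 2 * (S.N * S.N) * (S.P * S.P) * (1 / S.delta * (1 / S.delta)) := by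
            gcongr; linarith
        _ = _ := by ring
    have hLe0 : 0 ≤ Le := by linarith
    have hlog16 : Real.log ((16 : ℝ) * S.d * S.N * S.P / S.delta) ≤ Le := by
      refine Real.log_le_log (by positivity) ?_
      gcongr
    have h1 : Real.sqrt (2 * Real.log ((16 : ℝ) * S.d * S.N * S.P / S.delta)) ≤
        Real.sqrt (2 * Le) := Real.sqrt_le_sqrt (by linarith)
    have h2 : S.l ≤ Real.sqrt (2 * Le) := Real.sqrt_le_sqrt hLLe
    have h3 : Real.sqrt (2 * Le) * Real.sqrt (2 * Le) = 2 * Le := Real.mul_self_sqrt (by linarith)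
    calc _ ≤ 30 * S.m * Real.sqrt S.P * Real.sqrt (2 * Le) *
          (S.sigman * Real.sqrt (2 * Le)) := by gcongr
      _ = 30 * S.m * Real.sqrt S.P * S.sigman * (Real.sqrt (2 * Le) * Real.sqrt (2 * Le)) := by
          ring
      _ = 60 * S.sigman * S.m * Real.sqrt S.P * Le := by rw [h3]; ring
      _ ≤ C * S.sigman * S.m * Real.sqrt S.P * Le := by gcongr; linarith

end Setting

namespace Setting

variable (S : Setting)

theorem D_pos : 0 < S.D := by
  have := S.hsigman
  have : (0 : ℝ) < S.d := by exact_mod_cast S.hd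
  unfold D; positivity

theorem abs_y (i : Fin S.N) : |S.y i| = 1 := by
  rcases S.hy i with h | h <;> rw [h] <;> norm_num

theorem sqrt_d_pos : 0 < Real.sqrt S.d := Real.sqrt_pos.2 (by exact_mod_cast S.hd)

theorem D_eq : S.D = S.sigman ^ 2 * Real.sqrt S.d ^ 2 := by
  rw [Real.sq_sqrt (Nat.cast_nonneg _)]; rfl

theorem s0_pos : 0 < S.s0 := by
  have := S.hsigman; have := S.hsigma0; have := S.sqrt_d_pos
  unfold s0; positivity

theorem xr_pos : 0 < S.xr := by
  have := S.hsigman; have := S.halpha; have := S.sqrt_d_pos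
  unfold xr; positivity

/-- Normalized signed Gram matrix of the noise patches. -/
def gram (p p' : S.Idx) : ℝ :=
  S.y p.1.1 * S.y p'.1.1 * dot (S.x p.1.1 p.1.2) (S.x p'.1.1 p'.1.2) / S.D

variable {S} {e : ℝ}

theorem gram_diag (hE : S.EventE) (p : S.Idx) : 1 / 2 ≤ S.gram p p ∧ S.gram p p ≤ 3 / 2 := by
  have h1 := hE.1 p.1.1 p.1.2 p.2
  have h2 : S.gram p p = sqnorm (S.x p.1.1 p.1.2) / S.D := by
    unfold gram sqnorm
    rw [← pow_two, S.y_sq, one_mul]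
  have hD := S.D_pos
  have hD' : S.D = S.sigman ^ 2 * S.d := rfl
  rw [h2, le_div_iff₀ hD, div_le_iff₀ hD]
  constructor <;> linarith [h1.1, h1.2]

theorem gram_off (hE : S.EventE) (hs : S.Small e) (p p' : S.Idx) (hp : p ≠ p') :
    |S.gram p p'| ≤ 3 * S.l / Real.sqrt S.d := by
  have h1 := hE.2.1 p.1.1 p'.1.1 p.1.2 p'.1.2 p.2 p'.2 (fun h => hp (Subtype.ext h))
  have hd := S.sqrt_d_pos
  have hl := hs.hl
  have h2 : Real.sqrt ((S.d : ℝ) * Real.log ((16 : ℝ) * S.N ^ 2 * S.P ^ 2 / S.delta)) ≤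
      Real.sqrt S.d * (3 / 2 * S.l) := by
    rw [Real.sqrt_mul (Nat.cast_nonneg _)]
    gcongr
    refine Real.sqrt_le_iff.2 ⟨by positivity, hs.hlam.trans ?_⟩
    nlinarith
  unfold gram
  rw [abs_div, abs_mul, abs_mul, S.abs_y, S.abs_y, one_mul, one_mul, abs_of_pos S.D_pos,
    div_le_iff₀ S.D_pos, S.D_eq]
  refine h1.trans ?_
  calc _ ≤ 2 * S.sigman ^ 2 * (Real.sqrt S.d * (3 / 2 * S.l)) := by gcongr
    _ = _ := by field_simp

theorem abs_init_noise_le (hE : S.EventE) (hs : S.Small e) (r : Fin S.m) (p : S.Idx) :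
    |S.y p.1.1 * dot (S.w 0 r) (S.x p.1.1 p.1.2)| ≤ 2 * S.l * S.s0 := by
  have h1 := hE.2.2.2.2.2.1 r p.1.1 p.1.2 p.2
  have hl := hs.hl
  have hsn := S.hsigman
  have hs0 := S.hsigma0
  have h2 : Real.sqrt ((S.d : ℝ) * Real.log ((16 : ℝ) * S.N * S.m * S.P / S.delta)) ≤
      Real.sqrt S.d * S.l := by
    rw [Real.sqrt_mul (Nat.cast_nonneg _)]
    gcongr
    exact Real.sqrt_le_iff.2 ⟨by positivity, hs.hlogz⟩
  rw [abs_mul, S.abs_y, one_mul]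
  refine h1.trans ?_
  calc _ ≤ 2 * S.sigma0 * S.sigman * (Real.sqrt S.d * S.l) := by gcongr
    _ = _ := by unfold s0; ring

theorem abs_init_signal_le (hE : S.EventE) (hs : S.Small e) (r : Fin S.m) :
    |S.alpha * S.wsig 0 r| ≤ 2 * S.l * (S.alpha * S.sigma0) := by
  have h1 := hE.2.2.2.2.1 r
  rw [dot_e1_right] at h1
  have hl := hs.hl
  have ha := S.halpha
  have hs0 := S.hsigma0
  have h2 : Real.sqrt (2 * Real.log ((16 : ℝ) * S.m / S.delta)) ≤ 2 * S.l := by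
    refine Real.sqrt_le_iff.2 ⟨by positivity, ?_⟩
    nlinarith [hs.hlogb]
  rw [abs_mul, abs_of_pos ha]
  calc S.alpha * |S.wsig 0 r| ≤ S.alpha * (S.sigma0 * (2 * S.l)) := by
        refine mul_le_mul_of_nonneg_left (h1.trans ?_) ha.le
        gcongr
    _ = _ := by ring

theorem exists_init_signal (hE : S.EventE) : ∃ r, S.s0 / (2 * S.xr) ≤ S.alpha * S.wsig 0 r := by
  obtain ⟨r, hr⟩ := hE.2.2.2.2.2.2.1
  rw [dot_e1_right] at hr
  refine ⟨r, ?_⟩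
  have ha := S.halpha
  have hsn := S.hsigman
  have hd := S.sqrt_d_pos
  have h1 : S.s0 / (2 * S.xr) = S.alpha * (S.sigma0 / 2) := by
    unfold s0 xr; field_simp
  rw [h1]
  exact mul_le_mul_of_nonneg_left hr ha.le

theorem ga_bounds (hs : S.Small e) (t : ℕ) (k : Fin S.N) (hk : k ∈ S.SL) :
    1 - e ≤ S.ga t k ∧ S.ga t k ≤ 1 := by
  have h1 := S.hadvlearn t k hk
  have ha := S.halpha
  unfold ga
  rw [le_div_iff₀ ha, div_le_one ha]
  exact ⟨by linarith [h1.1, hs.hepsa], h1.2⟩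

theorem noise_expand (h : S.ATDyn) (t : ℕ) (r : Fin S.m) (p : S.Idx) :
    S.y p.1.1 * dot (S.w t r) (S.x p.1.1 p.1.2) =
      S.y p.1.1 * dot (S.w 0 r) (S.x p.1.1 p.1.2) +
        ∑ p' : S.Idx, S.D * S.rho p'.1.1 p'.1.2 r t * S.gram p p' := by
  rw [S.dot_expand h t r _ (S.hnoiseU _ _ p.2), mul_add, mul_sum]
  congr 1
  refine sum_congr rfl fun p' _ => ?_
  have := S.D_pos
  rw [dot_comm (S.x p'.1.1 p'.1.2)]
  unfold gram
  field_simp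

theorem fiber_card (k : Fin S.N) :
    ((univ.filter fun p : S.Idx => p.1.1 = k).card : ℝ) ≤ S.P := by
  have h := S.sum_idx_own (fun _ => 1) k
  simp only [sum_const, nsmul_eq_mul, mul_one] at h
  rw [h]
  calc _ ≤ ((univ : Finset (Fin S.P)).card : ℝ) := by exact_mod_cast card_filter_le _ _
    _ = S.P := by simp

theorem cube_root_cube {a : ℝ} (ha : 0 ≤ a) : (a ^ ((1 : ℝ) / 3)) ^ 3 = a := by
  rw [← Real.rpow_natCast, ← Real.rpow_mul ha]; norm_num

/-- The training dynamics of a setting in normalized coordinates. -/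
def toNormDyn (h : S.ATDyn) (hE : S.EventE) (hs : S.Small e) (he : 0 < e) (he' : e ≤ 1 / 1000) :
    NormDyn (Fin S.m) S.Idx (Fin S.N) where
  SL := S.SL
  SU := S.SU
  own p := p.1.1
  N := S.N
  m := S.m
  P := S.P
  l := S.l
  e := e
  s0 := S.s0
  mu := 3 * S.l / Real.sqrt S.d
  ka := 3 * S.eta * S.D / S.N
  ks := 3 * S.eta * S.alpha ^ 2 / S.N
  x := S.xr
  n := (S.N : ℝ) ^ ((1 : ℝ) / 3)
  m3 := (S.m : ℝ) ^ ((1 : ℝ) / 3)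
  B0 := 2 * S.l * (S.alpha * S.sigma0)
  T := S.T
  b t r := S.alpha * S.wsig t r
  q t r p := S.D * S.rho p.1.1 p.1.2 r t
  z t r p := S.y p.1.1 * dot (S.w t r) (S.x p.1.1 p.1.2)
  mg := S.marg
  ga := S.ga
  G := S.gram
  hcover k := by
    have := mem_univ k
    rwa [← S.hunion, mem_union] at this
  hmgL t k hk := S.marg_learnable hk
  hmgU t k hk := S.marg_unlearnable hk
  hz := noise_expand h
  hq0 r p := by simp [rho]
  hq t r p := by
    rw [mul_pow, S.y_sq, one_mul]
    simp only [rho]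
    ring
  hb t r := S.wsig_step h t r
  hGd := gram_diag hE
  hGo := gram_off hE hs
  hga := ga_bounds hs
  hR := by simp
  hfib := fiber_card
  hK := S.card_add
  hSL := hs.hSL
  hm := by exact_mod_cast S.hm
  hP := by exact_mod_cast S.hP
  hl := hs.hl
  he := he
  he' := he'
  hs0 := S.s0_pos
  hmu := by have := hs.hl; positivity
  hka := by
    have := S.D_pos
    have := S.heta
    have : (0 : ℝ) < S.N := by exact_mod_cast S.hN
    positivity
  hks := by
    have := S.halpha
    have := S.heta
    have : (0 : ℝ) < S.N := by exact_mod_cast S.hN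
    positivity
  hx := S.xr_pos
  hn := cube_root_cube (Nat.cast_nonneg _)
  hm3 := cube_root_cube (Nat.cast_nonneg _)
  hm31 := Real.one_le_rpow (by exact_mod_cast S.hm) (by norm_num)
  hT := hs.hT
  hlogT := hs.hlogT
  hkx := by
    have := S.halpha
    rw [S.D_eq]; unfold xr; field_simp
  hmuS := hs.hmuS
  hs0S := hs.hs0S
  hSU := hs.hSU
  hmP := hs.hmP
  hkaS := hs.hkaS
  hksS := hs.hksS
  hTka := hs.hTka
  hx3 := hs.hx3
  hxn := hs.hxn
  hB0 := abs_init_signal_le hE hs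
  hB0S := hs.hB0S
  hb0 := exists_init_signal hE
  hz0 := abs_init_noise_le hE hs

end Setting

theorem cube_le_sq_of_abs_le_one {a y : ℝ} (hy : |y| = 1) (ha : a ^ 2 ≤ 1) : y * a ^ 3 ≤ a ^ 2 := by
  have h1 : |y * a| ≤ 1 := by
    rw [abs_mul, hy, one_mul]; exact abs_le_one_iff_mul_self_le_one.2 (by linarith [pow_two a])
  have h2 := (abs_le.1 h1).2
  nlinarith [sq_nonneg a, mul_nonneg (sq_nonneg a) (sub_nonneg.2 h2)]

/-- Perturbing one noise patch along a memorized direction flips the prediction. -/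
theorem attack_succeeds {m P d : ℕ} (hd : 0 < d) (w : Fin m → Fin d → ℝ) (ξ : Fin P → Fin d → ℝ)
    {s p₀ : Fin P} (hne : p₀ ≠ s) {y α β V : ℝ} (hy : y = 1 ∨ y = -1) (v : Fin d → ℝ)
    (hb : ∀ r, α * w r ⟨0, hd⟩ ≤ β) (hv : ∀ r, -1 ≤ dot (w r) v) (r₀ : Fin m) (hV : 2 ≤ V)
    (hr₀ : V ≤ dot (w r₀) v) (hbig : m * β ^ 3 + 1 + 8 * m < V ^ 3 / 8)
    (hξ : ∑ r, ∑ p, dot (w r) (ξ p) ^ 2 < 1) :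
    y * netOut w (fun p => Function.update ξ s ((α * y) • e1 d hd) p +
      (if p = p₀ then (-y) • v else 0)) < 0 := by
  have hyabs : |y| = 1 := by rcases hy with h | h <;> rw [h] <;> norm_num
  have hy2 : y ^ 2 = 1 := by rcases hy with h | h <;> rw [h] <;> norm_num
  have hle : ∀ r p, dot (w r) (ξ p) ^ 2 ≤ 1 := fun r p => by
    have h1 := single_le_sum (f := fun p => dot (w r) (ξ p) ^ 2) (fun _ _ => sq_nonneg _)
      (mem_univ p)
    have h2 := single_le_sum (f := fun r => ∑ p, dot (w r) (ξ p) ^ 2)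
      (fun _ _ => sum_nonneg fun _ _ => sq_nonneg _) (mem_univ r)
    exact (h1.trans h2).trans hξ.le
  have hlow : ∀ r, -1 ≤ y * dot (w r) (ξ p₀) ∧ y * dot (w r) (ξ p₀) ≤ 1 := fun r => by
    refine abs_le.1 ?_
    rw [abs_mul, hyabs, one_mul]
    exact abs_le_one_iff_mul_self_le_one.2 (by linarith [pow_two (dot (w r) (ξ p₀)), hle r p₀])
  have hterm : ∀ r, (∑ p, y * dot (w r) (Function.update ξ s ((α * y) • e1 d hd) p +
      (if p = p₀ then (-y) • v else 0)) ^ 3) ≤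
      ∑ p, dot (w r) (ξ p) ^ 2 + β ^ 3 + (y * dot (w r) (ξ p₀) - dot (w r) v) ^ 3 := by
    intro r
    calc _ ≤ ∑ p, (dot (w r) (ξ p) ^ 2 + (if p = s then β ^ 3 else 0) +
          (if p = p₀ then (y * dot (w r) (ξ p₀) - dot (w r) v) ^ 3 else 0)) := by
          refine sum_le_sum fun p _ => ?_
          by_cases h1 : p = s
          · subst h1
            have h2 : y * dot (w r) ((α * y) • e1 d hd) ^ 3 ≤ β ^ 3 := by
              rw [dot_smul_right, dot_e1_right]
              calc _ = (y ^ 2) ^ 2 * (α * w r ⟨0, hd⟩) ^ 3 := by ring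
                _ = (α * w r ⟨0, hd⟩) ^ 3 := by rw [hy2]; ring
                _ ≤ _ := cube_mono (hb r)
            have h3 := sq_nonneg (dot (w r) (ξ p))
            simp only [Function.update_self, if_neg hne.symm, add_zero, if_true]
            linarith
          · by_cases h2 : p = p₀
            · subst h2
              have h3 := sq_nonneg (dot (w r) (ξ p))
              have h4 : y * dot (w r) (ξ p + (-y) • v) ^ 3 =
                  (y * dot (w r) (ξ p) - dot (w r) v) ^ 3 := by
                rw [dot_add_right, dot_smul_right]
                rcases hy with h | h <;> rw [h] <;> ring
              simp only [Function.update_of_ne h1, if_true, if_neg h1]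
              linarith
            · simp only [Function.update_of_ne h1, if_neg h1, if_neg h2, add_zero]
              exact cube_le_sq_of_abs_le_one hyabs (hle r p)
      _ = _ := by
          rw [sum_add_distrib, sum_add_distrib, sum_ite_eq', sum_ite_eq']
          simp
  have hlast : ∑ r, (y * dot (w r) (ξ p₀) - dot (w r) v) ^ 3 ≤ m * 8 - V ^ 3 / 8 := by
    calc _ ≤ ∑ r, ((8 : ℝ) - if r = r₀ then V ^ 3 / 8 else 0) := by
          refine sum_le_sum fun r _ => ?_
          split_ifs with h1
          · subst h1
            have h2 := cube_mono (show y * dot (w r) (ξ p₀) - dot (w r) v ≤ -(V / 2) by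
              linarith [(hlow r).2])
            have h3 : (-(V / 2)) ^ 3 = -(V ^ 3 / 8) := by ring
            linarith
          · have h2 := cube_mono (show y * dot (w r) (ξ p₀) - dot (w r) v ≤ 2 by
              linarith [(hlow r).2, hv r])
            linarith
      _ = _ := by rw [sum_sub_distrib, sum_ite_eq']; simp
  rw [netOut_eq, mul_sum]
  calc _ ≤ ∑ r, (∑ p, dot (w r) (ξ p) ^ 2 + β ^ 3 +
        (y * dot (w r) (ξ p₀) - dot (w r) v) ^ 3) := by
        refine sum_le_sum fun r _ => ?_
        rw [mul_sum]; exact hterm r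
    _ = ∑ r, ∑ p, dot (w r) (ξ p) ^ 2 + m * β ^ 3 +
        ∑ r, (y * dot (w r) (ξ p₀) - dot (w r) v) ^ 3 := by
        rw [sum_add_distrib, sum_add_distrib]; simp
    _ < 0 := by linarith

theorem sqnorm_nonneg {d : ℕ} (a : Fin d → ℝ) : 0 ≤ sqnorm a := by
  unfold sqnorm dot; exact sum_nonneg fun k _ => mul_self_nonneg _

theorem dot_le_sqrt {d : ℕ} (a b : Fin d → ℝ) :
    dot a b ≤ Real.sqrt (sqnorm a) * Real.sqrt (sqnorm b) := by
  have h := Real.sum_mul_le_sqrt_mul_sqrt univ a b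
  simpa only [dot, sqnorm, pow_two] using h

theorem abs_dot_le_sqrt {d : ℕ} (a b : Fin d → ℝ) :
    |dot a b| ≤ Real.sqrt (sqnorm a) * Real.sqrt (sqnorm b) := by
  refine abs_le.2 ⟨?_, dot_le_sqrt a b⟩
  have h := dot_le_sqrt ((-1 : ℝ) • a) b
  have h2 : sqnorm ((-1 : ℝ) • a) = sqnorm a := by
    unfold sqnorm; rw [dot_smul_left, dot_smul_right]; ring
  rw [h2, dot_smul_left] at h
  linarith

section NoiseLaw

theorem noiseCoordLaw_eq (sigman : ℝ) (d : ℕ) (k : Fin d) : noiseCoordLaw sigman d k =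
    if (k : ℕ) = 0 ∨ (k : ℕ) = d - 1 then Measure.dirac 0
    else gaussianReal 0 (Real.toNNReal (sigman ^ 2)) := by
  have h : Real.toNNReal (sigman ^ 2) = (⟨sigman ^ 2, sq_nonneg _⟩ : {r : ℝ // 0 ≤ r}) :=
    Real.toNNReal_of_nonneg (sq_nonneg _)
  rw [h]; rfl

instance (sigman : ℝ) (d : ℕ) (k : Fin d) : IsProbabilityMeasure (noiseCoordLaw sigman d k) := by
  rw [noiseCoordLaw_eq]; split_ifs <;> infer_instance

instance (sigman : ℝ) (d : ℕ) : IsProbabilityMeasure (noisePatchLaw sigman d) := by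
  unfold noisePatchLaw; infer_instance

instance (P : ℕ) (hP : 0 < P) : IsProbabilityMeasure (uniformPatch P hP) := by
  unfold uniformPatch; infer_instance

instance : IsProbabilityMeasure labelLaw := by
  refine ⟨?_⟩
  simp [labelLaw, ENNReal.inv_two_add_inv_two]

theorem labelLaw_signs : labelLaw {y : ℝ | y = 1 ∨ y = -1} = 1 := by
  simp [labelLaw, ENNReal.inv_two_add_inv_two]

variable (sigman : ℝ) {d : ℕ}

theorem memLp_noiseCoord (k : Fin d) : MemLp (fun x : ℝ => x) 2 (noiseCoordLaw sigman d k) := by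
  rw [noiseCoordLaw_eq]
  split_ifs
  · exact (memLp_const (0 : ℝ)).ae_eq ((ae_dirac_iff (measurableSet_eq_fun measurable_const
      measurable_id)).2 rfl)
  · exact memLp_id_gaussianReal 2

theorem integral_noiseCoord (k : Fin d) : ∫ x, x ∂(noiseCoordLaw sigman d k) = 0 := by
  rw [noiseCoordLaw_eq]
  split_ifs <;> simp

theorem variance_noiseCoord (k : Fin d) : Var[fun x => x; noiseCoordLaw sigman d k] =
    if (k : ℕ) = 0 ∨ (k : ℕ) = d - 1 then 0 else sigman ^ 2 := by
  rw [noiseCoordLaw_eq]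
  split_ifs
  · simp
  · rw [variance_fun_id_gaussianReal]; exact Real.coe_toNNReal _ (sq_nonneg _)

theorem memLp_dot (w : Fin d → ℝ) : MemLp (fun ζ => dot w ζ) 2 (noisePatchLaw sigman d) := by
  unfold dot
  refine memLp_finsetSum _ fun k _ => ?_
  exact (((memLp_noiseCoord sigman k).comp_measurePreserving
    (measurePreserving_eval (noiseCoordLaw sigman d) k)).const_mul (w k))

/-- Second moment of the correlation of a fixed vector with a noise patch. -/
theorem integral_dot_sq (w : Fin d → ℝ) : ∫ ζ, dot w ζ ^ 2 ∂(noisePatchLaw sigman d) =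
    ∑ k, w k ^ 2 * if (k : ℕ) = 0 ∨ (k : ℕ) = d - 1 then 0 else sigman ^ 2 := by
  have hmean : ∫ ζ, dot w ζ ∂(noisePatchLaw sigman d) = 0 := by
    unfold dot noisePatchLaw
    rw [integral_finsetSum]
    · refine sum_eq_zero fun k _ => ?_
      rw [integral_const_mul, integral_comp_eval (μ := noiseCoordLaw sigman d) (f := fun x => x)
        (memLp_noiseCoord sigman k).aestronglyMeasurable, integral_noiseCoord, mul_zero]
    · intro k _
      exact ((((memLp_noiseCoord sigman k).comp_measurePreserving
        (measurePreserving_eval (noiseCoordLaw sigman d) k)).integrable (by norm_num)).const_mul _)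
  rw [← variance_of_integral_eq_zero (memLp_dot sigman w).aestronglyMeasurable.aemeasurable hmean]
  have h : (fun ζ => dot w ζ) = ∑ k, fun ζ : Fin d → ℝ => (fun x => w k * x) (ζ k) := by
    ext ζ; simp [dot]
  rw [h]
  unfold noisePatchLaw
  rw [variance_sum_pi (fun k => (memLp_noiseCoord sigman k).const_mul (w k))]
  refine sum_congr rfl fun k _ => ?_
  rw [variance_const_mul, variance_noiseCoord]

theorem measurable_dot (w : Fin d → ℝ) : Measurable fun ζ => dot w ζ := by
  unfold dot; fun_prop

/-- With high probability all weight correlations with fresh noise are small. -/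
theorem prob_noise_small {m P : ℕ} (w : Fin m → Fin d → ℝ) {κ : ℝ}
    (hκ : ∀ r, ∫ ζ, dot (w r) ζ ^ 2 ∂(noisePatchLaw sigman d) ≤ κ) :
    ENNReal.ofReal (1 - m * P * κ) ≤
      (Measure.pi fun _ : Fin P => noisePatchLaw sigman d)
        {ξ | ∑ r, ∑ p, dot (w r) (ξ p) ^ 2 < 1} := by
  set μ := Measure.pi fun _ : Fin P => noisePatchLaw sigman d with hμ
  have hint : ∀ r p, Integrable (fun ξ : Fin P → Fin d → ℝ => dot (w r) (ξ p) ^ 2) μ :=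
    fun r p => ((memLp_dot sigman (w r)).comp_measurePreserving
      (measurePreserving_eval (fun _ : Fin P => noisePatchLaw sigman d) p)).integrable_sq
  have hI : ∫ ξ, ∑ r, ∑ p, dot (w r) (ξ p) ^ 2 ∂μ ≤ m * P * κ := by
    rw [integral_finsetSum _ fun r _ => integrable_finsetSum _ fun p _ => hint r p]
    calc _ ≤ ∑ _r : Fin m, ∑ _p : Fin P, κ := by
          refine sum_le_sum fun r _ => ?_
          rw [integral_finsetSum _ fun p _ => hint r p]
          refine sum_le_sum fun p _ => ?_
          rw [hμ, integral_comp_eval (μ := fun _ : Fin P => noisePatchLaw sigman d)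
            (f := fun ζ => dot (w r) ζ ^ 2)
            ((measurable_dot (w r)).pow_const 2).aestronglyMeasurable]
          exact hκ r
      _ = _ := by simp; ring
  have hM := mul_meas_ge_le_integral_of_nonneg (μ := μ)
    (f := fun ξ => ∑ r, ∑ p, dot (w r) (ξ p) ^ 2)
    (ae_of_all _ fun ξ => sum_nonneg fun r _ => sum_nonneg fun p _ => sq_nonneg _)
    (integrable_finsetSum _ fun r _ => integrable_finsetSum _ fun p _ => hint r p) 1
  rw [one_mul] at hM
  have hmeas : MeasurableSet {ξ : Fin P → Fin d → ℝ | ∑ r, ∑ p, dot (w r) (ξ p) ^ 2 < 1} := by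
    refine measurableSet_lt ?_ measurable_const
    refine Finset.measurable_sum _ fun r _ => Finset.measurable_sum _ fun p _ => ?_
    exact ((measurable_dot (w r)).comp (measurable_pi_apply p)).pow_const 2
  have hset : {ξ : Fin P → Fin d → ℝ | ∑ r, ∑ p, dot (w r) (ξ p) ^ 2 < 1}ᶜ =
      {ξ | 1 ≤ ∑ r, ∑ p, dot (w r) (ξ p) ^ 2} := by ext ξ; simp
  rw [← hset] at hM
  rw [← ofReal_measureReal]
  refine ENNReal.ofReal_le_ofReal ?_
  have h2 : μ.real {ξ | ∑ r, ∑ p, dot (w r) (ξ p) ^ 2 < 1} +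
      μ.real {ξ | ∑ r, ∑ p, dot (w r) (ξ p) ^ 2 < 1}ᶜ = 1 := probReal_add_probReal_compl hmeas
  linarith

end NoiseLaw

/-- A lower bound on the robust test error from an attack that succeeds on typical noise. -/
theorem Setting.le_robErr (S : Setting) (t : ℕ) {κ : ℝ}
    (hκ : ∀ r, ∫ ζ, dot (S.w t r) ζ ^ 2 ∂(noisePatchLaw S.sigman S.d) ≤ κ)
    (hatt : ∀ (y : ℝ) (s : Fin S.P) (ξ : Fin S.P → Fin S.d → ℝ), (y = 1 ∨ y = -1) →
      ∑ r, ∑ p, dot (S.w t r) (ξ p) ^ 2 < 1 →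
      ∃ Δ : Fin S.P → Fin S.d → ℝ, (∀ p k, |Δ p k| ≤ S.eps) ∧
        y * netOut (S.w t) (fun p =>
          Function.update ξ s ((S.alpha * y) • e1 S.d S.hd) p + Δ p) < 0) :
    ENNReal.ofReal (1 - S.m * S.P * κ) ≤ S.robErr t := by
  have hmeas : Measurable (fun z : ℝ × Fin S.P × (Fin S.P → Fin S.d → ℝ) =>
      (Function.update z.2.2 z.2.1 ((S.alpha * z.1) • e1 S.d S.hd), z.1)) := by
    refine Measurable.prodMk ?_ measurable_fst
    refine measurable_pi_lambda _ fun p => ?_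
    simp only [Function.update_apply]
    refine Measurable.ite ?_ ?_ ?_
    · exact (measurable_fst.comp measurable_snd) (measurableSet_eq_fun measurable_const
        measurable_id)
    · refine measurable_pi_lambda _ fun k => ?_
      simp only [Pi.smul_apply, smul_eq_mul]
      fun_prop
    · fun_prop
  unfold robErr testLaw
  refine le_trans ?_ (Measure.le_map_apply hmeas.aemeasurable _)
  have hsub : ({y : ℝ | y = 1 ∨ y = -1} ×ˢ ((Set.univ : Set (Fin S.P)) ×ˢ
      {ξ : Fin S.P → Fin S.d → ℝ | ∑ r, ∑ p, dot (S.w t r) (ξ p) ^ 2 < 1})) ⊆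
      (fun z : ℝ × Fin S.P × (Fin S.P → Fin S.d → ℝ) =>
        (Function.update z.2.2 z.2.1 ((S.alpha * z.1) • e1 S.d S.hd), z.1)) ⁻¹'
        {Xy : (Fin S.P → Fin S.d → ℝ) × ℝ | ∃ Δ : Fin S.P → Fin S.d → ℝ,
          (∀ p k, |Δ p k| ≤ S.eps) ∧
            Xy.2 * netOut (S.w t) (fun p => Xy.1 p + Δ p) < 0} := by
    rintro ⟨y, s, ξ⟩ ⟨hy, -, hξ⟩
    exact hatt y s ξ hy hξ
  refine le_trans ?_ (measure_mono hsub)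
  rw [Measure.prod_prod, Measure.prod_prod, labelLaw_signs, measure_univ, one_mul, one_mul]
  exact prob_noise_small S.sigman (S.w t) hκ

namespace Setting

variable {S : Setting} {e : ℝ}

/-- The part of the weights orthogonal to both features is small. -/
theorem integral_dot_sq_le (h : S.ATDyn) (hE : S.EventE) (hs : S.Small e) (t : ℕ) (r : Fin S.m)
    {Y : ℝ} (hsY : 8 * S.l * S.s0 ≤ Y) (hρ : ∀ p : S.Idx, 0 ≤ S.rho p.1.1 p.1.2 r t)
    (hY : 3 * S.l / Real.sqrt S.d * ∑ p : S.Idx, S.D * S.rho p.1.1 p.1.2 r t ≤ Y / 2) :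
    ∫ ζ, dot (S.w t r) ζ ^ 2 ∂(noisePatchLaw S.sigman S.d) ≤ Y ^ 2 := by
  set v : Fin S.d → ℝ := fun k => if (k : ℕ) = 0 ∨ (k : ℕ) = S.d - 1 then 0 else S.w t r k
    with hv
  have hsn := S.hsigman
  have hs0 := S.hsigma0
  have hl := hs.hl
  have hd := S.sqrt_d_pos
  have hint : ∫ ζ, dot (S.w t r) ζ ^ 2 ∂(noisePatchLaw S.sigman S.d) =
      (S.sigman * Real.sqrt (sqnorm v)) ^ 2 := by
    have h0 := sqnorm_nonneg v
    rw [integral_dot_sq, mul_pow, Real.sq_sqrt h0]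
    unfold sqnorm dot
    rw [mul_sum]
    refine sum_congr rfl fun k _ => ?_
    simp only [hv]
    split_ifs <;> ring
  have hself : dot (S.w t r) v = sqnorm v := by
    unfold sqnorm dot
    refine sum_congr rfl fun k _ => ?_
    simp only [hv]
    split_ifs <;> ring
  have hperp : dot v (e1 S.d S.hd) = 0 := by
    rw [dot_e1_right]; simp [hv]
  have hx : ∀ p : S.Idx, Real.sqrt (sqnorm (S.x p.1.1 p.1.2)) ≤ 2 * (S.sigman * Real.sqrt S.d) := by
    intro p
    refine Real.sqrt_le_iff.2 ⟨by positivity, ?_⟩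
    have h1 := (hE.1 p.1.1 p.1.2 p.2).2
    have h2 : (2 * (S.sigman * Real.sqrt S.d)) ^ 2 = 4 * (S.sigman ^ 2 * S.d) := by
      rw [mul_pow, mul_pow, Real.sq_sqrt (Nat.cast_nonneg _)]; ring
    have h3 : 0 ≤ S.sigman ^ 2 * (S.d : ℝ) := by positivity
    linarith
  set n := Real.sqrt (sqnorm v) with hn
  have hn0 : 0 ≤ n := Real.sqrt_nonneg _
  have hn2 : n ^ 2 = sqnorm v := Real.sq_sqrt (sqnorm_nonneg v)
  set ρs := ∑ p : S.Idx, S.rho p.1.1 p.1.2 r t with hρs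
  have hexp : n ^ 2 ≤ (2 * S.sigma0 * Real.sqrt S.d + ρs * (2 * (S.sigman * Real.sqrt S.d))) * n := by
    rw [hn2, ← hself, S.dot_expand h t r v hperp, add_mul]
    refine add_le_add ?_ ?_
    · refine (dot_le_sqrt _ _).trans ?_
      exact mul_le_mul_of_nonneg_right (hE.2.2.2.1 r) hn0
    · rw [hρs, sum_mul, sum_mul]
      refine sum_le_sum fun p _ => ?_
      rw [mul_assoc]
      refine mul_le_mul_of_nonneg_left ?_ (hρ p)
      calc S.y p.1.1 * dot (S.x p.1.1 p.1.2) v ≤ |S.y p.1.1 * dot (S.x p.1.1 p.1.2) v| :=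
            le_abs_self _
        _ = |dot (S.x p.1.1 p.1.2) v| := by rw [abs_mul, S.abs_y, one_mul]
        _ ≤ _ := (abs_dot_le_sqrt _ _).trans (mul_le_mul_of_nonneg_right (hx p) hn0)
  have hρs0 : 0 ≤ ρs := sum_nonneg fun p _ => hρ p
  have hnle : n ≤ 2 * S.sigma0 * Real.sqrt S.d + ρs * (2 * (S.sigman * Real.sqrt S.d)) := by
    rcases hn0.eq_or_lt with h0 | h0
    · rw [← h0]; positivity
    · refine le_of_mul_le_mul_right ?_ h0
      rw [← pow_two]; exact hexp
  rw [← mul_sum, ← hρs, S.D_eq] at hY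
  have hY2 : 3 * S.l * (S.sigman ^ 2 * Real.sqrt S.d * ρs) ≤ Y / 2 := by
    refine le_of_eq_of_le ?_ hY
    field_simp
  have hfin : S.sigman * n ≤ Y := by
    have h1 : S.sigman * n ≤ 2 * S.s0 + 2 * (S.sigman ^ 2 * Real.sqrt S.d * ρs) := by
      calc _ ≤ S.sigman * (2 * S.sigma0 * Real.sqrt S.d +
            ρs * (2 * (S.sigman * Real.sqrt S.d))) := by gcongr
        _ = _ := by unfold s0; ring
    have h2 : 0 ≤ S.sigman ^ 2 * Real.sqrt S.d * ρs := by positivity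
    have h3 := S.s0_pos
    nlinarith only [h1, h2, h3, hl, hY2, hsY]
  rw [hint]
  exact pow_le_pow_left₀ (by positivity) hfin 2

end Setting

namespace Setting

variable {S : Setting} {e : ℝ}

theorem exists_memorized (h : S.ATDyn) (hE : S.EventE) (hs : S.Small e) (he : 0 < e)
    (he' : e ≤ 1 / 1000) (hP2 : 2 ≤ S.P) : ∃ r, ∃ p : S.Idx, p.1.1 ∈ S.SU ∧
      1 / (6 * ((S.m : ℝ) * S.P) ^ ((1 : ℝ) / 3)) ≤
        S.y p.1.1 * dot (S.w S.T r) (S.x p.1.1 p.1.2) := by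
  have hm : (0 : ℝ) < S.m := by exact_mod_cast S.hm
  have hP : (0 : ℝ) < S.P := by exact_mod_cast S.hP
  refine (S.toNormDyn h hE hs he he').noise_memorized (by positivity)
    (cube_root_cube (by positivity)) ?_
  have hcard : 0 < S.SU.card := by exact_mod_cast lt_of_lt_of_le one_pos hs.hSU1
  obtain ⟨i, hi⟩ := card_pos.1 hcard
  have : Nontrivial (Fin S.P) := Fin.nontrivial_iff_two_le.2 hP2
  obtain ⟨j, hj⟩ := exists_ne (S.sig i)
  obtain ⟨r, hr⟩ := hE.2.2.2.2.2.2.2 i j hj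
  exact ⟨r, ⟨(i, j), hj⟩, hi, hr⟩

theorem le_robErr_final (h : S.ATDyn) (hE : S.EventE) (hs : S.Small e) (he : 0 < e)
    (he' : e ≤ 1 / 1000) (hP2 : 2 ≤ S.P) : ENNReal.ofReal (1 - 5 * e) ≤ S.robErr S.T := by
  set D := S.toNormDyn h hE hs he he' with hD
  obtain ⟨hY0, hYA, hYN, hY1, -⟩ := D.Yl_spec
  have hYA' : 8 * S.l * S.s0 ≤ D.Yl := by
    have : D.A0 = 2 * S.l * S.s0 := rfl
    linarith
  have hYN' : (S.N : ℝ) * S.m * D.Yl ≤ 5 * e := hYN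
  have hm : (1 : ℝ) ≤ S.m := by exact_mod_cast S.hm
  have hP : (1 : ℝ) ≤ S.P := by exact_mod_cast S.hP
  have hl := hs.hl
  have hsP : 1 ≤ Real.sqrt S.P := Real.one_le_sqrt.2 hP
  have hsP2 : Real.sqrt S.P ^ 2 = S.P := Real.sq_sqrt (by linarith)
  have hN : S.m * (S.P * S.l ^ 2) ≤ 1 * S.N := by
    have h1 := hs.hmP
    have h2 : e * S.N ≤ 1 * S.N := by gcongr; linarith
    linarith
  have hPN : S.P * S.l ^ 2 ≤ S.N := by
    have : 1 * (S.P * S.l ^ 2) ≤ S.m * (S.P * S.l ^ 2) := by gcongr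
    linarith
  have hκ : S.m * S.P * D.Yl ^ 2 ≤ 5 * e := by
    refine le_trans ?_ hYN'
    have h1 : (S.P : ℝ) * 1 ≤ S.P * S.l ^ 2 := by gcongr; nlinarith
    calc (S.m : ℝ) * S.P * D.Yl ^ 2 = S.P * S.m * D.Yl * D.Yl := by ring
      _ ≤ S.N * S.m * D.Yl * 1 := by
        have h2 : (S.P : ℝ) ≤ S.N := by linarith
        have h3 : D.Yl ≤ 1 := by linarith
        exact mul_le_mul (by gcongr) h3 hY0.le (by positivity)
      _ = _ := by ring
  refine le_trans (ENNReal.ofReal_le_ofReal (by linarith))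
    (S.le_robErr S.T (κ := D.Yl ^ 2) (fun r => ?_) ?_)
  · refine integral_dot_sq_le h hE hs S.T r hYA' (fun p => ?_) ((D.noise_bounds le_rfl).2 r)
    exact nonneg_of_mul_nonneg_right (D.q_nonneg S.T r p) S.D_pos
  obtain ⟨r₀, p, -, hr₀⟩ := exists_memorized h hE hs he he' hP2
  set M := ((S.m : ℝ) * S.P) ^ ((1 : ℝ) / 3) with hM
  have hM0 : 0 < M := by positivity
  have hM3 : M ^ 3 = S.m * S.P := cube_root_cube (by positivity)
  set H := 30 * S.m * Real.sqrt S.P * S.l with hH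
  have hH0 : 0 < H := by positivity
  set V := H * (1 / (6 * M)) with hV
  have hV0 : 0 < V := by positivity
  have hV3 : 125 * (S.m * S.l ^ 3) ≤ V ^ 3 := by
    have h1 : V ^ 3 = 125 * ((S.m * S.l ^ 3) * (S.m * Real.sqrt S.P)) := by
      have h2 : V ^ 3 * M ^ 3 = 125 * S.m ^ 3 * Real.sqrt S.P ^ 3 * S.l ^ 3 := by
        rw [hV, hH]; field_simp; ring
      rw [hM3] at h2
      have h3 : (0 : ℝ) < S.m * S.P := by positivity
      refine mul_right_cancel₀ h3.ne' (h2.trans ?_)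
      linear_combination (125 * S.m ^ 3 * Real.sqrt S.P * S.l ^ 3) * hsP2
    rw [h1]
    have h4 : 1 * 1 ≤ S.m * Real.sqrt S.P := by gcongr
    have h5 : 0 < S.m * S.l ^ 3 := by positivity
    nlinarith only [h4, h5]
  have hl3 : 1000000 ≤ S.l ^ 3 := by
    calc (1000000 : ℝ) = 100 ^ 3 := by norm_num
      _ ≤ _ := by gcongr
  have hml : 1000000 * S.m ≤ S.m * S.l ^ 3 := by nlinarith only [hl3, hm]
  have hV2 : 2 ≤ V := by
    by_contra hcon
    push Not at hcon
    have h1 : V ^ 3 ≤ 2 ^ 3 := by gcongr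
    linarith
  have hHY : H * D.Yl ≤ 1 := by
    have h1 : 30 * Real.sqrt S.P * S.l ≤ S.N := by
      refine le_trans ?_ hPN
      calc 30 * Real.sqrt S.P * S.l ≤ S.l * Real.sqrt S.P ^ 2 * S.l := by
            rw [pow_two]
            have h2 : Real.sqrt S.P * 1 ≤ Real.sqrt S.P * Real.sqrt S.P := by gcongr
            have h3 : 30 * Real.sqrt S.P ≤ S.l * (Real.sqrt S.P * Real.sqrt S.P) := by
              nlinarith only [h2, hl, hsP]
            gcongr
        _ = _ := by rw [hsP2]; ring
    calc H * D.Yl = (30 * Real.sqrt S.P * S.l) * S.m * D.Yl := by rw [hH]; ring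
      _ ≤ S.N * S.m * D.Yl := by gcongr
      _ ≤ 1 := by linarith
  have hdot : ∀ r, dot (S.w S.T r) ((H * S.y p.1.1) • S.x p.1.1 p.1.2) =
      H * (S.y p.1.1 * dot (S.w S.T r) (S.x p.1.1 p.1.2)) := fun r => by
    rw [dot_smul_right]; ring
  intro y s ξ hy hξ
  have : Nontrivial (Fin S.P) := Fin.nontrivial_iff_two_le.2 hP2
  obtain ⟨p₀, hp₀⟩ := exists_ne s
  refine ⟨fun q => if q = p₀ then (-y) • ((H * S.y p.1.1) • S.x p.1.1 p.1.2) else 0, ?_, ?_⟩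
  · intro q k
    have hx := hE.2.2.1 p.1.1 p.1.2 p.2 k
    have hyabs : |y| = 1 := by rcases hy with h | h <;> rw [h] <;> norm_num
    by_cases hq : q = p₀
    · simp only [if_pos hq, Pi.smul_apply, smul_eq_mul, abs_mul, abs_neg, hyabs, S.abs_y,
        abs_of_pos hH0, one_mul, mul_one]
      exact (mul_le_mul_of_nonneg_left hx hH0.le).trans hs.hepsH
    · simp only [if_neg hq, Pi.zero_apply, abs_zero]
      exact S.heps.le
  · refine attack_succeeds S.hd (S.w S.T) ξ hp₀ hy _ (β := 2 * S.l) (V := V)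
      (fun r => ?_) (fun r => ?_) r₀ hV2 ?_ ?_ hξ
    · have h1 : S.alpha * S.w S.T r ⟨0, S.hd⟩ ≤ S.l + 2 := D.b_cap le_rfl r
      linarith
    · rw [hdot]
      have h1 : -D.Yl ≤ S.y p.1.1 * dot (S.w S.T r) (S.x p.1.1 p.1.2) := D.neg_Yl_le le_rfl r p
      have h2 := mul_le_mul_of_nonneg_left h1 hH0.le
      linarith
    · rw [hdot]
      exact mul_le_mul_of_nonneg_left hr₀ hH0.le
    · have h1 : (2 * S.l) ^ 3 = 8 * S.l ^ 3 := by ring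
      rw [h1]
      linarith

/-- The signal is learned before the horizon. -/
theorem signal_learned (h : S.ATDyn) (hE : S.EventE) (hs : S.Small e) (he : 0 < e)
    (he' : e ≤ 1 / 1000) :
    S.T0 (1 / 2) ≤ S.T ∧ ∃ r, (1 / 2) / (S.alpha * (S.m : ℝ) ^ ((1 : ℝ) / 3)) ≤ S.wsig S.T r := by
  set D := S.toNormDyn h hE hs he he' with hD
  obtain ⟨t, ht, r, hr⟩ := D.signal_learned
  have ha := S.halpha
  have hm : (0 : ℝ) < S.m := by exact_mod_cast S.hm
  have hm3 : 0 < (S.m : ℝ) ^ ((1 : ℝ) / 3) := by positivity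
  have hr' : 1 / (2 * (S.m : ℝ) ^ ((1 : ℝ) / 3)) < S.alpha * S.wsig t r := hr
  have hmono : S.alpha * S.wsig t r ≤ S.alpha * S.wsig S.T r := D.b_mono r ht
  have h1 : (1 / 2) / (S.alpha * (S.m : ℝ) ^ ((1 : ℝ) / 3)) < S.wsig t r := by
    have h2 : (1 / 2) / (S.alpha * (S.m : ℝ) ^ ((1 : ℝ) / 3)) =
        1 / (2 * (S.m : ℝ) ^ ((1 : ℝ) / 3)) / S.alpha := by field_simp
    rw [h2, div_lt_iff₀ ha]
    linarith
  have hT0 : S.T0 (1 / 2) ≤ t := Nat.sInf_le (show t ∈ {t : ℕ | ∃ r,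
    (1 / 2 : ℝ) / (S.alpha * (S.m : ℝ) ^ ((1 : ℝ) / 3)) < S.wsig t r} from ⟨r, h1⟩)
  exact ⟨hT0.trans ht, r, h1.le.trans (le_of_mul_le_mul_left hmono ha)⟩

theorem avg_loss_le (h : S.ATDyn) (hE : S.EventE) (hs : S.Small e) (he : 0 < e)
    (he' : e ≤ 1 / 1000) : 1 / (S.N : ℝ) * ∑ i, lloss (S.marg S.T i) ≤ 2 * S.pun := by
  have h1 : ∑ i, lloss (S.marg S.T i) ≤ 1 + S.SU.card :=
    (S.toNormDyn h hE hs he he').sum_loss_le S.hunion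
  have hN : (0 : ℝ) < S.N := by exact_mod_cast S.hN
  have h2 := hs.hSU1
  unfold pun
  rw [one_div_mul_eq_div, ← mul_div_assoc, div_le_div_iff_of_pos_right hN]
  linarith

end Setting

/-- Adversarial training with unlearnable samples. On the event `E`,
under Condition (H) in the sparse-unlearnable regime: (1) some filter aligns with the
learnable feature; (2) the network memorizes noise on some unlearnable sample; (3) the
average robust training logistic loss obeys the stated bound plus `c·p_un` and is
`o(1)`; (4) the robust test error on the learnable test distribution is at least
`1/2 − o(1)`. -/
theorem stmt15 :
    ∃ C0 C1 c : ℝ, 0 < C0 ∧ 0 < C1 ∧ 0 < c ∧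
      ∀ θ : ℝ, 0 < θ →
        ∃ C : ℝ, 0 < C ∧
          ∀ S : Setting, S.ATDyn → S.EventE → S.CondH C → S.SparseRegime C →
            (∃ r, C0 / (S.alpha * (S.m : ℝ) ^ ((1 : ℝ) / 3)) ≤ S.wsig S.T r) ∧
            (∃ i ∈ S.SU, ∃ r : Fin S.m, ∃ j, j ≠ S.sig i ∧
              C1 / (3 * ((S.m : ℝ) * S.P) ^ ((1 : ℝ) / 3)) ≤ S.y i * dot (S.w S.T r) (S.x i j)) ∧
            (1 / (S.N : ℝ) * ∑ i, lloss (S.marg S.T i) ≤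
                40 * (S.m : ℝ) ^ ((2 : ℝ) / 3) * Real.log S.T ^ ((1 : ℝ) / 3) /
                    (C0 ^ 2 * (1 - S.eps / S.alpha) ^ 3 * S.eta * S.alpha ^ 2 *
                      ((S.T : ℝ) - S.T0 C0)) + c * S.pun ∧
              1 / (S.N : ℝ) * ∑ i, lloss (S.marg S.T i) ≤ θ) ∧
            ENNReal.ofReal (1 / 2 - θ) ≤ S.robErr S.T := by
  refine ⟨1 / 2, 1 / 2, 2, by norm_num, by norm_num, by norm_num, fun θ hθ => ?_⟩
  obtain ⟨e, he, he', heθ⟩ : ∃ e : ℝ, 0 < e ∧ e ≤ 1 / 1000 ∧ 5 * e ≤ θ :=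
    ⟨min (1 / 1000) (θ / 5), by positivity, min_le_left _ _, by
      linarith [min_le_right (1 / 1000 : ℝ) (θ / 5)]⟩
  refine ⟨max (Real.exp 10000) (9 / e ^ 2), lt_max_of_lt_left (Real.exp_pos _),
    fun S h hE hH hR => ?_⟩
  have hs : S.Small e := by
    refine S.small he he' ?_ ?_ hH hR
    · exact (Real.le_log_iff_exp_le (lt_max_of_lt_left (Real.exp_pos _))).2 (le_max_left _ _)
    · rw [← div_le_iff₀' (by positivity)]
      exact le_max_right _ _
  have hP2 : 2 ≤ S.P := hH.2.2.2.2.2.2.2.2.2.2.1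
  obtain ⟨hT0, hsig⟩ := S.signal_learned h hE hs he he'
  have hloss := S.avg_loss_le h hE hs he he'
  refine ⟨hsig, ?_, ⟨?_, ?_⟩, ?_⟩
  · obtain ⟨r, p, hp, hr⟩ := S.exists_memorized h hE hs he he' hP2
    refine ⟨p.1.1, hp, r, p.1.2, p.2, le_of_eq_of_le ?_ hr⟩
    have hm : (0 : ℝ) < S.m := by exact_mod_cast S.hm
    have hP : (0 : ℝ) < S.P := by exact_mod_cast S.hP
    rw [div_div, div_eq_div_iff (by positivity) (by positivity)]
    ring
  · refine hloss.trans (le_add_of_nonneg_left ?_)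
    have h1 : 0 ≤ (S.T : ℝ) - S.T0 (1 / 2) := sub_nonneg.2 (by exact_mod_cast hT0)
    have h2 : 0 ≤ 1 - S.eps / S.alpha :=
      sub_nonneg.2 ((div_le_one S.halpha).2 S.hepsalpha.le)
    have h3 : 0 ≤ Real.log S.T := Real.log_natCast_nonneg _
    have h4 := S.heta
    positivity
  · linarith [hs.hpun]
  · exact (ENNReal.ofReal_le_ofReal (by linarith)).trans (S.le_robErr_final h hE hs he he' hP2)

end AD

end
end

section
/- Let ℓ(z) = log(1+e^{−z}) be the logistic loss and σ(z) = 1/(1+e^{−z}) the logistic sigmoid, let y ∈ {+1,−1}, let f_T ∈ ℝ be a fixed teacher logit, and for a variable student logit f ∈ ℝ define the adversarial distillation loss L_AD(f) = σ(y f_T)·ℓ(y f) + σ(−y f_T)·ℓ(−y f) and the adversarial training loss L_AT(f) = ℓ(y f). If the teacher margin satisfies y f_T ≥ Γ for some Γ ≥ 0, then for every f the derivatives satisfy |dL_AD/df − dL_AT/df| = σ(−y f_T) ≤ e^{−Γ}. In particular, if Γ ≥ Cd, the difference is at most e^{−Cd}. -/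
noncomputable section

namespace AD

theorem sigm_add_sigm_neg (z : ℝ) : sigm z + sigm (-z) = 1 := by
  have h := Real.exp_pos z
  simp only [sigm, neg_neg, Real.exp_neg]
  field_simp
  ring

theorem sigm_pos (z : ℝ) : 0 < sigm z := by
  unfold sigm
  positivity

theorem sigm_le_exp (z : ℝ) : sigm z ≤ Real.exp z := by
  have h := Real.exp_pos z
  rw [sigm, Real.exp_neg, div_le_iff₀ (by positivity), mul_add, mul_inv_cancel₀ h.ne']
  linarith

theorem hasDerivAt_lloss (z : ℝ) : HasDerivAt lloss (-sigm (-z)) z := by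
  have h : HasDerivAt (fun x : ℝ => 1 + Real.exp (-x)) (Real.exp (-z) * -1) z :=
    ((hasDerivAt_neg z).exp).const_add 1
  have hz := Real.exp_pos z
  refine (h.log (by positivity)).congr_deriv ?_
  simp only [sigm, neg_neg, Real.exp_neg]
  field_simp
  ring

theorem deriv_distillation_sub_deriv_training (y t f : ℝ) :
    deriv (fun g : ℝ => sigm t * lloss (y * g) + sigm (-t) * lloss (-(y * g))) f -
      deriv (fun g : ℝ => lloss (y * g)) f = sigm (-t) * y := by
  have hlin : HasDerivAt (fun g : ℝ => y * g) y f := by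
    simpa using (hasDerivAt_id f).const_mul y
  have hpos : HasDerivAt (fun g : ℝ => lloss (y * g)) (-sigm (-(y * f)) * y) f :=
    (hasDerivAt_lloss (y * f)).comp f hlin
  have hneg : HasDerivAt (fun g : ℝ => lloss (-(y * g))) (-sigm (- -(y * f)) * -y) f :=
    HasDerivAt.comp (h₂ := lloss) (h := fun g : ℝ => -(y * g)) f (hasDerivAt_lloss (-(y * f)))
      hlin.fun_neg
  rw [((hpos.const_mul (sigm t)).fun_add (hneg.const_mul (sigm (-t)))).deriv, hpos.deriv, neg_neg]
  linear_combination (-sigm (-(y * f)) * y) * sigm_add_sigm_neg t +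
    sigm (-t) * y * sigm_add_sigm_neg (y * f)

/-- Gradient approximation under a confident teacher. For a fixed
teacher logit `f_T` with margin `y f_T ≥ Γ ≥ 0`, the derivative in the student logit of
the adversarial distillation loss
`L_AD(f) = σ(y f_T) ℓ(y f) + σ(−y f_T) ℓ(−y f)` differs from that of the adversarial
training loss `L_AT(f) = ℓ(y f)` by exactly `σ(−y f_T) ≤ e^{−Γ}`; in particular, if
`Γ ≥ C d`, the difference is at most `e^{−C d}`. -/
theorem stmt16 (y fT Γ C d : ℝ) (hy : y = 1 ∨ y = -1) (hΓ : 0 ≤ Γ)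
    (hmargin : Γ ≤ y * fT) :
    (∀ f : ℝ,
      |deriv (fun g : ℝ => sigm (y * fT) * lloss (y * g) + sigm (-(y * fT)) * lloss (-(y * g))) f -
          deriv (fun g : ℝ => lloss (y * g)) f| = sigm (-(y * fT)) ∧
        sigm (-(y * fT)) ≤ Real.exp (-Γ)) ∧
      (C * d ≤ Γ → ∀ f : ℝ,
        |deriv (fun g : ℝ => sigm (y * fT) * lloss (y * g) + sigm (-(y * fT)) * lloss (-(y * g))) f -
            deriv (fun g : ℝ => lloss (y * g)) f| ≤ Real.exp (-(C * d))) := by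
  have habs (f : ℝ) :
      |deriv (fun g : ℝ => sigm (y * fT) * lloss (y * g) + sigm (-(y * fT)) * lloss (-(y * g))) f -
          deriv (fun g : ℝ => lloss (y * g)) f| = sigm (-(y * fT)) := by
    rw [deriv_distillation_sub_deriv_training, abs_mul, abs_of_pos (sigm_pos _)]
    rcases hy with rfl | rfl <;> simp
  have hle : sigm (-(y * fT)) ≤ Real.exp (-Γ) :=
    (sigm_le_exp _).trans (Real.exp_le_exp.2 (neg_le_neg hmargin))
  refine ⟨fun f => ⟨habs f, hle⟩, fun hCd f => ?_⟩
  rw [habs f]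
  exact hle.trans (Real.exp_le_exp.2 (neg_le_neg hCd))

end AD

end
end
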